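/- Let A = (A₁,…,Aₙ) be a reduced and irreducible tuple of finite subsets of ℤⁿ. If there is no group automorphism φ of ℤⁿ and no vectors v₁,…,vₙ ∈ ℤⁿ such that φ(Aᵢ) + vᵢ ⊆ {0, e₁, …, eₙ} for all i (where e₁,…,eₙ is the standard basis of ℤⁿ), then A is dual effective: the Zariski closure D_A of the set of systems f ∈ ℂ^A possessing a singular root has complex dimension dim_ℂ ℂ^A − 1. -/

import Mathlib

open Pointwise MeasureTheory

namespace Esterov

/-- The standard embedding of the lattice `ℤⁿ` into `ℝⁿ`. -/
def toR {n : ℕ} (a : Fin n → ℤ) : Fin n → ℝ := fun j => (a j : ℝ)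

/-- The lattice mixed volume of finite sets `A₁, …, Aₙ ⊆ ℤⁿ`:
`MV(A₁,…,Aₙ) = ∑_{∅ ≠ S ⊆ {1,…,n}} (−1)^{n−|S|} vol (conv (∑_{i ∈ S} Aᵢ))`. -/
noncomputable def MV {n : ℕ} (A : Fin n → Finset (Fin n → ℤ)) : ℝ :=
  ∑ S ∈ Finset.univ.powerset.filter (fun S : Finset (Fin n) => S.Nonempty),
    (-1 : ℝ) ^ (n - S.card) *
      (volume (convexHull ℝ (∑ i ∈ S, toR '' (A i : Set (Fin n → ℤ))))).toReal

/-- The complex torus `(ℂ∖0)ⁿ`. -/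
abbrev Torus (n : ℕ) := Fin n → ℂˣ

/-- The index type of the coefficients of a tuple of supports. -/
abbrev CIdx {n : ℕ} (A : Fin n → Finset (Fin n → ℤ)) := Σ i : Fin n, {a : Fin n → ℤ // a ∈ A i}

/-- The space `ℂ^A = ℂ^{A₁} ⊕ ⋯ ⊕ ℂ^{Aₙ}` of systems of Laurent polynomials supported at `A`,
encoded by their coefficients. -/
abbrev Coeff {n : ℕ} (A : Fin n → Finset (Fin n → ℤ)) := CIdx A → ℂ

/-- The value of the Laurent monomial `x^a` at a point `x` of the torus. -/
noncomputable def mono {n : ℕ} (a : Fin n → ℤ) (x : Torus n) : ℂ :=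
  ∏ j, ((x j : ℂ) ^ (a j))

/-- The value of the `i`-th polynomial of the system `c ∈ ℂ^A` at `x`. -/
noncomputable def evalAt {n : ℕ} (A : Fin n → Finset (Fin n → ℤ)) (c : Coeff A) (i : Fin n)
    (x : Torus n) : ℂ :=
  ∑ a ∈ (A i).attach, c ⟨i, a⟩ * mono a.1 x

/-- `x` is a common root of the system `c ∈ ℂ^A`. -/
def IsRoot {n : ℕ} (A : Fin n → Finset (Fin n → ℤ)) (c : Coeff A) (x : Torus n) : Prop :=
  ∀ i, evalAt A c i x = 0

/-- The Jacobian matrix `(∂fᵢ/∂xⱼ (x))` of the system `c ∈ ℂ^A` at `x`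
(note `∂(x^a)/∂xⱼ = aⱼ x^a / xⱼ`). -/
noncomputable def jacobian {n : ℕ} (A : Fin n → Finset (Fin n → ℤ)) (c : Coeff A)
    (x : Torus n) : Matrix (Fin n) (Fin n) ℂ :=
  Matrix.of fun i j => (∑ a ∈ (A i).attach, c ⟨i, a⟩ * (a.1 j : ℂ) * mono a.1 x) * (x j : ℂ)⁻¹

/-- `x` is a singular root of the system `c`: a common root at which the Jacobian matrix
is degenerate. -/
def IsSingularRoot {n : ℕ} (A : Fin n → Finset (Fin n → ℤ)) (c : Coeff A) (x : Torus n) :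
    Prop :=
  IsRoot A c x ∧ (jacobian A c x).det = 0

/-- A subset of `ℂ^ι` is algebraic if it is the common zero locus of a family of polynomials. -/
def IsAlgebraicSet {ι : Type*} (Z : Set (ι → ℂ)) : Prop :=
  ∃ S : Set (MvPolynomial ι ℂ), Z = {c | ∀ p ∈ S, MvPolynomial.eval c p = 0}

/-- The Zariski closure of a subset of `ℂ^ι`. -/
def zclosure {ι : Type*} (Z : Set (ι → ℂ)) : Set (ι → ℂ) :=
  ⋂₀ {W | IsAlgebraicSet W ∧ Z ⊆ W}

/-- The ideal of polynomials vanishing on a subset of `ℂ^ι`. -/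
noncomputable def vanishingIdeal {ι : Type*} (Z : Set (ι → ℂ)) : Ideal (MvPolynomial ι ℂ) where
  carrier := {p | ∀ c ∈ Z, MvPolynomial.eval c p = 0}
  add_mem' := by
    intro p q hp hq c hc
    simp [hp c hc, hq c hc]
  zero_mem' := by
    intro c hc
    simp
  smul_mem' := by
    intro p q hq c hc
    simp [smul_eq_mul, hq c hc]

/-- The (complex) dimension of a subset of `ℂ^ι`, as the Krull dimension of the coordinate
ring of its Zariski closure. -/
noncomputable def adim {ι : Type*} (Z : Set (ι → ℂ)) : WithBot ℕ∞ :=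
  ringKrullDim (MvPolynomial ι ℂ ⧸ vanishingIdeal Z)

/-- The discriminant `D_A`: the Zariski closure of the set of systems having a singular root. -/
noncomputable def discSet {n : ℕ} (A : Fin n → Finset (Fin n → ℤ)) : Set (Coeff A) :=
  zclosure {c | ∃ x, IsSingularRoot A c x}

/-- The tuple `A` is dual effective: `D_A` is a hypersurface, i.e. has complex dimension
`dim ℂ^A − 1`. -/
def DualEffective {n : ℕ} (A : Fin n → Finset (Fin n → ℤ)) : Prop :=
  adim (discSet A) = ((Fintype.card (CIdx A) - 1 : ℕ) : WithBot ℕ∞)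

/-- The finite set `s` can be translated into the subgroup `L` of `ℤⁿ`. -/
def TranslatesInto {n : ℕ} (s : Finset (Fin n → ℤ)) (L : Submodule ℤ (Fin n → ℤ)) : Prop :=
  ∃ v : Fin n → ℤ, ∀ a ∈ s, a - v ∈ L

/-- A tuple of finite sets in `ℤⁿ` is reduced if the sets cannot all be translated into one
common proper subgroup of `ℤⁿ`. -/
def IsReducedTuple {n : ℕ} (A : Fin n → Finset (Fin n → ℤ)) : Prop :=
  ¬ ∃ L : Submodule ℤ (Fin n → ℤ), L ≠ ⊤ ∧ ∀ i, TranslatesInto (A i) L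

/-- A tuple of `n` finite sets in `ℤⁿ` is irreducible if for no `m` with `0 < m < n` can some
`n − m` of the sets be translated into one common subgroup of rank at most `n − m`. -/
def IsIrreducibleTuple {n : ℕ} (A : Fin n → Finset (Fin n → ℤ)) : Prop :=
  ¬ ∃ (I : Finset (Fin n)) (L : Submodule ℤ (Fin n → ℤ)),
      0 < I.card ∧ I.card < n ∧ Module.finrank ℤ L ≤ I.card ∧
      ∀ i ∈ I, TranslatesInto (A i) L

/-- The incidence variety `E = {(x, f) : f(x) = 0} ⊆ (ℂ∖0)ⁿ × ℂ^A`. -/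
def incidence {n : ℕ} (A : Fin n → Finset (Fin n → ℤ)) : Set (Torus n × Coeff A) :=
  {p | IsRoot A p.2 p.1}

/-- The projection `π : E → ℂ^A`. -/
def proj {n : ℕ} (A : Fin n → Finset (Fin n → ℤ)) : incidence A → Coeff A :=
  fun p => p.1.2

/-- The set of roots of the system `c`. -/
def RootSet {n : ℕ} (A : Fin n → Finset (Fin n → ℤ)) (c : Coeff A) :=
  {x : Torus n // IsRoot A c x}

/-- `γ` is a loop in `ℂ^A ∖ B` based at `f`. -/
def IsLoop {n : ℕ} (A : Fin n → Finset (Fin n → ℤ)) (B : Set (Coeff A)) (f : Coeff A)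
    (γ : unitInterval → Coeff A) : Prop :=
  Continuous γ ∧ (∀ t, γ t ∉ B) ∧ γ 0 = f ∧ γ 1 = f

/-- The loop `γ` based at `f` induces the permutation `σ` of the root set of `f` by path
lifting: for every root `x` the lift of `γ` starting at `x` ends at `σ x`. -/
def Induces {n : ℕ} (A : Fin n → Finset (Fin n → ℤ)) (γ : unitInterval → Coeff A)
    (f : Coeff A) (σ : RootSet A f → RootSet A f) : Prop :=
  ∀ x : RootSet A f, ∃ δ : unitInterval → Torus n,
    Continuous δ ∧ δ 0 = x.1 ∧ (∀ t, IsRoot A (γ t) (δ t)) ∧ δ 1 = (σ x).1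

/-- The vertex set `{0, e₁, …, eₙ}` of the standard simplex in `ℤⁿ`. -/
def stdSimplexVertices (n : ℕ) : Set (Fin n → ℤ) :=
  insert 0 (Set.range fun j : Fin n => (Pi.single j 1 : Fin n → ℤ))

/-- The tuple `A` is linear up to a monomial change of variables: some automorphism of `ℤⁿ`
followed by translations takes each `Aᵢ` into `{0, e₁, …, eₙ}`. -/
def EssentiallyLinear {n : ℕ} (A : Fin n → Finset (Fin n → ℤ)) : Prop :=
  ∃ (φ : (Fin n → ℤ) ≃+ (Fin n → ℤ)) (v : Fin n → (Fin n → ℤ)),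
    ∀ i, ∀ a ∈ A i, φ a + v i ∈ stdSimplexVertices n

set_option linter.unusedSectionVars false
set_option linter.unusedVariables false

section PartP1
open Module
section LinAlg
variable {V : Type*} [AddCommGroup V] [Module ℂ V] {κ : Type*} [DecidableEq κ]

/-- Independence modulo a subspace. -/
def IM (E : Submodule ℂ V) (K : Finset κ) (x : κ → V) : Prop :=
  ∀ g : κ → ℂ, ∑ i ∈ K, g i • x i ∈ E → ∀ i ∈ K, g i = 0

theorem IM_empty (E : Submodule ℂ V) (x : κ → V) : IM E ∅ x := by
  intro g _ i hi; simp at hi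

theorem IM.mono_set {E : Submodule ℂ V} {K K' : Finset κ} {x : κ → V} (h : IM E K x)
    (hK : K' ⊆ K) : IM E K' x := by
  intro g hg i hi
  have := h (fun i => if i ∈ K' then g i else 0) (by
    simp only [ite_smul, zero_smul]
    rw [← Finset.sum_filter, Finset.filter_mem_eq_inter, Finset.inter_eq_right.mpr hK]
    exact hg) i (hK hi)
  simpa [hi] using this

theorem IM.mono_sub {E E' : Submodule ℂ V} {K : Finset κ} {x : κ → V} (h : IM E K x)
    (hE : E' ≤ E) : IM E' K x := fun g hg => h g (hE hg)

theorem IM.congr {E : Submodule ℂ V} {K : Finset κ} {x y : κ → V} (h : IM E K x)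
    (hxy : ∀ i ∈ K, y i = x i) : IM E K y := by
  intro g hg
  refine h g ?_
  convert hg using 1
  exact Finset.sum_congr rfl fun i hi => by rw [hxy i hi]

theorem IM_insert {E : Submodule ℂ V} {K : Finset κ} {x : κ → V} {k : κ} (hk : k ∉ K) :
    IM E (insert k K) x ↔ x k ∉ E ∧ IM (E ⊔ Submodule.span ℂ {x k}) K x := by
  constructor
  · intro h
    constructor
    · intro hx
      have := h (fun i => if i = k then 1 else 0) (by
        rw [Finset.sum_insert hk]
        rw [Finset.sum_eq_zero (s := K)]
        · simpa using hx
        · intro i hi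
          rw [if_neg (by rintro rfl; exact hk hi), zero_smul]) k (by simp)
      simp at this
    · intro g hg i hi
      rw [Submodule.mem_sup] at hg
      obtain ⟨y, hy, z, hz, hyz⟩ := hg
      obtain ⟨t, rfl⟩ := Submodule.mem_span_singleton.mp hz
      have := h (Function.update g k (-t)) (by
        rw [Finset.sum_insert hk, Function.update_self]
        have : ∑ i ∈ K, Function.update g k (-t) i • x i = ∑ i ∈ K, g i • x i :=
          Finset.sum_congr rfl fun i hi => by
            rw [Function.update_of_ne (by rintro rfl; exact hk hi)]
        rw [this, ← hyz]
        convert hy using 1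
        simp) i (by simp [hi])
      rwa [Function.update_of_ne (by rintro rfl; exact hk hi)] at this
  · rintro ⟨hx, h⟩ g hg i hi
    rw [Finset.sum_insert hk] at hg
    have h1 : ∀ i ∈ K, g i = 0 := by
      apply h g
      have : ∑ i ∈ K, g i • x i = (g k • x k + ∑ i ∈ K, g i • x i) + (-(g k)) • x k := by
        simp
      rw [this]
      exact Submodule.add_mem_sup hg (Submodule.mem_span_singleton.mpr ⟨_, rfl⟩)
    rw [Finset.sum_eq_zero (fun i hi => by rw [h1 i hi, zero_smul]), add_zero] at hg
    rcases Finset.mem_insert.mp hi with rfl | hi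
    · by_contra hne
      apply hx
      have := E.smul_mem (g i)⁻¹ hg
      rwa [smul_smul, inv_mul_cancel₀ hne, one_smul] at this
    · exact h1 i hi

theorem mem_span_image_finset {K : Finset κ} {x : κ → V} {y : V} :
    y ∈ Submodule.span ℂ (x '' (K : Set κ)) ↔ ∃ g : κ → ℂ, ∑ i ∈ K, g i • x i = y := by
  constructor
  · intro h
    rw [Submodule.mem_span_image_finset_iff_exists_fun] at h
    obtain ⟨c, hc⟩ := h
    refine ⟨fun i => if h : i ∈ K then c ⟨i, h⟩ else 0, ?_⟩
    rw [← hc, ← Finset.sum_coe_sort K]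
    exact Finset.sum_congr rfl fun i _ => by simp
  · rintro ⟨g, rfl⟩
    exact Submodule.sum_mem _ fun i hi => Submodule.smul_mem _ _
      (Submodule.subset_span ⟨i, hi, rfl⟩)

theorem IM_insert' {E : Submodule ℂ V} {K : Finset κ} {x : κ → V} {k : κ} (hk : k ∉ K) :
    IM E (insert k K) x ↔ IM E K x ∧ x k ∉ E ⊔ Submodule.span ℂ (x '' (K : Set κ)) := by
  constructor
  · intro h
    refine ⟨h.mono_set (Finset.subset_insert _ _), ?_⟩
    intro hx
    rw [Submodule.mem_sup] at hx
    obtain ⟨y, hy, z, hz, hyz⟩ := hx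
    obtain ⟨g, rfl⟩ := mem_span_image_finset.mp hz
    have := h (Function.update (-g) k 1) (by
        rw [Finset.sum_insert hk, Function.update_self]
        have : ∑ i ∈ K, Function.update (-g) k 1 i • x i = - ∑ i ∈ K, g i • x i := by
          rw [← Finset.sum_neg_distrib]
          exact Finset.sum_congr rfl fun i hi => by
            rw [Function.update_of_ne (by rintro rfl; exact hk hi)]; simp
        rw [this, ← hyz]
        convert hy using 1
        simp) k (by simp)
    simp at this
  · rintro ⟨h, hx⟩ g hg
    rw [Finset.sum_insert hk] at hg
    have hgk : g k = 0 := by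
      by_contra hne
      apply hx
      have : x k = (g k)⁻¹ • (g k • x k + ∑ i ∈ K, g i • x i) + 
          (-(g k)⁻¹) • ∑ i ∈ K, g i • x i := by
        rw [smul_add, smul_smul, inv_mul_cancel₀ hne]; simp
      rw [this]
      exact Submodule.add_mem_sup (E.smul_mem _ hg) (Submodule.smul_mem _ _
        (mem_span_image_finset.mpr ⟨g, rfl⟩))
    rw [hgk, zero_smul, zero_add] at hg
    intro i hi
    rcases Finset.mem_insert.mp hi with rfl | hi
    · exact hgk
    · exact h g hg i hi

variable [FiniteDimensional ℂ V]

theorem finrank_sup_span_singleton_of_notMem {E : Submodule ℂ V} {x : V} (hx : x ∉ E) :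
    finrank ℂ ↥(E ⊔ Submodule.span ℂ {x}) = finrank ℂ E + 1 := by
  have h := Submodule.finrank_sup_add_finrank_inf_eq E (Submodule.span ℂ {x})
  have h0 : x ≠ 0 := by rintro rfl; exact hx E.zero_mem
  have h1 : E ⊓ Submodule.span ℂ {x} = ⊥ := by
    rw [eq_bot_iff]
    rintro y ⟨hy, hy'⟩
    obtain ⟨t, rfl⟩ := Submodule.mem_span_singleton.mp hy'
    by_cases ht : t = 0
    · simp [ht]
    · exact absurd ((Submodule.smul_mem_iff E ht).mp hy) hx
  rw [h1, finrank_bot, finrank_span_singleton h0] at h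
  omega

theorem finrank_sup_span_singleton_le {E : Submodule ℂ V} {x : V} :
    finrank ℂ ↥(E ⊔ Submodule.span ℂ {x}) ≤ finrank ℂ E + 1 := by
  by_cases hx : x ∈ E
  · rw [sup_eq_left.mpr ((Submodule.span_singleton_le_iff_mem _ _).mpr hx)]; omega
  · exact (finrank_sup_span_singleton_of_notMem hx).le

theorem IM.finrank_eq {K : Finset κ} {x : κ → V} : ∀ {E : Submodule ℂ V}, IM E K x →
    finrank ℂ ↥(E ⊔ Submodule.span ℂ (x '' (K : Set κ))) = finrank ℂ E + K.card := by
  induction K using Finset.induction_on with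
  | empty => intro E _; rw [Finset.coe_empty, Set.image_empty, Submodule.span_empty, sup_bot_eq]; rfl
  | insert k K hk ih =>
    intro E h
    obtain ⟨h1, h2⟩ := (IM_insert hk).mp h
    rw [Finset.coe_insert, Set.image_insert_eq, Submodule.span_insert, ← sup_assoc, ih h2,
      finrank_sup_span_singleton_of_notMem h1, Finset.card_insert_of_notMem hk]
    omega

theorem finrank_sup_span_le {K : Finset κ} {x : κ → V} : ∀ {E : Submodule ℂ V}, 
    finrank ℂ ↥(E ⊔ Submodule.span ℂ (x '' (K : Set κ))) ≤ finrank ℂ E + K.card := by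
  induction K using Finset.induction_on with
  | empty => intro E; rw [Finset.coe_empty, Set.image_empty, Submodule.span_empty, sup_bot_eq]; rfl
  | insert k K hk ih =>
    intro E
    rw [Finset.coe_insert, Set.image_insert_eq, Submodule.span_insert, ← sup_assoc]
    refine ih.trans ?_
    rw [Finset.card_insert_of_notMem hk]
    have := finrank_sup_span_singleton_le (E := E) (x := x k)
    omega

theorem IM.of_finrank {K : Finset κ} {x : κ → V} : ∀ {E : Submodule ℂ V}, 
    finrank ℂ E + K.card ≤ finrank ℂ ↥(E ⊔ Submodule.span ℂ (x '' (K : Set κ))) → IM E K x := by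
  induction K using Finset.induction_on with
  | empty => intro E _; exact IM_empty _ _
  | insert k K hk ih =>
    intro E h
    rw [Finset.coe_insert, Set.image_insert_eq, Submodule.span_insert, ← sup_assoc,
      Finset.card_insert_of_notMem hk] at h
    have h3 := finrank_sup_span_le (K := K) (x := x) (E := E ⊔ Submodule.span ℂ {x k})
    have h4 := finrank_sup_span_singleton_le (E := E) (x := x k)
    rw [IM_insert hk]
    constructor
    · intro hx
      rw [sup_eq_left.mpr ((Submodule.span_singleton_le_iff_mem _ _).mpr hx)] at h3 h
      omega
    · apply ih; omega

theorem exists_mem_avoid (W : Submodule ℂ V) (S : Finset (Submodule ℂ V))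
    (h : ∀ P ∈ S, ¬ W ≤ P) : ∃ x ∈ W, ∀ P ∈ S, x ∉ P := by
  classical
  have := Subspace.biUnion_ne_univ_of_top_notMem (k := ℂ) (E := W)
    (s := S.image (fun P => P.comap W.subtype)) (by
      intro hmem
      rw [Finset.mem_image] at hmem
      obtain ⟨P, hP, hPt⟩ := hmem
      apply h P hP
      rwa [Submodule.comap_subtype_eq_top] at hPt)
  rw [Set.ne_univ_iff_exists_notMem] at this
  obtain ⟨x, hx⟩ := this
  refine ⟨x, x.2, fun P hP hxP => hx ?_⟩
  simp only [Set.mem_iUnion]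
  exact ⟨P.comap W.subtype, Finset.mem_image_of_mem _ hP, hxP⟩

/-- A Rado-type theorem for several contracted families simultaneously. -/
theorem MR {σ : Type*} (W : κ → Submodule ℂ V) (S : Finset σ) (K : Finset κ) :
    ∀ (L : σ → Finset κ) (E : σ → Submodule ℂ V), (∀ s ∈ S, L s ⊆ K) →
    (∀ s ∈ S, ∀ I ⊆ L s, finrank ℂ (E s) + I.card ≤ finrank ℂ ↥(E s ⊔ ⨆ i ∈ I, W i)) →
    ∃ x : κ → V, (∀ i, x i ∈ W i) ∧ ∀ s ∈ S, IM (E s) (L s) x := by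
  classical
  induction K using Finset.induction_on with
  | empty =>
    intro L E hL _
    refine ⟨0, fun i => (W i).zero_mem, fun s hs => ?_⟩
    rw [Finset.subset_empty.mp (hL s hs)]; exact IM_empty _ _
  | insert k K hk ih =>
    intro L E hL RC
    -- the family to avoid
    let F : Finset (Submodule ℂ V) := S.biUnion fun s => if k ∈ L s then
      ((((L s).erase k).powerset.filter fun I => 
        finrank ℂ ↥(E s ⊔ ⨆ i ∈ I, W i) = finrank ℂ (E s) + I.card).image 
          fun I => E s ⊔ ⨆ i ∈ I, W i) else ∅
    obtain ⟨y, hyW, hy⟩ := exists_mem_avoid (W k) F (by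
      intro P hP hle
      simp only [F, Finset.mem_biUnion] at hP
      obtain ⟨s, hs, hP⟩ := hP
      split_ifs at hP with hks
      · simp only [Finset.mem_image, Finset.mem_filter, Finset.mem_powerset] at hP
        obtain ⟨I, ⟨hI, hIt⟩, rfl⟩ := hP
        have hkI : k ∉ I := fun h => by simpa using hI h
        have := RC s hs (insert k I) (by
          intro i hi
          rcases Finset.mem_insert.mp hi with rfl | hi
          · exact hks
          · exact Finset.mem_of_mem_erase (hI hi))
        rw [Finset.card_insert_of_notMem hkI, Finset.iSup_insert, sup_left_comm,
          sup_eq_right.mpr hle] at this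
        omega
      · simp at hP)
    have hy' : ∀ s ∈ S, k ∈ L s → ∀ I ⊆ (L s).erase k, 
        finrank ℂ ↥(E s ⊔ ⨆ i ∈ I, W i) = finrank ℂ (E s) + I.card →
        y ∉ E s ⊔ ⨆ i ∈ I, W i := by
      intro s hs hks I hI hIt
      apply hy
      simp only [F, Finset.mem_biUnion]
      refine ⟨s, hs, ?_⟩
      rw [if_pos hks]
      simp only [Finset.mem_image, Finset.mem_filter, Finset.mem_powerset]
      exact ⟨I, ⟨hI, hIt⟩, rfl⟩
    obtain ⟨x, hx, hIM⟩ := ih (fun s => (L s).erase k) 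
      (fun s => if k ∈ L s then E s ⊔ Submodule.span ℂ {y} else E s) (by
        intro s hs i hi
        have := hL s hs (Finset.mem_of_mem_erase hi)
        rcases Finset.mem_insert.mp this with rfl | h
        · simp at hi
        · exact h) (by
        intro s hs I hI
        have hI' : I ⊆ L s := hI.trans (Finset.erase_subset _ _)
        have h0 := RC s hs I hI'
        by_cases hks : k ∈ L s
        · rw [if_pos hks]
          have h1 := finrank_sup_span_singleton_le (E := E s) (x := y)
          rw [sup_right_comm]
          by_cases ht : finrank ℂ ↥(E s ⊔ ⨆ i ∈ I, W i) = finrank ℂ (E s) + I.card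
          · rw [finrank_sup_span_singleton_of_notMem (hy' s hs hks I hI ht)]
            omega
          · have h2 : finrank ℂ ↥(E s ⊔ ⨆ i ∈ I, W i) ≤ 
              finrank ℂ ↥((E s ⊔ ⨆ i ∈ I, W i) ⊔ Submodule.span ℂ {y}) :=
              Submodule.finrank_mono le_sup_left
            omega
        · rw [if_neg hks]; exact h0)
    refine ⟨Function.update x k y, ?_, ?_⟩
    · intro i
      by_cases hi : i = k
      · subst hi; simpa using hyW
      · rw [Function.update_of_ne hi]; exact hx i
    · intro s hs
      have h := hIM s hs
      have h' : IM (if k ∈ L s then E s ⊔ Submodule.span ℂ {y} else E s) ((L s).erase k) 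
          (Function.update x k y) := 
        h.congr fun i hi => Function.update_of_ne (Finset.ne_of_mem_erase hi) _ _
      by_cases hks : k ∈ L s
      · rw [if_pos hks] at h'
        rw [← Finset.insert_erase hks, IM_insert (by simp)]
        rw [Function.update_self]
        refine ⟨?_, h'⟩
        have e0 : (E s ⊔ ⨆ i ∈ (∅ : Finset κ), W i) = E s := by simp
        have := hy' s hs hks ∅ (by simp) (by rw [e0]; simp)
        rwa [e0] at this
      · rw [if_neg hks, Finset.erase_eq_of_notMem hks] at h'
        exact h'

end LinAlg
end PartP1

section PartP2
open Module
section Rel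
variable {V : Type*} [AddCommGroup V] [Module ℂ V] {ι : Type*} [DecidableEq ι]

/-- The span of differences of a finite set. -/
def dU (s : Finset V) : Submodule ℂ V :=
  Submodule.span ℂ {x | ∃ a ∈ s, ∃ b ∈ s, x = a - b}

theorem sub_mem_dU {s : Finset V} {a b : V} (ha : a ∈ s) (hb : b ∈ s) : a - b ∈ dU s :=
  Submodule.subset_span ⟨a, ha, b, hb, rfl⟩

theorem dU_le {s : Finset V} {E : Submodule ℂ V} :
    dU s ≤ E ↔ ∀ a ∈ s, ∀ b ∈ s, a - b ∈ E := by
  rw [dU, Submodule.span_le]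
  constructor
  · intro h a ha b hb
    exact h ⟨a, ha, b, hb, rfl⟩
  · rintro h _ ⟨a, ha, b, hb, rfl⟩
    exact h a ha b hb

theorem dU_mono {s t : Finset V} (h : s ⊆ t) : dU s ≤ dU t :=
  dU_le.mpr fun _ ha _ hb => sub_mem_dU (h ha) (h hb)

theorem dU_rep_edge {s : Finset V} {a b : V} (ha : a ∈ s) (hb : b ∈ s) (f : V → ℂ) :
    ∃ c : V → ℂ, ∑ x ∈ s, c x = 0 ∧ ∑ x ∈ s, c x • x = a - b ∧
      ∑ x ∈ s, c x * f x = f a - f b := by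
  classical
  refine ⟨Pi.single a 1 - Pi.single b 1, ?_, ?_, ?_⟩
  · simp [Finset.sum_sub_distrib, Pi.single_apply, ha, hb]
  · simp [sub_smul, Finset.sum_sub_distrib, Pi.single_apply, ite_smul, ha, hb]
  · simp [sub_mul, Finset.sum_sub_distrib, Pi.single_apply, ite_mul, ha, hb]

theorem dU_rep {s : Finset V} {x : V} (hx : x ∈ dU s) :
    ∃ c : V → ℂ, ∑ a ∈ s, c a = 0 ∧ ∑ a ∈ s, c a • a = x := by
  induction hx using Submodule.span_induction with
  | mem x h =>
    obtain ⟨a, ha, b, hb, rfl⟩ := h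
    obtain ⟨c, h1, h2, _⟩ := dU_rep_edge ha hb 0
    exact ⟨c, h1, h2⟩
  | zero => exact ⟨0, by simp, by simp⟩
  | add x y _ _ hx hy =>
    obtain ⟨c, h1, h2⟩ := hx
    obtain ⟨d, h3, h4⟩ := hy
    refine ⟨c + d, ?_, ?_⟩
    · simp [Finset.sum_add_distrib, h1, h3]
    · simp [add_smul, Finset.sum_add_distrib, h2, h4]
  | smul t x _ hx =>
    obtain ⟨c, h1, h2⟩ := hx
    refine ⟨t • c, ?_, ?_⟩
    · simp [← Finset.mul_sum, h1]
    · simp [mul_smul, ← Finset.smul_sum, h2]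

/-- The span of the differences of the sets with index in `I`. -/
def Ut (A : ι → Finset V) (I : Finset ι) : Submodule ℂ V := ⨆ i ∈ I, dU (A i)

theorem Ut_empty (A : ι → Finset V) : Ut A ∅ = ⊥ := by simp [Ut]

theorem Ut_insert (A : ι → Finset V) (k : ι) (I : Finset ι) :
    Ut A (insert k I) = dU (A k) ⊔ Ut A I := by
  rw [Ut, Finset.iSup_insert, Ut]

theorem Ut_singleton (A : ι → Finset V) (k : ι) : Ut A {k} = dU (A k) := by simp [Ut]

theorem dU_le_Ut {A : ι → Finset V} {I : Finset ι} {i : ι} (hi : i ∈ I) : dU (A i) ≤ Ut A I :=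
  le_biSup (fun i => dU (A i)) hi

theorem Ut_le {A : ι → Finset V} {I : Finset ι} {E : Submodule ℂ V} :
    Ut A I ≤ E ↔ ∀ i ∈ I, dU (A i) ≤ E := by
  simp [Ut]

theorem Ut_mono {A : ι → Finset V} {I J : Finset ι} (h : I ⊆ J) : Ut A I ≤ Ut A J :=
  Ut_le.mpr fun i hi => dU_le_Ut (h hi)

/-- Irreducibility of the colours `T` modulo `E`. -/
def Irr (A : ι → Finset V) (T : Finset ι) (E : Submodule ℂ V) : Prop :=
  (∀ I ⊆ T, I.Nonempty → I ≠ T → finrank ℂ E + I.card + 1 ≤ finrank ℂ ↥(E ⊔ Ut A I)) ∧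
    E ⊔ Ut A T = ⊤ ∧ finrank ℂ E + T.card = finrank ℂ V

/-- Vanishing of the Hessian on all corank one degenerate systems. -/
def HRel (A : ι → Finset V) (T : Finset ι) (E : Submodule ℂ V) : Prop :=
  ∀ (c : ι → V → ℂ) (l : ι → ℂ) (v : Module.Dual ℂ V),
    (∀ i ∈ T, ∑ a ∈ A i, c i a = 0) →
    (∀ x ∈ E, v x = 0) →
    (∀ i ∈ T, v (∑ a ∈ A i, c i a • a) = 0) →
    (∑ i ∈ T, l i • ∑ a ∈ A i, c i a • a) ∈ E →
    (∀ v' : Module.Dual ℂ V, (∀ x ∈ E, v' x = 0) → 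
      (∀ i ∈ T, v' (∑ a ∈ A i, c i a • a) = 0) → ∃ s : ℂ, v' = s • v) →
    ∑ i ∈ T, l i * ∑ a ∈ A i, c i a * (v a) ^ 2 = 0

/-- The colours in `T` are (modulo `E`) subsets of the vertices of a simplex. -/
def Lin (A : ι → Finset V) (T : Finset ι) (E : Submodule ℂ V) : Prop :=
  ∃ (β : Type) (_ : Fintype β) (_ : DecidableEq β) (ρ : V →ₗ[ℂ] (β → ℂ)) (ℓ : ι → V → β),
    Fintype.card β = T.card + 1 ∧ LinearMap.ker ρ = E ∧
    ∀ i ∈ T, ∀ a ∈ A i, ∀ a' ∈ A i, ρ a - ρ a' = Pi.single (ℓ i a) 1 - Pi.single (ℓ i a') 1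

theorem Irr.rc [FiniteDimensional ℂ V] {A : ι → Finset V} {T : Finset ι} {E : Submodule ℂ V}
    (h : Irr A T E) {I : Finset ι} (hI : I ⊆ T) :
    finrank ℂ E + I.card ≤ finrank ℂ ↥(E ⊔ Ut A I) := by
  rcases I.eq_empty_or_nonempty with rfl | hne
  · simpa using Submodule.finrank_mono (le_sup_left : E ≤ E ⊔ Ut A ∅)
  by_cases hT : I = T
  · rw [hT, h.2.1, finrank_top, h.2.2]
  · have := h.1 I hI hne hT
    omega

theorem pair_lemma {s : Finset V} {P Q : Submodule ℂ V}
    (hP : ∃ a ∈ s, ∃ b ∈ s, a - b ∉ P) (hQ : ∃ a ∈ s, ∃ b ∈ s, a - b ∉ Q) :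
    ∃ a ∈ s, ∃ b ∈ s, a - b ∉ P ∧ a - b ∉ Q := by
  obtain ⟨a, ha, b, hb, hab⟩ := hP
  obtain ⟨a', ha', b', hb', hab'⟩ := hQ
  by_contra hcon
  push Not at hcon
  have h1 := hcon a ha b hb hab
  -- choose a suitable endpoint
  obtain ⟨d, hd, hda⟩ : ∃ d ∈ s, d - a ∉ Q := by
    by_contra hc
    push Not at hc
    apply hab'
    have := Q.sub_mem (hc a' ha') (hc b' hb')
    simpa using this
  have hdb : d - b ∉ Q := by
    intro h
    apply hda
    have := Q.sub_mem h h1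
    simpa using this
  have h2 : d - a ∈ P := by
    by_contra hc
    exact hda (hcon d hd a ha hc)
  have h3 : d - b ∈ P := by
    by_contra hc
    exact hdb (hcon d hd b hb hc)
  apply hab
  have := P.sub_mem h3 h2
  simpa using this

theorem exists_edge_notMem {s : Finset V} {x : V} {P : Submodule ℂ V} (hx : x ∈ dU s)
    (hP : x ∉ P) : ∃ a ∈ s, ∃ b ∈ s, a - b ∉ P := by
  by_contra hc
  push Not at hc
  exact hP (dU_le.mpr hc hx)

theorem double_edge (A : ι → Finset V) (K : Finset ι) :
    ∀ (E1 E2 : Submodule ℂ V) (x x' : ι → V), (∀ i ∈ K, x i ∈ dU (A i)) →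
      (∀ i ∈ K, x' i ∈ dU (A i)) → IM E1 K x → IM E2 K x' →
      ∃ y : ι → V, (∀ i ∈ K, ∃ a ∈ A i, ∃ b ∈ A i, y i = a - b) ∧ IM E1 K y ∧ IM E2 K y := by
  induction K using Finset.induction_on with
  | empty => 
    intro E1 E2 x x' _ _ _ _
    exact ⟨0, by simp, IM_empty _ _, IM_empty _ _⟩
  | insert k K hk ih =>
    intro E1 E2 x x' hx hx' h h'
    obtain ⟨h1, h2⟩ := (IM_insert' hk).mp h
    obtain ⟨h1', h2'⟩ := (IM_insert' hk).mp h'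
    obtain ⟨a, ha, b, hb, hab, hab'⟩ := pair_lemma
      (exists_edge_notMem (hx k (by simp)) h2) (exists_edge_notMem (hx' k (by simp)) h2')
    have key : ∀ (E : Submodule ℂ V) (x : ι → V), IM E K x →
        a - b ∉ E ⊔ Submodule.span ℂ (x '' (K : Set ι)) →
        IM (E ⊔ Submodule.span ℂ {a - b}) K x := by
      intro E x hI hn
      have hne : ∀ i ∈ K, i ≠ k := fun i hi h => hk (h ▸ hi)
      have hupd : ∀ i ∈ K, Function.update x k (a - b) i = x i := fun i hi =>
        Function.update_of_ne (hne i hi) _ _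
      have : IM E (insert k K) (Function.update x k (a - b)) := by
        rw [IM_insert' hk]
        refine ⟨hI.congr hupd, ?_⟩
        rw [Function.update_self, Set.image_congr hupd]
        exact hn
      have := ((IM_insert hk).mp this).2
      rw [Function.update_self] at this
      exact this.congr fun i hi => (hupd i hi).symm
    obtain ⟨y, hy, hy1, hy2⟩ := ih (E1 ⊔ Submodule.span ℂ {a - b}) (E2 ⊔ Submodule.span ℂ {a - b})
      x x' (fun i hi => hx i (by simp [hi])) (fun i hi => hx' i (by simp [hi]))
      (key E1 x h1 hab) (key E2 x' h1' hab')
    have hupd : ∀ i ∈ K, Function.update y k (a - b) i = y i := fun i hi =>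
        Function.update_of_ne (by rintro rfl; exact hk hi) _ _
    refine ⟨Function.update y k (a - b), ?_, ?_, ?_⟩
    · intro i hi
      rcases Finset.mem_insert.mp hi with rfl | hi
      · exact ⟨a, ha, b, hb, by simp⟩
      · rw [hupd i hi]; exact hy i hi
    · rw [IM_insert hk, Function.update_self]
      exact ⟨fun h => hab (Submodule.mem_sup_left h), hy1.congr hupd⟩
    · rw [IM_insert hk, Function.update_self]
      exact ⟨fun h => hab' (Submodule.mem_sup_left h), hy2.congr hupd⟩

theorem HRel_of [Fintype ι] {A : ι → Finset V} (hH : HRel A Finset.univ ⊥) (J : Finset ι)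
    (e : ι → V) (he : ∀ i, i ∉ J → ∃ a ∈ A i, ∃ b ∈ A i, e i = a - b) :
    HRel A J (Submodule.span ℂ (e '' ((Jᶜ : Finset ι) : Set ι))) := by
  intro c l v h1 h2 h3 h4 h5
  have hedge : ∀ i, i ∉ J → ∃ d : V → ℂ, ∑ x ∈ A i, d x = 0 ∧ ∑ x ∈ A i, d x • x = e i ∧
      ∑ x ∈ A i, d x * (v x) ^ 2 = 0 := by
    intro i hi
    obtain ⟨a, ha, b, hb, hab⟩ := he i hi
    obtain ⟨d, hd1, hd2, hd3⟩ := dU_rep_edge ha hb (fun x => (v x) ^ 2)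
    refine ⟨d, hd1, by rw [hd2, hab], ?_⟩
    rw [hd3]
    have : v (e i) = 0 := h2 _ (Submodule.subset_span ⟨i, by simpa using hi, rfl⟩)
    rw [hab, map_sub, sub_eq_zero] at this
    simp [this]
  choose! d hd1 hd2 hd3 using hedge
  obtain ⟨g, hg⟩ := mem_span_image_finset.mp h4
  have := hH (fun i => if i ∈ J then c i else d i) (fun i => if i ∈ J then l i else - g i) v ?_ ?_ ?_ ?_ ?_
  · rw [← Finset.sum_add_sum_compl J] at this
    rw [Finset.sum_eq_zero (s := Jᶜ)] at this
    · rw [add_zero] at this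
      rw [← this]
      refine Finset.sum_congr rfl fun i hi => ?_
      simp [hi]
    · intro i hi
      have hi' : i ∉ J := by simpa using hi
      simp [hi', hd3 i hi']
  · intro i _
    by_cases hi : i ∈ J
    · simpa [hi] using h1 i hi
    · simpa [hi] using hd1 i hi
  · intro x hx
    rw [(Submodule.mem_bot ℂ).mp hx, map_zero]
  · intro i _
    by_cases hi : i ∈ J
    · simpa only [if_pos hi] using h3 i hi
    · simp only [if_neg hi]
      rw [hd2 i hi]
      exact h2 _ (Submodule.subset_span ⟨i, by simpa using hi, rfl⟩)
  · rw [Submodule.mem_bot, ← Finset.sum_add_sum_compl J]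
    have e1 : ∑ i ∈ J, (if i ∈ J then l i else - g i) • ∑ a ∈ A i, (if i ∈ J then c i else d i) a • a
        = ∑ i ∈ J, l i • ∑ a ∈ A i, c i a • a :=
      Finset.sum_congr rfl fun i hi => by simp only [if_pos hi]
    have e2 : ∑ i ∈ Jᶜ, (if i ∈ J then l i else - g i) • ∑ a ∈ A i, (if i ∈ J then c i else d i) a • a
        = - ∑ i ∈ Jᶜ, g i • e i := by
      rw [← Finset.sum_neg_distrib]
      refine Finset.sum_congr rfl fun i hi => ?_
      have hi' : i ∉ J := by simpa using hi
      simp only [if_neg hi', hd2 i hi', neg_smul]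
    rw [e1, e2, hg, add_neg_cancel]
  · intro v' _ hv'
    apply h5 v'
    · intro x hx
      have hle : Submodule.span ℂ (e '' ((Jᶜ : Finset ι) : Set ι)) ≤ LinearMap.ker v' := by
        rw [Submodule.span_le]
        rintro _ ⟨i, hi, rfl⟩
        have hi' : i ∉ J := by simpa using hi
        have := hv' i (Finset.mem_univ _)
        simp only [if_neg hi', hd2 i hi'] at this
        exact this
      exact hle hx
    · intro i hi
      have := hv' i (Finset.mem_univ _)
      simpa only [if_pos hi] using this

theorem ann_unique [FiniteDimensional ℂ V] {F : Submodule ℂ V} 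
    (hF : finrank ℂ V ≤ finrank ℂ F + 1) {v v' : Module.Dual ℂ V} (hv0 : v ≠ 0)
    (hv : ∀ x ∈ F, v x = 0) (hv' : ∀ x ∈ F, v' x = 0) : ∃ s : ℂ, v' = s • v := by
  obtain ⟨z, hz⟩ : ∃ z, v z ≠ 0 := by
    by_contra h
    push Not at h
    exact hv0 (LinearMap.ext h)
  have hzF : z ∉ F := fun h => hz (hv z h)
  have h1 := finrank_sup_span_singleton_of_notMem hzF
  have h2 : F ⊔ Submodule.span ℂ {z} = ⊤ := by
    apply Submodule.eq_top_of_finrank_eq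
    have := Submodule.finrank_le (F ⊔ Submodule.span ℂ {z})
    omega
  refine ⟨v' z / v z, LinearMap.ext fun y => ?_⟩
  have : y ∈ F ⊔ Submodule.span ℂ {z} := by rw [h2]; trivial
  obtain ⟨a, ha, b, hb, rfl⟩ := Submodule.mem_sup.mp this
  obtain ⟨t, rfl⟩ := Submodule.mem_span_singleton.mp hb
  simp [hv a ha, hv' a ha]
  field_simp

end Rel
end PartP2

section PartP3
open Module
section Growth
variable {V : Type*} [AddCommGroup V] [Module ℂ V] [FiniteDimensional ℂ V]
  {ι : Type*} [DecidableEq ι]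

theorem exists_dual_one {F : Submodule ℂ V} {z : V} (hz : z ∉ F) :
    ∃ v : Module.Dual ℂ V, (∀ x ∈ F, v x = 0) ∧ v z = 1 := by
  obtain ⟨f, hf, hfz⟩ := Submodule.exists_dual_map_eq_bot_of_notMem hz inferInstance
  refine ⟨(f z)⁻¹ • f, ?_, ?_⟩
  · intro x hx
    have : f x ∈ F.map f := ⟨x, hx, rfl⟩
    rw [hfz] at this
    simp [(Submodule.mem_bot ℂ).mp this]
  · simp [hf]

theorem IM.union_right {E : Submodule ℂ V} {K K' : Finset ι} {x : ι → V} (hd : Disjoint K K')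
    (h : IM E (K ∪ K') x) : IM (E ⊔ Submodule.span ℂ (x '' (K : Set ι))) K' x := by
  apply IM.of_finrank
  rw [(h.mono_set Finset.subset_union_left).finrank_eq, sup_assoc, ← Submodule.span_union,
    ← Set.image_union, ← Finset.coe_union, h.finrank_eq, Finset.card_union_of_disjoint hd]
  omega

theorem IM.union {E : Submodule ℂ V} {K K' : Finset ι} {x : ι → V} (hd : Disjoint K K')
    (h1 : IM E K x) (h : IM (E ⊔ Submodule.span ℂ (x '' (K : Set ι))) K' x) :
    IM E (K ∪ K') x := by
  apply IM.of_finrank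
  rw [Finset.coe_union, Set.image_union, Submodule.span_union, ← sup_assoc, h.finrank_eq, 
    h1.finrank_eq, Finset.card_union_of_disjoint hd]
  omega

theorem dU_rep3 {s : Finset V} {a b d : V} (ha : a ∈ s) (hb : b ∈ s) (hd : d ∈ s) (x y z : ℂ) :
    ∃ c : V → ℂ, (∀ f : V → ℂ, ∑ w ∈ s, c w * f w = x * f a + y * f b + z * f d) ∧
      ∑ w ∈ s, c w • w = x • a + y • b + z • d := by
  classical
  refine ⟨Pi.single a x + Pi.single b y + Pi.single d z, ?_, ?_⟩
  · intro f
    simp [add_mul, Finset.sum_add_distrib, Pi.single_apply, ite_mul, ha, hb, hd]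
  · simp [add_smul, Finset.sum_add_distrib, Pi.single_apply, ite_smul, ha, hb, hd]

theorem edge_rado {A : ι → Finset V} {T : Finset ι} {E : Submodule ℂ V} (h : Irr A T E) :
    ∃ e : ι → V, (∀ i ∈ T, ∃ a ∈ A i, ∃ b ∈ A i, e i = a - b) ∧ IM E T e := by
  obtain ⟨x, hx, hI⟩ := MR (fun i => dU (A i)) {()} T (fun _ => T) (fun _ => E) (by simp) 
    (by intro _ _ I hI; exact h.rc hI)
  have hI := hI () (by simp)
  obtain ⟨y, h1, h2, _⟩ := double_edge A T E E x x (fun i _ => hx i) (fun i _ => hx i) hI hI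
  exact ⟨y, h1, h2⟩

theorem base_step [Fintype ι] {A : ι → Finset V} (hirr : Irr A Finset.univ ⊥)
    (hH : HRel A Finset.univ ⊥) (j : ι) :
    ∃ e : ι → V, (∀ i, i ∉ ({j} : Finset ι) → ∃ a ∈ A i, ∃ b ∈ A i, e i = a - b) ∧
      IM (⊥ : Submodule ℂ V) ({j} : Finset ι)ᶜ e ∧
      Irr A {j} (Submodule.span ℂ (e '' ((({j} : Finset ι)ᶜ : Finset ι) : Set ι))) ∧
      Lin A {j} (Submodule.span ℂ (e '' ((({j} : Finset ι)ᶜ : Finset ι) : Set ι))) := by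
  obtain ⟨e, he, hI⟩ := edge_rado hirr
  set E := Submodule.span ℂ (e '' ((({j} : Finset ι)ᶜ : Finset ι) : Set ι)) with hE
  have hun : insert j (({j} : Finset ι)ᶜ) = Finset.univ := by
    ext i; by_cases h : i = j <;> simp [h]
  have hjn : j ∉ (({j} : Finset ι)ᶜ : Finset ι) := by simp
  rw [← hun, IM_insert' hjn, bot_sup_eq] at hI
  obtain ⟨hI1, hj⟩ := hI
  have hfr := hI1.finrank_eq
  rw [bot_sup_eq, finrank_bot, ← hE] at hfr
  have hn := hirr.2.2
  rw [finrank_bot, ← hun, Finset.card_insert_of_notMem hjn] at hn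
  obtain ⟨p, hp, q, hq, hpq⟩ := he j (by simp)
  refine ⟨e, fun i _ => he i (by simp), hI1, ?_⟩
  rw [← hE]
  refine ⟨⟨?_, ?_, ?_⟩, ?_⟩
  · intro I hI hne hne'
    rcases Finset.subset_singleton_iff.mp hI with rfl | rfl
    · simp at hne
    · exact absurd rfl hne'
  · have h1 := finrank_sup_span_singleton_of_notMem hj
    rw [← hE] at h1
    apply Submodule.eq_top_of_finrank_eq
    apply le_antisymm (Submodule.finrank_le _)
    have h2 : E ⊔ Submodule.span ℂ {e j} ≤ E ⊔ Ut A {j} := by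
      apply sup_le_sup_left
      rw [Submodule.span_singleton_le_iff_mem, Ut_singleton, hpq]
      exact sub_mem_dU hp hq
    have h3 := Submodule.finrank_mono h2
    omega
  · simp; omega
  · have hH' := HRel_of hH {j} e (fun i _ => he i (by simp))
    rw [← hE] at hH'
    obtain ⟨v, hv, hvj⟩ := exists_dual_one hj
    rw [← hE] at hv
    have hv0 : v ≠ 0 := by rintro rfl; simp at hvj
    have hker : LinearMap.ker v = E := by
      symm
      apply Submodule.eq_of_le_of_finrank_le (fun x hx => hv x hx)
      have h1 := LinearMap.finrank_range_add_finrank_ker v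
      have h2 : 1 ≤ finrank ℂ (LinearMap.range v) := by
        rw [Submodule.one_le_finrank_iff]
        rwa [Ne, LinearMap.range_eq_bot]
      omega
    have htri : ∀ a ∈ A j, v a = v p ∨ v a = v q := by
      intro a ha
      obtain ⟨c, hc1, hc2⟩ := dU_rep3 ha hp hq (v p - v q) (v q - v a) (v a - v p)
      have hvr : v (∑ a ∈ A j, c a • a) = 0 := by
        rw [hc2]; simp; ring
      have := hH' (fun _ => c) (fun _ => 1) v ?_ hv ?_ ?_ ?_
      · simp only [Finset.sum_singleton, one_mul, hc1] at this
        have h2 : (v p - v q) * (v a - v p) * (v a - v q) = 0 := by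
          linear_combination this
        rw [hpq, map_sub] at hvj
        rw [hvj, one_mul, mul_eq_zero, sub_eq_zero, sub_eq_zero] at h2
        exact h2
      · intro i hi
        rw [Finset.mem_singleton.mp hi]
        have := hc1 1
        simp at this
        exact this
      · intro i hi
        rw [Finset.mem_singleton.mp hi]; exact hvr
      · simp only [Finset.sum_singleton, one_smul]
        rw [← hker]; exact hvr
      · intro v' hv' _
        exact ann_unique (F := E) (by omega) hv0 hv hv'
    rw [hpq, map_sub] at hvj
    have hq' : v q = v p - 1 := by rw [← hvj]; ring
    refine ⟨Bool, inferInstance, inferInstance, LinearMap.pi (fun b => if b then v else -v),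
      fun i a => by classical exact decide (v a = v p), by simp, ?_, ?_⟩
    · rw [← hker]
      ext x
      simp only [LinearMap.mem_ker]
      constructor
      · intro h
        have := congrFun h true
        simpa using this
      · intro h
        ext b
        cases b <;> simp [h]
    · intro i hi a ha a' ha'
      rw [Finset.mem_singleton.mp hi] at ha ha'
      ext b
      have hne : ¬ (v p - 1 = v p) := by
        intro h; 
        have : (1:ℂ) = 0 := by linear_combination - h
        exact one_ne_zero this
      cases b <;> rcases htri a ha with h1 | h1 <;> rcases htri a' ha' with h2 | h2 <;>
        simp [h1, h2, hq', hne] <;> ring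

theorem growth [Fintype ι] {A : ι → Finset V} (hirr : Irr A Finset.univ ⊥) (J : Finset ι)
    (hJ : J.Nonempty) (hJ' : J ≠ Finset.univ) (e : ι → V)
    (he : ∀ i, i ∉ J → ∃ a ∈ A i, ∃ b ∈ A i, e i = a - b)
    (hI : IM (⊥ : Submodule ℂ V) Jᶜ e)
    (hIrr : Irr A J (Submodule.span ℂ (e '' ((Jᶜ : Finset ι) : Set ι)))) :
    ∃ l, l ∉ J ∧ ∃ e' : ι → V, (∀ i, i ∉ J → ∃ a ∈ A i, ∃ b ∈ A i, e' i = a - b) ∧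
      IM (⊥ : Submodule ℂ V) Jᶜ e' ∧
      Submodule.span ℂ (e '' ((Jᶜ : Finset ι) : Set ι)) = 
        Submodule.span ℂ (Set.image e' (((insert l J)ᶜ : Finset ι) : Set ι)) ⊔ Submodule.span ℂ {e' l} ∧
      e' l ∉ Submodule.span ℂ (Set.image e' (((insert l J)ᶜ : Finset ι) : Set ι)) ∧
      Irr A (insert l J) (Submodule.span ℂ (Set.image e' (((insert l J)ᶜ : Finset ι) : Set ι))) := by
  classical
  set EJ := Submodule.span ℂ (e '' ((Jᶜ : Finset ι) : Set ι)) with hEJ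
  have hUJ := hirr.1 J (Finset.subset_univ _) hJ hJ'
  rw [finrank_bot, bot_sup_eq] at hUJ
  have hfr := hIrr.2.2
  -- the vector f
  obtain ⟨f, hf, hf0⟩ : ∃ f ∈ EJ ⊓ Ut A J, f ≠ 0 := by
    have h1 := Submodule.finrank_sup_add_finrank_inf_eq EJ (Ut A J)
    rw [hIrr.2.1, finrank_top] at h1
    have h2 : EJ ⊓ Ut A J ≠ ⊥ := by
      intro h
      rw [h, finrank_bot] at h1
      omega
    obtain ⟨f, hf, h⟩ := Submodule.exists_mem_ne_zero_of_ne_bot h2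
    exact ⟨f, hf, h⟩
  set L1 := Jᶜ.filter (fun l => dU (A l) ≤ EJ) with hL1
  set L2 := Jᶜ.filter (fun l => ¬ dU (A l) ≤ EJ) with hL2
  have hL12 : L2 ∪ L1 = Jᶜ := by
    rw [Finset.union_comm]; exact Finset.filter_union_filter_not_eq _ _
  have hd : Disjoint L2 L1 := (Finset.disjoint_filter_filter_not _ _ _).symm
  have hL1J : ∀ i ∈ L1, i ∉ J := fun i hi => by simpa using (Finset.mem_filter.mp hi).1
  have hL2J : ∀ i ∈ L2, i ∉ J := fun i hi => by simpa using (Finset.mem_filter.mp hi).1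
  -- transversal of L1 modulo f
  obtain ⟨x, hx, hxI⟩ := MR (fun i => dU (A i)) {()} L1 (fun _ => L1) 
    (fun _ => Submodule.span ℂ {f}) (by simp) (by
      intro _ _ I hI
      rw [finrank_span_singleton hf0]
      rcases I.eq_empty_or_nonempty with rfl | hne
      · have := Submodule.finrank_mono (le_sup_left : Submodule.span ℂ {f} ≤ 
          Submodule.span ℂ {f} ⊔ ⨆ i ∈ (∅ : Finset ι), dU (A i))
        rw [finrank_span_singleton hf0] at this
        simpa using this
      · have h1 := hirr.1 I (Finset.subset_univ _) hne (by
          rintro rfl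
          obtain ⟨j, hj⟩ := hJ
          exact hL1J j (hI (by simp)) hj)
        rw [finrank_bot, bot_sup_eq] at h1
        have h2 : Ut A I ≤ Submodule.span ℂ {f} ⊔ ⨆ i ∈ I, dU (A i) := le_sup_right
        have := Submodule.finrank_mono h2
        omega)
  have hxI := hxI () (by simp)
  have heI : IM (Submodule.span ℂ (e '' (L2 : Set ι))) L1 e := by
    rw [← hL12] at hI
    have := hI.union_right hd
    rwa [bot_sup_eq] at this
  obtain ⟨u, hu, hu1, hu2⟩ := double_edge A L1 _ _ e x (by
      intro i hi
      obtain ⟨a, ha, b, hb, hab⟩ := he i (hL1J i hi)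
      rw [hab]; exact sub_mem_dU ha hb) (fun i _ => hx i) heI hxI
  set e' : ι → V := fun i => if i ∈ L1 then u i else e i with he'
  have he'1 : ∀ i ∈ L1, e' i = u i := fun i hi => by simp only [he', if_pos hi]
  have he'2 : ∀ i ∈ L2, e' i = e i := fun i hi => by
    simp only [he']; rw [if_neg (Finset.disjoint_left.mp hd hi)]
  have hedge : ∀ i, i ∉ J → ∃ a ∈ A i, ∃ b ∈ A i, e' i = a - b := by
    intro i hi
    by_cases h : i ∈ L1
    · rw [he'1 i h]; exact hu i h
    · simp only [he', if_neg h]; exact he i hi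
  have hI' : IM (⊥ : Submodule ℂ V) Jᶜ e' := by
    rw [← hL12]
    have h2 : IM (⊥ : Submodule ℂ V) L2 e' := 
      (hI.mono_set (by rw [← hL12]; exact Finset.subset_union_left)).congr he'2
    refine h2.union hd ?_
    rw [bot_sup_eq, Set.image_congr he'2]
    exact hu1.congr he'1
  have hspan : Submodule.span ℂ (Set.image e' ((Jᶜ : Finset ι) : Set ι)) = EJ := by
    apply Submodule.eq_of_le_of_finrank_le
    · rw [Submodule.span_le]
      rintro _ ⟨i, hi, rfl⟩
      rw [← hL12] at hi
      rcases Finset.mem_union.mp (Finset.mem_coe.mp hi) with h | h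
      · rw [he'2 i h]
        refine Submodule.subset_span ⟨i, ?_, rfl⟩
        simpa using hL2J i h
      · obtain ⟨a, ha, b, hb, hab⟩ := hedge i (hL1J i h)
        rw [hab]
        exact (Finset.mem_filter.mp h).2 (sub_mem_dU ha hb)
    · have h1 := hI'.finrank_eq
      have h2 := hI.finrank_eq
      rw [bot_sup_eq] at h1 h2
      rw [h1, hEJ, h2]
  -- the pivot
  have hfE : f ∈ Submodule.span ℂ (Set.image e' ((Jᶜ : Finset ι) : Set ι)) := by
    rw [hspan]; exact hf.1
  obtain ⟨g, hg⟩ := mem_span_image_finset.mp hfE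
  obtain ⟨l, hl, hgl⟩ : ∃ l ∈ L2, g l ≠ 0 := by
    by_contra hc
    push Not at hc
    rw [← hL12, Finset.sum_union hd, Finset.sum_eq_zero (s := L2) 
      (fun i hi => by rw [hc i hi, zero_smul]), zero_add] at hg
    have h1 : ∀ i ∈ L1, g i = 0 := by
      apply (hu2.congr he'1) g
      rw [hg]; exact Submodule.mem_span_singleton_self f
    rw [Finset.sum_eq_zero (fun i hi => by rw [h1 i hi, zero_smul])] at hg
    exact hf0 hg.symm
  have hlJ := hL2J l hl
  have hlc : l ∈ Jᶜ := by simpa using hlJ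
  have hcompl : (insert l J)ᶜ = Jᶜ.erase l := by
    ext i; simp
  have hins : insert l (Jᶜ.erase l) = Jᶜ := Finset.insert_erase hlc
  set Es := Submodule.span ℂ (Set.image e' (((insert l J)ᶜ : Finset ι) : Set ι)) with hEs
  have hsum : EJ = Es ⊔ Submodule.span ℂ {e' l} := by
    rw [← hspan, hEs, hcompl, sup_comm, ← Submodule.span_insert, ← Set.image_insert_eq,
      ← Finset.coe_insert, hins]
  have hnot : e' l ∉ Es := by
    have h := hI'
    rw [← hins, IM_insert' (by simp), bot_sup_eq] at h
    rw [hEs, hcompl]; exact h.2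
  have hfrE : finrank ℂ EJ = finrank ℂ Es + 1 := by
    rw [hsum]; exact finrank_sup_span_singleton_of_notMem hnot
  have hsumf : EJ ≤ Es ⊔ Submodule.span ℂ {f} := by
    rw [hsum]
    refine sup_le le_sup_left ?_
    rw [Submodule.span_singleton_le_iff_mem]
    rw [← hins, Finset.sum_insert (by simp)] at hg
    have : e' l = (-(g l)⁻¹) • (∑ i ∈ Jᶜ.erase l, g i • e' i) + (g l)⁻¹ • f := by
      rw [← hg, smul_add, smul_smul, inv_mul_cancel₀ hgl]; simp
    rw [this]
    apply Submodule.add_mem_sup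
    · apply Submodule.smul_mem
      rw [hEs, hcompl]
      exact mem_span_image_finset.mpr ⟨g, rfl⟩
    · exact Submodule.smul_mem _ _ (Submodule.mem_span_singleton_self f)
  have htot : ∀ I, J ⊆ I → Es ⊔ Ut A I = ⊤ := by
    intro I hJI
    rw [eq_top_iff, ← hIrr.2.1]
    refine sup_le (hsumf.trans (sup_le_sup_left ?_ _)) ((Ut_mono hJI).trans le_sup_right)
    rw [Submodule.span_singleton_le_iff_mem]
    exact Ut_mono hJI hf.2
  have hel : e' l ∈ dU (A l) := by
    obtain ⟨a, ha, b, hb, hab⟩ := hedge l hlJ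
    rw [hab]; exact sub_mem_dU ha hb
  refine ⟨l, hlJ, e', hedge, hI', hsum, hnot, ?_⟩
  rw [← hEs]
  refine ⟨?_, htot _ (Finset.subset_insert _ _), ?_⟩
  · intro I hIs hne hneq
    by_cases hlI : l ∈ I
    · obtain ⟨I0, hI0, rfl⟩ : ∃ I0, l ∉ I0 ∧ insert l I0 = I := ⟨I.erase l, by simp, Finset.insert_erase hlI⟩
      have hI0J : I0 ⊆ J := by
        intro i hi
        rcases Finset.mem_insert.mp (hIs (Finset.mem_insert_of_mem hi)) with rfl | h
        · exact absurd hi hI0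
        · exact h
      have hI0ne : I0 ≠ J := by rintro rfl; exact hneq rfl
      rw [Finset.card_insert_of_notMem hI0, Ut_insert, ← sup_assoc]
      have hle : EJ ≤ Es ⊔ dU (A l) := by
        rw [hsum]; apply sup_le_sup_left
        rwa [Submodule.span_singleton_le_iff_mem]
      rcases I0.eq_empty_or_nonempty with rfl | hI0n
      · rw [Ut_empty, sup_bot_eq]
        have hlt : EJ < Es ⊔ dU (A l) := by
          refine lt_of_le_of_ne hle ?_
          intro h
          apply (Finset.mem_filter.mp hl).2
          rw [h]; exact le_sup_right
        have := Submodule.finrank_lt_finrank_of_lt hlt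
        simp only [Finset.card_empty]
        omega
      · have h1 := hIrr.1 I0 hI0J hI0n hI0ne
        have h2 := Submodule.finrank_mono (sup_le_sup_right hle (Ut A I0))
        omega
    · have hIJ : I ⊆ J := by
        intro i hi
        rcases Finset.mem_insert.mp (hIs hi) with rfl | h
        · exact absurd hi hlI
        · exact h
      by_cases hIJe : I = J
      · rw [htot I hIJe.ge, finrank_top, hIJe]
        omega
      · have h1 := hIrr.1 I hIJ hne hIJe
        have h2 : EJ ⊔ Ut A I ≤ (Es ⊔ Ut A I) ⊔ Submodule.span ℂ {f} := by
          rw [sup_right_comm]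
          exact sup_le_sup_right hsumf _
        have h3 := Submodule.finrank_mono h2
        have h4 := finrank_sup_span_singleton_le (E := Es ⊔ Ut A I) (x := f)
        omega
  · rw [Finset.card_insert_of_notMem hlJ]
    omega

end Growth
end PartP3

section PartP4
open Module
section Deletion
variable {β : Type} [Fintype β] [DecidableEq β] {ι : Type*} [DecidableEq ι]

/-- Span of differences of basis vectors. -/
def DD (s : Finset β) : Submodule ℂ (β → ℂ) :=
  Submodule.span ℂ {x | ∃ b ∈ s, ∃ b' ∈ s, x = Pi.single b 1 - Pi.single b' 1}

theorem DD_le {s : Finset β} {E : Submodule ℂ (β → ℂ)} :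
    DD s ≤ E ↔ ∀ b ∈ s, ∀ b' ∈ s, (Pi.single b 1 - Pi.single b' 1 : β → ℂ) ∈ E := by
  rw [DD, Submodule.span_le]
  constructor
  · intro h a ha b hb
    exact h ⟨a, ha, b, hb, rfl⟩
  · rintro h _ ⟨a, ha, b, hb, rfl⟩
    exact h a ha b hb

theorem mem_DD {s : Finset β} {b b' : β} (hb : b ∈ s) (hb' : b' ∈ s) :
    (Pi.single b 1 - Pi.single b' 1 : β → ℂ) ∈ DD s :=
  Submodule.subset_span ⟨b, hb, b', hb', rfl⟩

theorem deletion (S : ι → Finset β) (m : β) (N : ℕ) : ∀ I : Finset ι, I.card = N → 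
    (∀ I' ⊆ I, I'.Nonempty → I'.card + 1 ≤ finrank ℂ ↥(⨆ i ∈ I', DD (S i))) →
    I.card ≤ finrank ℂ ↥(⨆ i ∈ I, DD ((S i).erase m)) := by
  classical
  induction N using Nat.strong_induction_on with
  | _ N ih =>
  intro I hN hI
  rcases I.eq_empty_or_nonempty with rfl | ⟨i0, hi0⟩
  · simp
  set G := ⨆ i ∈ I, DD ((S i).erase m) with hG
  have hle : ∀ i ∈ I, DD ((S i).erase m) ≤ G := fun i hi => 
    le_biSup (fun i => DD ((S i).erase m)) hi
  obtain ⟨b0, hb0⟩ : ∃ b0, b0 ∈ (S i0).erase m := by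
    by_contra hc
    push Not at hc
    have h1 := hI {i0} (by simpa using hi0) (by simp)
    have h2 : (⨆ i ∈ ({i0} : Finset ι), DD (S i)) = ⊥ := by
      rw [eq_bot_iff]
      simp only [Finset.mem_singleton, iSup_iSup_eq_left]
      rw [DD_le]
      intro b hb b' hb'
      have e1 : b = m := by by_contra h; exact hc b (by simp [h, hb])
      have e2 : b' = m := by by_contra h; exact hc b' (by simp [h, hb'])
      simp [e1, e2]
    rw [h2, finrank_bot] at h1
    simp at h1
  set r : β → Prop := fun b => (Pi.single b 1 - Pi.single b0 1 : β → ℂ) ∈ G with hr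
  set I1 := I.filter (fun i => ∃ b ∈ (S i).erase m, r b) with hI1
  set I2 := I.filter (fun i => ¬ ∃ b ∈ (S i).erase m, r b) with hI2
  have hI12 : I1 ∪ I2 = I := Finset.filter_union_filter_not_eq _ _
  have hd : Disjoint I1 I2 := Finset.disjoint_filter_filter_not _ _ _
  have hr1 : ∀ i ∈ I1, ∀ b ∈ (S i).erase m, r b := by
    intro i hi b hb
    obtain ⟨hiI, b1, hb1, h1⟩ := Finset.mem_filter.mp hi
    have := G.add_mem (hle i hiI (mem_DD hb hb1)) h1
    simpa [hr] using this
  have hr2 : ∀ i ∈ I2, ∀ b ∈ (S i).erase m, ¬ r b := by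
    intro i hi b hb h
    exact (Finset.mem_filter.mp hi).2 ⟨b, hb, h⟩
  have hi01 : i0 ∈ I1 := Finset.mem_filter.mpr ⟨hi0, b0, hb0, by simp [hr]⟩
  rcases I2.eq_empty_or_nonempty with h2e | h2n
  · -- connected
    rw [h2e, Finset.union_empty] at hI12
    have h1 := hI I subset_rfl ⟨i0, hi0⟩
    have h2 : (⨆ i ∈ I, DD (S i)) ≤ G ⊔ Submodule.span ℂ {Pi.single m 1 - Pi.single b0 1} := by
      refine iSup₂_le fun i hi => ?_
      rw [DD_le]
      have key : ∀ b ∈ S i, (Pi.single b 1 - Pi.single b0 1 : β → ℂ) ∈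
          G ⊔ Submodule.span ℂ {Pi.single m 1 - Pi.single b0 1} := by
        intro b hb
        by_cases hbm : b = m
        · rw [hbm]
          exact Submodule.mem_sup_right (Submodule.mem_span_singleton_self _)
        · exact Submodule.mem_sup_left (hr1 i (hI12.symm ▸ hi) b (by simp [hbm, hb]))
      intro b hb b' hb'
      have := Submodule.sub_mem _ (key b hb) (key b' hb')
      simpa using this
    have h3 := Submodule.finrank_mono h2
    have h4 := finrank_sup_span_singleton_le (E := G) (x := Pi.single m 1 - Pi.single b0 1)
    omega
  · have hc : I1.card + I2.card = I.card := by
      rw [← Finset.card_union_of_disjoint hd, hI12]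
    have hc1 : 0 < I1.card := Finset.card_pos.mpr ⟨i0, hi01⟩
    have hc2 : 0 < I2.card := Finset.card_pos.mpr h2n
    have hs1 : I1 ⊆ I := Finset.filter_subset _ _
    have hs2 : I2 ⊆ I := Finset.filter_subset _ _
    have ih1 := ih I1.card (by omega) I1 rfl (fun I' hI' => hI I' (hI'.trans hs1))
    have ih2 := ih I2.card (by omega) I2 rfl (fun I' hI' => hI I' (hI'.trans hs2))
    have hGs : G = (⨆ i ∈ I1, DD ((S i).erase m)) ⊔ (⨆ i ∈ I2, DD ((S i).erase m)) := by
      rw [hG, ← Finset.iSup_union, hI12]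
    set G1 := (⨆ i ∈ I1, DD ((S i).erase m)) with hG1
    set G2 := (⨆ i ∈ I2, DD ((S i).erase m)) with hG2
    have hsup1 : ∀ x ∈ G1, ∀ b, ¬ r b → x b = 0 := by
      intro x hx b hb
      have : G1 ≤ LinearMap.ker (LinearMap.proj b : (β → ℂ) →ₗ[ℂ] ℂ) := by
        refine iSup₂_le fun i hi => ?_
        rw [DD_le]
        intro b1 hb1 b2 hb2
        have h1 := hr1 i hi b1 hb1
        have h2 := hr1 i hi b2 hb2
        have e1 : b ≠ b1 := by rintro rfl; exact hb h1
        have e2 : b ≠ b2 := by rintro rfl; exact hb h2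
        simp [e1, e2]
      exact this hx
    have hsup2 : ∀ x ∈ G2, ∀ b, r b → x b = 0 := by
      intro x hx b hb
      have : G2 ≤ LinearMap.ker (LinearMap.proj b : (β → ℂ) →ₗ[ℂ] ℂ) := by
        refine iSup₂_le fun i hi => ?_
        rw [DD_le]
        intro b1 hb1 b2 hb2
        have h1 := hr2 i hi b1 hb1
        have h2 := hr2 i hi b2 hb2
        have e1 : b ≠ b1 := by rintro rfl; exact h1 hb
        have e2 : b ≠ b2 := by rintro rfl; exact h2 hb
        simp [e1, e2]
      exact this hx
    have hinf : G1 ⊓ G2 = ⊥ := by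
      rw [eq_bot_iff]
      rintro x ⟨hx1, hx2⟩
      rw [Submodule.mem_bot]
      ext b
      by_cases hb : r b
      · exact hsup2 x hx2 b hb
      · exact hsup1 x hx1 b hb
    have hf := Submodule.finrank_sup_add_finrank_inf_eq G1 G2
    rw [hinf, finrank_bot, ← hGs] at hf
    omega

variable {V : Type*} [AddCommGroup V] [Module ℂ V] [FiniteDimensional ℂ V]

theorem finrank_sup_ker {W : Type*} [AddCommGroup W] [Module ℂ W] [FiniteDimensional ℂ W] 
    (ρ : V →ₗ[ℂ] W) (X : Submodule ℂ V) :
    finrank ℂ ↥(LinearMap.ker ρ ⊔ X) = finrank ℂ (LinearMap.ker ρ) + finrank ℂ (X.map ρ) := by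
  set Y := LinearMap.ker ρ ⊔ X with hY
  have h := LinearMap.finrank_range_add_finrank_ker (ρ.domRestrict Y)
  rw [LinearMap.range_domRestrict, LinearMap.ker_domRestrict] at h
  have h1 : Y.map ρ = X.map ρ := by
    rw [hY, Submodule.map_sup]
    have : (LinearMap.ker ρ).map ρ = ⊥ := by
      rw [eq_bot_iff]
      rintro _ ⟨x, hx, rfl⟩
      exact hx
    rw [this, bot_sup_eq]
  have h2 : finrank ℂ ↥((LinearMap.ker ρ).comap Y.subtype) = finrank ℂ (LinearMap.ker ρ) :=
    LinearEquiv.finrank_eq (Submodule.comapSubtypeEquivOfLe le_sup_left)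
  change finrank ℂ ↥(Y.map ρ) + finrank ℂ ↥((LinearMap.ker ρ).comap Y.subtype) = _ at h
  rw [h1, h2] at h
  omega

theorem map_dU_label (ρ : V →ₗ[ℂ] (β → ℂ)) (s : Finset V) (ℓ : V → β)
    (h : ∀ a ∈ s, ∀ a' ∈ s, ρ a - ρ a' = Pi.single (ℓ a) 1 - Pi.single (ℓ a') 1) :
    (dU s).map ρ = DD (s.image ℓ) := by
  rw [dU, DD, Submodule.map_span]
  congr 1
  ext x
  simp only [Set.mem_image, Set.mem_ofPred_eq, Finset.mem_image]
  constructor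
  · rintro ⟨_, ⟨a, ha, b, hb, rfl⟩, rfl⟩
    exact ⟨_, ⟨a, ha, rfl⟩, _, ⟨b, hb, rfl⟩, by rw [map_sub, h a ha b hb]⟩
  · rintro ⟨_, ⟨a, ha, rfl⟩, _, ⟨b, hb, rfl⟩, rfl⟩
    exact ⟨_, ⟨a, ha, b, hb, rfl⟩, by rw [map_sub, h a ha b hb]⟩

/-- The Rado condition after removing the points labelled `m`. -/
theorem deletion_rc {A : ι → Finset V} {T : Finset ι} {E : Submodule ℂ V} (hIrr : Irr A T E)
    (ρ : V →ₗ[ℂ] (β → ℂ)) (ℓ : ι → V → β) (hker : LinearMap.ker ρ = E) 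
    (hℓ : ∀ i ∈ T, ∀ a ∈ A i, ∀ a' ∈ A i, 
      ρ a - ρ a' = Pi.single (ℓ i a) 1 - Pi.single (ℓ i a') 1) (m : β)
    (I : Finset ι) (hI : I ⊆ T) (hne : I ≠ T) :
    finrank ℂ E + I.card ≤ 
      finrank ℂ ↥(E ⊔ ⨆ i ∈ I, dU ((A i).filter (fun a => ℓ i a ≠ m))) := by
  have hmap : ∀ I' ⊆ I, (Ut A I').map ρ = ⨆ i ∈ I', DD ((A i).image (ℓ i)) := by
    intro I' hI'
    rw [Ut, Submodule.map_iSup]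
    refine iSup_congr fun i => ?_
    rw [Submodule.map_iSup]
    refine iSup_congr fun hi => ?_
    exact map_dU_label ρ _ _ (hℓ i (hI (hI' hi)))
  have hmap2 : (⨆ i ∈ I, dU ((A i).filter (fun a => ℓ i a ≠ m))).map ρ = 
      ⨆ i ∈ I, DD (((A i).image (ℓ i)).erase m) := by
    rw [Submodule.map_iSup]
    refine iSup_congr fun i => ?_
    rw [Submodule.map_iSup]
    refine iSup_congr fun hi => ?_
    rw [map_dU_label ρ _ (ℓ i)]
    · congr 1
      ext b
      simp only [Finset.mem_image, Finset.mem_filter, Finset.mem_erase]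
      constructor
      · rintro ⟨a, ⟨ha, hm⟩, rfl⟩
        exact ⟨hm, a, ha, rfl⟩
      · rintro ⟨hm, a, ha, rfl⟩
        exact ⟨a, ⟨ha, hm⟩, rfl⟩
    · intro a ha a' ha'
      exact hℓ i (hI hi) a (Finset.mem_filter.mp ha).1 a' (Finset.mem_filter.mp ha').1
  rw [← hker, finrank_sup_ker, hmap2]
  have := deletion (fun i => (A i).image (ℓ i)) m I.card I rfl (by
    intro I' hI' hn
    have h1 := hIrr.1 I' (hI'.trans hI) hn (by
      rintro rfl; exact hne (Finset.Subset.antisymm hI hI'))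
    rw [← hker, finrank_sup_ker, hmap I' hI'] at h1
    omega)
  omega

end Deletion
end PartP4

section PartP5
open Module
section Ext
variable {V : Type*} [AddCommGroup V] [Module ℂ V] [FiniteDimensional ℂ V] 
  {ι : Type*} [DecidableEq ι]

theorem HRel.split1 {A : ι → Finset V} {T : Finset ι} {j : ι} {E : Submodule ℂ V}
    (hH : HRel A (insert j T) E) (hj : j ∉ T) (cj : V → ℂ) (cs : ι → V → ℂ) (lj : ℂ) 
    (ls : ι → ℂ) (v : Module.Dual ℂ V) (hcj : ∑ a ∈ A j, cj a = 0) 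
    (hcs : ∀ i ∈ T, ∑ a ∈ A i, cs i a = 0) (hv : ∀ x ∈ E, v x = 0)
    (hvj : v (∑ a ∈ A j, cj a • a) = 0) (hvs : ∀ i ∈ T, v (∑ a ∈ A i, cs i a • a) = 0)
    (hl : lj • ∑ a ∈ A j, cj a • a + ∑ i ∈ T, ls i • ∑ a ∈ A i, cs i a • a ∈ E)
    (hu : ∀ v' : Module.Dual ℂ V, (∀ x ∈ E, v' x = 0) → v' (∑ a ∈ A j, cj a • a) = 0 →
      (∀ i ∈ T, v' (∑ a ∈ A i, cs i a • a) = 0) → ∃ s : ℂ, v' = s • v) :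
    lj * ∑ a ∈ A j, cj a * (v a) ^ 2 + ∑ i ∈ T, ls i * ∑ a ∈ A i, cs i a * (v a) ^ 2 = 0 := by
  have hne : ∀ i ∈ T, i ≠ j := fun i hi h => hj (h ▸ hi)
  have e1 : ∀ i ∈ T, (if i = j then cj else cs i) = cs i := fun i hi => if_neg (hne i hi)
  have e2 : ∀ i ∈ T, (if i = j then lj else ls i) = ls i := fun i hi => if_neg (hne i hi)
  have := hH (fun i => if i = j then cj else cs i) (fun i => if i = j then lj else ls i) v ?_ hv ?_ ?_ ?_
  · rw [Finset.sum_insert hj] at this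
    rw [← this]
    simp only [if_true]
    congr 1
    exact Finset.sum_congr rfl fun i hi => by rw [e1 i hi, e2 i hi]
  · intro i hi
    rcases Finset.mem_insert.mp hi with rfl | hi
    · simpa using hcj
    · simp only [e1 i hi]; exact hcs i hi
  · intro i hi
    rcases Finset.mem_insert.mp hi with rfl | hi
    · simpa using hvj
    · simp only [e1 i hi]; exact hvs i hi
  · rw [Finset.sum_insert hj]
    simp only [if_true]
    convert hl using 2
    exact Finset.sum_congr rfl fun i hi => by rw [e1 i hi, e2 i hi]
  · intro v' h1 h2
    apply hu v' h1
    · simpa using h2 j (by simp)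
    · intro i hi
      have := h2 i (by simp [hi])
      simpa only [e1 i hi] using this

theorem HRel.split2 {A : ι → Finset V} {T : Finset ι} {j k : ι} {E : Submodule ℂ V}
    (hH : HRel A (insert j T) E) (hj : j ∉ T) (hk : k ∈ T) (cj ck : V → ℂ) (cs : ι → V → ℂ) 
    (lj lk : ℂ) 
    (ls : ι → ℂ) (v : Module.Dual ℂ V) (hcj : ∑ a ∈ A j, cj a = 0) (hck : ∑ a ∈ A k, ck a = 0) 
    (hcs : ∀ i ∈ T.erase k, ∑ a ∈ A i, cs i a = 0) (hv : ∀ x ∈ E, v x = 0)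
    (hvj : v (∑ a ∈ A j, cj a • a) = 0) (hvk : v (∑ a ∈ A k, ck a • a) = 0)
    (hvs : ∀ i ∈ T.erase k, v (∑ a ∈ A i, cs i a • a) = 0)
    (hl : lj • ∑ a ∈ A j, cj a • a + (lk • ∑ a ∈ A k, ck a • a + 
      ∑ i ∈ T.erase k, ls i • ∑ a ∈ A i, cs i a • a) ∈ E)
    (hu : ∀ v' : Module.Dual ℂ V, (∀ x ∈ E, v' x = 0) → v' (∑ a ∈ A j, cj a • a) = 0 →
      v' (∑ a ∈ A k, ck a • a) = 0 →
      (∀ i ∈ T.erase k, v' (∑ a ∈ A i, cs i a • a) = 0) → ∃ s : ℂ, v' = s • v) :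
    lj * ∑ a ∈ A j, cj a * (v a) ^ 2 + (lk * ∑ a ∈ A k, ck a * (v a) ^ 2 + 
      ∑ i ∈ T.erase k, ls i * ∑ a ∈ A i, cs i a * (v a) ^ 2) = 0 := by
  have hTk : insert k (T.erase k) = T := Finset.insert_erase hk
  have hne : ∀ i ∈ T.erase k, i ≠ k := fun i hi => Finset.ne_of_mem_erase hi
  have e1 : ∀ i ∈ T.erase k, (if i = k then ck else cs i) = cs i := fun i hi => if_neg (hne i hi)
  have e2 : ∀ i ∈ T.erase k, (if i = k then lk else ls i) = ls i := fun i hi => if_neg (hne i hi)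
  have hsp : ∀ i ∈ T, i = k ∨ i ∈ T.erase k := fun i hi => by
    rw [← hTk] at hi; exact Finset.mem_insert.mp hi
  have := hH.split1 hj cj (fun i => if i = k then ck else cs i) lj 
    (fun i => if i = k then lk else ls i) v hcj ?_ hv hvj ?_ ?_ ?_
  · rw [← hTk, Finset.sum_insert (by simp)] at this
    rw [← this]
    simp only [if_true]
    congr 2
    exact Finset.sum_congr (by simp) fun i hi => by rw [e1 i hi, e2 i hi]
  · intro i hi
    rcases hsp i hi with rfl | hi
    · simpa using hck
    · simp only [e1 i hi]; exact hcs i hi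
  · intro i hi
    rcases hsp i hi with rfl | hi
    · simpa using hvk
    · simp only [e1 i hi]; exact hvs i hi
  · rw [← hTk, Finset.sum_insert (by simp)]
    simp only [if_true]
    convert hl using 3
    exact Finset.sum_congr (by simp) fun i hi => by rw [e1 i hi, e2 i hi]
  · intro v' h1 hj' h2
    apply hu v' h1 hj'
    · simpa using h2 k hk
    · intro i hi
      have := h2 i (Finset.mem_of_mem_erase hi)
      simpa only [e1 i hi] using this

/-- The situation of the extension step. -/
structure Ctx (A : ι → Finset V) (T : Finset ι) (j : ι) (E : Submodule ℂ V) (β : Type)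
    [Fintype β] [DecidableEq β] where
  ρ : V →ₗ[ℂ] (β → ℂ)
  ℓ : ι → V → β
  a0 : V
  a1 : V
  c : V
  m : β
  hj : j ∉ T
  ha0 : a0 ∈ A j
  ha1 : a1 ∈ A j
  hc : c ∈ A j
  hker : LinearMap.ker ρ = E ⊔ Submodule.span ℂ {a1 - a0}
  he : a1 - a0 ∉ E
  hcard : Fintype.card β = T.card + 1
  hℓ : ∀ i ∈ T, ∀ a ∈ A i, ∀ a' ∈ A i, ρ a - ρ a' = Pi.single (ℓ i a) 1 - Pi.single (ℓ i a') 1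
  hIrrT : Irr A T (E ⊔ Submodule.span ℂ {a1 - a0})
  hIrr : Irr A (insert j T) E
  hH : HRel A (insert j T) E
  hT : T.Nonempty
  hm0 : ρ (c - a0) m ≠ 0
  hm1 : ρ (c - a0) m ≠ 1

variable {A : ι → Finset V} {T : Finset ι} {j : ι} {E : Submodule ℂ V} {β : Type}
    [Fintype β] [DecidableEq β]

/-- The coordinate `m`. -/
def Ctx.rm (X : Ctx A T j E β) : Module.Dual ℂ V := (LinearMap.proj X.m).comp X.ρ

/-- The span of differences of points not labelled `m`. -/
def Ctx.W (X : Ctx A T j E β) (i : ι) : Submodule ℂ V := 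
  dU ((A i).filter (fun a => X.ℓ i a ≠ X.m))

theorem Ctx.rm_E (X : Ctx A T j E β) {x : V} (hx : x ∈ E ⊔ Submodule.span ℂ {X.a1 - X.a0}) :
    X.rm x = 0 := by
  rw [← X.hker] at hx
  have : X.ρ x = 0 := hx
  simp [Ctx.rm, this]

theorem Ctx.rm_sub (X : Ctx A T j E β) {i : ι} (hi : i ∈ T) {a b : V} (ha : a ∈ A i) 
    (hb : b ∈ A i) : X.rm a - X.rm b = (if X.ℓ i a = X.m then 1 else 0) - 
      (if X.ℓ i b = X.m then 1 else 0) := by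
  have := congrFun (X.hℓ i hi a ha b hb) X.m
  simpa [Ctx.rm, Pi.single_apply, eq_comm] using this

theorem Ctx.rm_W (X : Ctx A T j E β) {i : ι} (hi : i ∈ T) {x : V} (hx : x ∈ X.W i) :
    X.rm x = 0 := by
  have : X.W i ≤ LinearMap.ker X.rm := by
    rw [Ctx.W, dU_le]
    intro a ha b hb
    rw [Finset.mem_filter] at ha hb
    rw [LinearMap.mem_ker, map_sub, X.rm_sub hi ha.1 hb.1, if_neg ha.2, if_neg hb.2, sub_zero]
  exact this hx

theorem Ctx.W_le (X : Ctx A T j E β) (i : ι) : X.W i ≤ dU (A i) := dU_mono (Finset.filter_subset _ _)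

theorem Ctx.finrank1 (X : Ctx A T j E β) : finrank ℂ E + T.card + 1 = finrank ℂ V := by
  have := X.hIrr.2.2
  rw [Finset.card_insert_of_notMem X.hj] at this
  omega

theorem Ctx.finrankE' (X : Ctx A T j E β) : 
    finrank ℂ ↥(E ⊔ Submodule.span ℂ {X.a1 - X.a0}) = finrank ℂ E + 1 :=
  finrank_sup_span_singleton_of_notMem X.he

/-- Representation of an element of `W i` with coefficients supported off `m`. -/
theorem Ctx.W_rep (X : Ctx A T j E β) {i : ι} {x : V} (hx : x ∈ X.W i) :
    ∃ c : V → ℂ, ∑ a ∈ A i, c a = 0 ∧ ∑ a ∈ A i, c a • a = x ∧ 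
      ∀ a, X.ℓ i a = X.m → c a = 0 := by
  classical
  obtain ⟨c, h1, h2⟩ := dU_rep hx
  rw [Finset.sum_filter] at h1 h2
  refine ⟨fun a => if X.ℓ i a ≠ X.m then c a else 0, h1, ?_, ?_⟩
  · rw [← h2]
    exact Finset.sum_congr rfl fun a _ => by by_cases h : X.ℓ i a = X.m <;> simp [h]
  · intro a ha
    simp [ha]

/-- A general form of the Hessian of an element of `W i`. -/
theorem Ctx.W_hess (X : Ctx A T j E β) {i : ι} (hi : i ∈ T) {c : V → ℂ} {b : V} (hb : b ∈ A i)
    (hbm : X.ℓ i b ≠ X.m) (h1 : ∑ a ∈ A i, c a = 0) 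
    (h3 : ∀ a, X.ℓ i a = X.m → c a = 0) (h : Module.Dual ℂ V) (s t : ℂ) :
    ∑ a ∈ A i, c a * ((s • X.rm + t • h) a) ^ 2 = 
      2 * s * X.rm b * t * h (∑ a ∈ A i, c a • a) + t ^ 2 * ∑ a ∈ A i, c a * (h a) ^ 2 := by
  have : ∀ a ∈ A i, c a * ((s • X.rm + t • h) a) ^ 2 = 
      (s * X.rm b) ^ 2 * c a + (2 * s * X.rm b * t) * (c a * h a) + t ^ 2 * (c a * (h a) ^ 2) := by
    intro a ha
    by_cases hm : X.ℓ i a = X.m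
    · simp [h3 a hm]
    · have := X.rm_sub hi ha hb
      rw [if_neg hm, if_neg hbm, sub_zero, sub_eq_zero] at this
      simp only [LinearMap.add_apply, LinearMap.smul_apply, smul_eq_mul, this]
      ring
  rw [Finset.sum_congr rfl this, Finset.sum_add_distrib, Finset.sum_add_distrib, 
    ← Finset.mul_sum, h1, ← Finset.mul_sum, ← Finset.mul_sum, map_sum]
  simp

end Ext
end PartP5

section PartP6
open Module
section ClaimA
variable {V : Type*} [AddCommGroup V] [Module ℂ V] [FiniteDimensional ℂ V] 
  {ι : Type*} [DecidableEq ι]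
  {A : ι → Finset V} {T : Finset ι} {j : ι} {E : Submodule ℂ V} {β : Type}
    [Fintype β] [DecidableEq β]

/-- The Hessian on `W i` of a functional whose second part vanishes at the given element. -/
theorem Ctx.W_hess0 (X : Ctx A T j E β) {i : ι} (hi : i ∈ T) {c : V → ℂ} 
    (h1 : ∑ a ∈ A i, c a = 0) 
    (h3 : ∀ a, X.ℓ i a = X.m → c a = 0) (h : Module.Dual ℂ V) 
    (h0 : h (∑ a ∈ A i, c a • a) = 0) (s t : ℂ) :
    ∑ a ∈ A i, c a * ((s • X.rm + t • h) a) ^ 2 = t ^ 2 * ∑ a ∈ A i, c a * (h a) ^ 2 := by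
  by_cases hb : ∃ b ∈ A i, X.ℓ i b ≠ X.m
  · obtain ⟨b, hb, hbm⟩ := hb
    rw [X.W_hess hi hb hbm h1 h3, h0]; ring
  · push Not at hb
    rw [Finset.sum_eq_zero, Finset.sum_eq_zero, mul_zero]
    · intro a ha; rw [h3 a (hb a ha), zero_mul]
    · intro a ha; rw [h3 a (hb a ha), zero_mul]

theorem mem_sup_span_singleton {Y : Submodule ℂ V} {e z : V} :
    z ∈ Y ⊔ Submodule.span ℂ {e} ↔ ∃ y ∈ Y, ∃ s : ℂ, z = y + s • e := by
  rw [Submodule.mem_sup]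
  constructor
  · rintro ⟨y, hy, w, hw, rfl⟩
    obtain ⟨s, rfl⟩ := Submodule.mem_span_singleton.mp hw
    exact ⟨y, hy, s, rfl⟩
  · rintro ⟨y, hy, s, rfl⟩
    exact ⟨y, hy, _, Submodule.smul_mem _ _ (Submodule.mem_span_singleton_self e), rfl⟩

theorem mem_sup_span_image {Y : Submodule ℂ V} {K : Finset ι} {x : ι → V} {z : V} :
    z ∈ Y ⊔ Submodule.span ℂ (x '' (K : Set ι)) ↔ ∃ g : ι → ℂ, z - ∑ i ∈ K, g i • x i ∈ Y := by
  rw [Submodule.mem_sup]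
  constructor
  · rintro ⟨y, hy, w, hw, rfl⟩
    obtain ⟨g, rfl⟩ := mem_span_image_finset.mp hw
    exact ⟨g, by simpa using hy⟩
  · rintro ⟨g, hg⟩
    exact ⟨_, hg, _, mem_span_image_finset.mpr ⟨g, rfl⟩, by simp⟩

theorem Ctx.claimA (X : Ctx A T j E β) {k : ι} (hk : k ∈ T) {am b : V} (ham : am ∈ A k) 
    (hb : b ∈ A k) (hamm : X.ℓ k am = X.m) (hbm : X.ℓ k b ≠ X.m) {x : ι → V} 
    (hx : ∀ i ∈ T, x i ∈ X.W i) 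
    (hI : IM (E ⊔ Submodule.span ℂ {X.a1 - X.a0}) (T.erase k) x) :
    x k ∈ E ⊔ Submodule.span ℂ (x '' (T.erase k : Set ι)) := by
  classical
  have hfr := X.finrank1
  have hfr' := X.finrankE'
  have hfrI := hI.finrank_eq
  have hTc : (T.erase k).card + 1 = T.card := Finset.card_erase_add_one hk
  set e := X.a1 - X.a0 with he
  set Y := E ⊔ Submodule.span ℂ (x '' (T.erase k : Set ι)) with hY
  have hEY : E ⊔ Submodule.span ℂ {e} ⊔ Submodule.span ℂ (x '' (T.erase k : Set ι)) = 
      Y ⊔ Submodule.span ℂ {e} := by rw [hY, sup_right_comm]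
  have hxY : ∀ i ∈ T.erase k, x i ∈ Y := fun i hi => 
    Submodule.mem_sup_right (Submodule.subset_span ⟨i, hi, rfl⟩)
  have hEleY : E ≤ Y := le_sup_left
  have hYle : ∀ F : Submodule ℂ V, E ≤ F → (∀ i ∈ T.erase k, x i ∈ F) → Y ≤ F := by
    intro F h1 h2
    refine sup_le h1 (Submodule.span_le.mpr ?_)
    rintro _ ⟨i, hi, rfl⟩
    exact h2 i hi
  rw [hEY] at hfrI
  have hYle' : finrank ℂ Y ≤ finrank ℂ E + (T.erase k).card := finrank_sup_span_le
  have hYge := finrank_sup_span_singleton_le (E := Y) (x := e)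
  have heY : e ∉ Y := by
    intro h
    have : Y ⊔ Submodule.span ℂ {e} = Y := 
      sup_eq_left.mpr ((Submodule.span_singleton_le_iff_mem _ _).mpr h)
    rw [this] at hfrI
    omega
  have hrmE : ∀ y ∈ E, X.rm y = 0 := fun y hy => X.rm_E (Submodule.mem_sup_left hy)
  have hrme : X.rm e = 0 := X.rm_E (Submodule.mem_sup_right (Submodule.mem_span_singleton_self _))
  have hrmY : ∀ y ∈ Y, X.rm y = 0 := by
    have : Y ≤ LinearMap.ker X.rm := hYle _ hrmE fun i hi => 
      X.rm_W (Finset.mem_of_mem_erase hi) (hx i (Finset.mem_of_mem_erase hi))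
    exact this
  have hrmu : X.rm am - X.rm b = 1 := by
    rw [X.rm_sub hk ham hb, if_pos hamm, if_neg hbm, sub_zero]
  have hrm0 : X.rm ≠ 0 := by
    intro h; rw [h] at hrmu; simp at hrmu
  have hker : LinearMap.ker X.rm = Y ⊔ Submodule.span ℂ {e} := by
    symm
    apply Submodule.eq_of_le_of_finrank_le
    · refine sup_le hrmY ?_
      rw [Submodule.span_singleton_le_iff_mem]; exact hrme
    · have := Module.Dual.finrank_ker_add_one_of_ne_zero hrm0
      omega
  have hxkm : x k ∈ Y ⊔ Submodule.span ℂ {e} := by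
    rw [← hker]; exact X.rm_W hk (hx k hk)
  obtain ⟨y0, hy0, η, hη⟩ := mem_sup_span_singleton.mp hxkm
  obtain ⟨ht, htY, hte⟩ := exists_dual_one heY
  have hmemY : ∀ z, X.rm z = 0 → ht z = 0 → z ∈ Y := by
    intro z h1 h2
    have hz : z ∈ Y ⊔ Submodule.span ℂ {e} := by rw [← hker]; exact h1
    obtain ⟨y, hy, s, rfl⟩ := mem_sup_span_singleton.mp hz
    simp [htY y hy, hte] at h2
    simpa [h2] using hy
  suffices hη0 : η = 0 by
    rw [hη, hη0]; simpa using hy0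
  have hyk : ht (x k) = η := by rw [hη]; simp [htY _ hy0, hte]
  have hrmk : X.rm (x k) = 0 := X.rm_W hk (hx k hk)
  -- representations
  have hrep : ∀ i, ∃ c : V → ℂ, i ∈ T → (∑ a ∈ A i, c a = 0 ∧ ∑ a ∈ A i, c a • a = x i ∧ 
      ∀ a, X.ℓ i a = X.m → c a = 0) := by
    intro i
    by_cases hi : i ∈ T
    · obtain ⟨c, hc⟩ := X.W_rep (hx i hi)
      exact ⟨c, fun _ => hc⟩
    · exact ⟨0, fun h => absurd h hi⟩
  choose cs hcs using hrep
  set fm := X.rm (X.c - X.a0) with hfm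
  have hfm0 : fm ≠ 0 := X.hm0
  have hfm1 : fm ≠ 1 := X.hm1
  set α := ht (X.c - X.a0) with hα
  set hu := ht (am - b) with hhu
  obtain ⟨g0, hg0⟩ := mem_sup_span_image.mp hy0
  have hz1 : (α - fm * hu) • x k + (fm * η) • (am - b) - η • (X.c - X.a0) ∈ Y := by
    apply hmemY
    · simp only [map_sub, map_add, map_smul, hrmk, smul_eq_mul] at hfm ⊢
      rw [hrmu, ← hfm]; ring
    · simp only [map_sub, map_add, map_smul, hyk, smul_eq_mul] at hhu hα ⊢
      rw [← hhu, ← hα]; ring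
  obtain ⟨g1, hg1⟩ := mem_sup_span_image.mp hz1
  set κ := X.rm b with hκ
  have key : ∀ ε : ℂ, ε ≠ 0 → 
      -η * (ε ^ 2 * fm ^ 2 + ε * fm ^ 2) + ((1 + ε * (α - fm * hu)) * 
        (2 * (1 + ε * α) * κ * (- ε * fm) * η + (- ε * fm) ^ 2 * ∑ a ∈ A k, cs k a * (ht a) ^ 2)
        + ε * fm * η * ((1 + ε * (α - fm * hu)) * 
          ((1 + ε * α) * (2 * κ + 1) + (- ε * fm) * (ht am + ht b)))
        - (- ε * fm) ^ 2 * (∑ i ∈ T.erase k, g0 i * ∑ a ∈ A i, cs i a * (ht a) ^ 2 + 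
          ε * ∑ i ∈ T.erase k, g1 i * ∑ a ∈ A i, cs i a * (ht a) ^ 2)) = 0 := by
    intro ε hε
    set v : Module.Dual ℂ V := (1 + ε * α) • X.rm + (- ε * fm) • ht with hv
    have hvE : ∀ y ∈ Y, v y = 0 := fun y hy => by simp [hv, hrmY y hy, htY y hy]
    have hve : v e = - ε * fm := by simp [hv, hrme, hte]
    have hvc : v (X.c - X.a0) = fm := by
      rw [hv, LinearMap.add_apply, LinearMap.smul_apply, LinearMap.smul_apply, ← hfm, ← hα]
      simp only [smul_eq_mul]; ring
    have hvxk : v (x k) = - ε * fm * η := by simp [hv, hrmk, hyk]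
    have hvu : v (am - b) = 1 + ε * (α - fm * hu) := by
      rw [hv, LinearMap.add_apply, LinearMap.smul_apply, LinearMap.smul_apply, ← hhu, map_sub, hrmu]
      simp only [smul_eq_mul]; ring
    obtain ⟨cj, hcj1, hcj2⟩ := dU_rep3 X.ha1 X.ha0 X.hc 1 (-1 - ε) ε
    obtain ⟨cu, hcu1, hcu2⟩ := dU_rep3 ham hb hb 1 (-1) 0
    have hrj : ∑ w ∈ A j, cj w • w = e + ε • (X.c - X.a0) := by
      rw [hcj2, he]; module
    have hcu2' : ∑ w ∈ A k, cu w • w = am - b := by rw [hcu2]; module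
    have hrk : ∑ w ∈ A k, (v (am - b) * cs k w - v (x k) * cu w) • w = 
        v (am - b) • x k - v (x k) • (am - b) := by
      simp only [sub_smul, mul_smul, Finset.sum_sub_distrib, ← Finset.smul_sum, hcu2', (hcs k hk).2.1]
    have hxi : ∀ i ∈ T.erase k, ∑ w ∈ A i, cs i w • w = x i := fun i hi => 
      (hcs i (Finset.mem_of_mem_erase hi)).2.1
    have hvrj : v (e + ε • (X.c - X.a0)) = 0 := by
      rw [map_add, map_smul, hve, hvc, smul_eq_mul]; ring
    have := X.hH.split2 X.hj hk cj (fun w => v (am - b) * cs k w - v (x k) * cu w) cs (-η) 1 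
      (fun i => -(g0 i + ε * g1 i)) v ?_ ?_ ?_ ?_ ?_ ?_ ?_ ?_ ?_
    · have hessj : ∑ a ∈ A j, cj a * (v a) ^ 2 = ε ^ 2 * fm ^ 2 + ε * fm ^ 2 := by
        rw [hcj1 (fun a => (v a) ^ 2)]
        rw [he, map_sub] at hve
        rw [map_sub] at hvc
        have e1 : v X.a1 = v X.a0 - ε * fm := by linear_combination hve
        have e2 : v X.c = v X.a0 + fm := by linear_combination hvc
        rw [e1, e2]; ring
      have hessk : ∑ a ∈ A k, (v (am - b) * cs k a - v (x k) * cu a) * (v a) ^ 2 = 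
          (1 + ε * (α - fm * hu)) * 
        (2 * (1 + ε * α) * κ * (- ε * fm) * η + (- ε * fm) ^ 2 * ∑ a ∈ A k, cs k a * (ht a) ^ 2)
        + ε * fm * η * ((1 + ε * (α - fm * hu)) * 
          ((1 + ε * α) * (2 * κ + 1) + (- ε * fm) * (ht am + ht b))) := by
        have h1 := X.W_hess hk hb hbm (hcs k hk).1 (hcs k hk).2.2 ht (1 + ε * α) (- ε * fm)
        rw [(hcs k hk).2.1, hyk, ← hv] at h1
        have h2 := hcu1 (fun a => (v a) ^ 2)
        have h3 : v am - v b = 1 + ε * (α - fm * hu) := by rw [← hvu, map_sub]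
        have h4 : v am + v b = (1 + ε * α) * (2 * κ + 1) + (- ε * fm) * (ht am + ht b) := by
          simp only [hv, LinearMap.add_apply, LinearMap.smul_apply, smul_eq_mul]
          have : X.rm am = κ + 1 := by rw [hκ]; linear_combination hrmu
          rw [this]; ring
        have h5 : ∑ a ∈ A k, (v (am - b) * cs k a - v (x k) * cu a) * (v a) ^ 2 = 
            v (am - b) * ∑ a ∈ A k, cs k a * (v a) ^ 2 - v (x k) * ∑ a ∈ A k, cu a * (v a) ^ 2 := by
          simp only [sub_mul, mul_assoc, Finset.sum_sub_distrib, ← Finset.mul_sum]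
        rw [h5, h1, h2, hvu, hvxk, ← h4]
        linear_combination (ε * fm * η) * (v am + v b) * h3
      have hessi : ∑ i ∈ T.erase k, -(g0 i + ε * g1 i) * ∑ a ∈ A i, cs i a * (v a) ^ 2 = 
          - ((- ε * fm) ^ 2 * (∑ i ∈ T.erase k, g0 i * ∑ a ∈ A i, cs i a * (ht a) ^ 2 + 
          ε * ∑ i ∈ T.erase k, g1 i * ∑ a ∈ A i, cs i a * (ht a) ^ 2)) := by
        rw [Finset.mul_sum, ← Finset.sum_add_distrib, Finset.mul_sum, ← Finset.sum_neg_distrib]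
        refine Finset.sum_congr rfl fun i hi => ?_
        have hiT := Finset.mem_of_mem_erase hi
        rw [X.W_hess0 hiT (hcs i hiT).1 (hcs i hiT).2.2 ht (by
          rw [hxi i hi]; exact htY _ (hxY i hi)) (1 + ε * α) (- ε * fm)]
        ring
      rw [hessj, hessi, hessk] at this
      linear_combination this
    · have := hcj1 (fun _ => 1)
      simp only [mul_one] at this; rw [this]; ring
    · have := hcu1 (fun _ => 1)
      simp only [mul_one] at this
      rw [Finset.sum_sub_distrib, ← Finset.mul_sum, ← Finset.mul_sum, this, (hcs k hk).1]; ring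
    · exact fun i hi => (hcs i (Finset.mem_of_mem_erase hi)).1
    · exact fun y hy => hvE y (hEleY hy)
    · rw [hrj, hvrj]
    · rw [hrk]; simp only [map_sub, map_smul, smul_eq_mul]; ring
    · intro i hi; rw [hxi i hi]; exact hvE _ (hxY i hi)
    · rw [hrj, hrk, Finset.sum_congr rfl fun i hi => by rw [hxi i hi]]
      have h := E.add_mem hg0 (E.smul_mem ε hg1)
      convert h using 1
      have hs : ∑ i ∈ T.erase k, (-(g0 i + ε * g1 i)) • x i = 
          - (∑ i ∈ T.erase k, g0 i • x i) - ε • ∑ i ∈ T.erase k, g1 i • x i := by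
        rw [Finset.smul_sum, ← Finset.sum_neg_distrib, ← Finset.sum_sub_distrib]
        exact Finset.sum_congr rfl fun i _ => by module
      have hy0' : y0 = x k - η • e := by rw [hη]; module
      rw [hs, hy0', hvu, hvxk]
      module
    · intro v' h1 h2 h3 h4
      have hF : ∀ (w : Module.Dual ℂ V), (∀ x ∈ E, w x = 0) → w (e + ε • (X.c - X.a0)) = 0 → 
          (∀ i ∈ T.erase k, w (x i) = 0) → 
          ∀ z ∈ Y ⊔ Submodule.span ℂ {e + ε • (X.c - X.a0)}, w z = 0 := by
        intro w w1 w2 w3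
        have hw : Y ≤ LinearMap.ker w := hYle _ w1 w3
        have : Y ⊔ Submodule.span ℂ {e + ε • (X.c - X.a0)} ≤ LinearMap.ker w := 
          sup_le hw ((Submodule.span_singleton_le_iff_mem _ _).mpr w2)
        exact this
      refine ann_unique (F := Y ⊔ Submodule.span ℂ {e + ε • (X.c - X.a0)}) ?_ ?_ 
        (hF v (fun y hy => hvE y (hEleY hy)) hvrj (fun i hi => hvE _ (hxY i hi)))
        (hF v' h1 (hrj ▸ h2) (fun i hi => by rw [← hxi i hi]; exact h4 i hi))
      · have hn : e + ε • (X.c - X.a0) ∉ Y := by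
          intro h
          have := hrmY _ h
          rw [map_add, map_smul, hrme, ← hfm, zero_add, smul_eq_mul] at this
          exact (mul_ne_zero hε hfm0) this
        rw [finrank_sup_span_singleton_of_notMem hn]
        omega
      · intro h
        rw [h] at hve
        simp [hε, hfm0] at hve
  have h1 := key 1 (by norm_num)
  have h2 := key (-1) (by norm_num)
  have h3 := key 2 (by norm_num)
  have h4 := key (-2) (by norm_num)
  have : η * (fm * (1 - fm)) = 0 := by
    linear_combination (8 * (h1 - h2) - (h3 - h4)) / 12
  rcases mul_eq_zero.mp this with h | h
  · exact h
  · exact absurd h (mul_ne_zero hfm0 (sub_ne_zero.mpr (Ne.symm hfm1)))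

end ClaimA
end PartP6

section PartP7
open Module
section ClaimR
variable {V : Type*} [AddCommGroup V] [Module ℂ V] [FiniteDimensional ℂ V] 
  {ι : Type*} [DecidableEq ι]
  {A : ι → Finset V} {T : Finset ι} {j : ι} {E : Submodule ℂ V} {β : Type}
    [Fintype β] [DecidableEq β]

theorem Ctx.exists_off (X : Ctx A T j E β) {i : ι} (hi : i ∈ T) : ∃ b ∈ A i, X.ℓ i b ≠ X.m := by
  by_contra h
  push Not at h
  have h1 := X.hIrrT.rc (I := {i}) (by simpa using hi)
  rw [Ut_singleton, Finset.card_singleton] at h1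
  have h2 : dU (A i) ≤ E ⊔ Submodule.span ℂ {X.a1 - X.a0} := by
    rw [dU_le]
    intro a ha b hb
    rw [← X.hker, LinearMap.mem_ker, map_sub, X.hℓ i hi a ha b hb, h a ha, h b hb, sub_self]
  rw [sup_eq_left.mpr h2] at h1
  omega

theorem Ctx.exists_on (X : Ctx A T j E β) : ∃ i ∈ T, ∃ a ∈ A i, X.ℓ i a = X.m := by
  by_contra h
  push Not at h
  have h1 : E ⊔ Submodule.span ℂ {X.a1 - X.a0} ⊔ Ut A T ≤ LinearMap.ker X.rm := by
    refine sup_le (fun x hx => X.rm_E hx) (Ut_le.mpr fun i hi => ?_)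
    rw [dU_le]
    intro a ha b hb
    rw [LinearMap.mem_ker, map_sub, X.rm_sub hi ha hb, if_neg (h i hi a ha), if_neg (h i hi b hb),
      sub_zero]
  rw [X.hIrrT.2.1] at h1
  exact X.hm0 (h1 (Submodule.mem_top : X.c - X.a0 ∈ ⊤))

theorem Ctx.exists_x (X : Ctx A T j E β) : ∃ x : ι → V, (∀ i, x i ∈ X.W i) ∧ 
    ∀ k ∈ T, IM (E ⊔ Submodule.span ℂ {X.a1 - X.a0}) (T.erase k) x := by
  refine MR X.W T T (fun k => T.erase k) (fun _ => E ⊔ Submodule.span ℂ {X.a1 - X.a0})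
    (fun k _ => Finset.erase_subset _ _) ?_
  intro k hk I hI
  exact deletion_rc X.hIrrT X.ρ X.ℓ X.hker X.hℓ X.m I (hI.trans (Finset.erase_subset _ _))
    (by rintro rfl; exact Finset.notMem_erase k _ (hI hk))

theorem image_congr_finset {x y : ι → V} {K : Finset ι} (h : ∀ i ∈ K, x i = y i) : 
    x '' (K : Set ι) = y '' (K : Set ι) := Set.image_congr fun i hi => h i hi

theorem Ctx.claimR (X : Ctx A T j E β) : X.a1 - X.a0 ∉ E ⊔ ⨆ i ∈ T, X.W i := by
  classical
  obtain ⟨x, hx, hI⟩ := X.exists_x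
  obtain ⟨k, hk, am, ham, hamm⟩ := X.exists_on
  obtain ⟨b, hb, hbm⟩ := X.exists_off hk
  have hle : E ⊔ ⨆ i ∈ T, X.W i ≤ E ⊔ Submodule.span ℂ (x '' (T.erase k : Set ι)) := by
    refine sup_le le_sup_left (iSup₂_le fun l hl y hy => ?_)
    by_cases hlk : l = k
    · subst hlk
      have := X.claimA hk ham hb hamm hbm (x := Function.update x l y) ?_ ?_
      · rw [image_congr_finset (y := x)] at this
        · simpa using this
        · intro i hi; rw [Function.update_of_ne (Finset.ne_of_mem_erase hi)]
      · intro i hi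
        by_cases h : i = l
        · subst h; simpa using hy
        · rw [Function.update_of_ne h]; exact hx i
      · exact (hI l hk).congr fun i hi => by rw [Function.update_of_ne (Finset.ne_of_mem_erase hi)]
    · set E' := E ⊔ Submodule.span ℂ {X.a1 - X.a0} with hE'
      have hlk' : l ∈ T.erase k := Finset.mem_erase.mpr ⟨hlk, hl⟩
      have hins : insert l ((T.erase k).erase l) = T.erase k := Finset.insert_erase hlk'
      have hIk := hI k hk
      rw [← hins, IM_insert' (by simp)] at hIk
      set Z := E' ⊔ Submodule.span ℂ (x '' ((T.erase k).erase l : Set ι)) with hZ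
      obtain ⟨t, ht0, ht⟩ : ∃ t : ℂ, t ≠ 0 ∧ x l + t • y ∉ Z := by
        by_contra h
        push Not at h
        have h1 := h 1 one_ne_zero
        have h2 := h 2 two_ne_zero
        have h3 := Z.sub_mem (Z.smul_mem 2 h1) h2
        have h4 : (2 : ℂ) • (x l + (1 : ℂ) • y) - (x l + (2 : ℂ) • y) = x l := by module
        rw [h4] at h3
        exact hIk.2 h3
      set x' := Function.update x l (x l + t • y) with hx'
      have hx'ne : ∀ i, i ≠ l → x' i = x i := fun i hi => Function.update_of_ne hi _ _
      have hx'l : x' l = x l + t • y := Function.update_self _ _ _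
      have hA' : x' k ∈ E ⊔ Submodule.span ℂ (Set.image x' (T.erase k : Set ι)) := by
        apply X.claimA hk ham hb hamm hbm
        · intro i hi
          by_cases h : i = l
          · subst h; rw [hx'l]; exact (X.W i).add_mem (hx i) ((X.W i).smul_mem _ hy)
          · rw [hx'ne i h]; exact hx i
        · rw [← hins, IM_insert' (by simp)]
          have hc : ∀ i ∈ (T.erase k).erase l, x' i = x i := fun i hi => 
            hx'ne i (Finset.ne_of_mem_erase hi)
          refine ⟨hIk.1.congr hc, ?_⟩
          rw [image_congr_finset hc, hx'l]
          exact ht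
      have hA : x k ∈ E ⊔ Submodule.span ℂ (x '' (T.erase k : Set ι)) := 
        X.claimA hk ham hb hamm hbm (fun i _ => hx i) (hI k hk)
      rw [hx'ne k (Ne.symm hlk)] at hA'
      obtain ⟨g, hg⟩ := mem_sup_span_image.mp hA'
      have hsum : ∑ i ∈ T.erase k, g i • x' i = (∑ i ∈ T.erase k, g i • x i) + (g l * t) • y := by
        rw [← hins, Finset.sum_insert (by simp), Finset.sum_insert (by simp), hx'l, 
          Finset.sum_congr rfl fun i hi => by rw [hx'ne i (Finset.ne_of_mem_erase hi)]]
        module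
      have hgl : g l ≠ 0 := by
        intro h0
        have h1 : x k - ∑ i ∈ (T.erase k).erase l, g i • x i ∈ E' := by
          apply Submodule.mem_sup_left
          convert hg using 2
          rw [hsum, h0, zero_mul, zero_smul, add_zero, ← hins, Finset.sum_insert (by simp), h0, 
            zero_smul, zero_add, hins]
        have h2 := hI l hl
        have hins2 : insert k ((T.erase k).erase l) = T.erase l := by
          ext i; simp only [Finset.mem_insert, Finset.mem_erase]
          constructor
          · rintro (rfl | h)
            · exact ⟨Ne.symm hlk, hk⟩
            · exact ⟨h.1, h.2.2⟩
          · rintro ⟨h, h'⟩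
            by_cases hik : i = k
            · exact Or.inl hik
            · exact Or.inr ⟨h, hik, h'⟩
        rw [← hins2, IM_insert' (by simp)] at h2
        exact h2.2 (mem_sup_span_image.mpr ⟨g, h1⟩)
      set Y := E ⊔ Submodule.span ℂ (x '' (T.erase k : Set ι)) with hY
      have h3 : ∑ i ∈ T.erase k, g i • x i ∈ Y := 
        Submodule.mem_sup_right (mem_span_image_finset.mpr ⟨g, rfl⟩)
      have h4 : (g l * t) • y ∈ Y := by
        have h5 : (g l * t) • y = x k - ∑ i ∈ T.erase k, g i • x i - 
          (x k - ∑ i ∈ T.erase k, g i • x' i) := by rw [hsum]; module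
        rw [h5]
        exact Y.sub_mem (Y.sub_mem hA h3) (Submodule.mem_sup_left hg)
      exact (Y.smul_mem_iff (mul_ne_zero hgl ht0)).mp h4
  intro he
  obtain ⟨g, hg⟩ := mem_sup_span_image.mp (hle he)
  have h0 : ∀ i ∈ T.erase k, g i = 0 := by
    apply hI k hk g
    have : ∑ i ∈ T.erase k, g i • x i = (X.a1 - X.a0) - 
      (X.a1 - X.a0 - ∑ i ∈ T.erase k, g i • x i) := by module
    rw [this]
    exact Submodule.sub_mem _ (Submodule.mem_sup_right (Submodule.mem_span_singleton_self _))
      (Submodule.mem_sup_left hg)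
  rw [Finset.sum_eq_zero fun i hi => by rw [h0 i hi, zero_smul], sub_zero] at hg
  exact X.he hg

theorem Ctx.W_const (X : Ctx A T j E β) {i : ι} {c : V → ℂ} 
    (h1 : ∑ a ∈ A i, c a = 0) 
    (h3 : ∀ a, X.ℓ i a = X.m → c a = 0) (h : Module.Dual ℂ V) 
    (h0 : ∀ x ∈ X.W i, h x = 0) :
    ∑ a ∈ A i, c a * (h a) ^ 2 = 0 := by
  by_cases hb : ∃ b ∈ A i, X.ℓ i b ≠ X.m
  · obtain ⟨b, hb, hbm⟩ := hb
    have : ∀ a ∈ A i, c a * (h a) ^ 2 = c a * (h b) ^ 2 := by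
      intro a ha
      by_cases hm : X.ℓ i a = X.m
      · rw [h3 a hm, zero_mul, zero_mul]
      · have := h0 (a - b) (sub_mem_dU (Finset.mem_filter.mpr ⟨ha, hm⟩) 
          (Finset.mem_filter.mpr ⟨hb, hbm⟩))
        rw [map_sub, sub_eq_zero] at this
        rw [this]
    rw [Finset.sum_congr rfl this, ← Finset.sum_mul, h1, zero_mul]
  · push Not at hb
    exact Finset.sum_eq_zero fun a ha => by rw [h3 a (hb a ha), zero_mul]

theorem Ctx.dichotomy (X : Ctx A T j E β) {ht : Module.Dual ℂ V} (htE : ∀ x ∈ E, ht x = 0)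
    (htW : ∀ i ∈ T, ∀ x ∈ X.W i, ht x = 0) (hte : ht (X.a1 - X.a0) = 1) {k : ι} (hk : k ∈ T) 
    {am b : V} (ham : am ∈ A k) 
    (hb : b ∈ A k) (hamm : X.ℓ k am = X.m) (hbm : X.ℓ k b ≠ X.m) :
    ht (X.c - X.a0) - ht (am - b) * X.rm (X.c - X.a0) = 0 ∨ 
    ht (X.c - X.a0) - ht (am - b) * X.rm (X.c - X.a0) = 1 := by
  classical
  obtain ⟨x, hx, hI⟩ := X.exists_x
  have hIk := hI k hk
  have hfr := X.finrank1
  have hfr' := X.finrankE'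
  have hfrI := hIk.finrank_eq
  have hTc : (T.erase k).card + 1 = T.card := Finset.card_erase_add_one hk
  have hrmu : X.rm (am - b) = 1 := by
    rw [map_sub, X.rm_sub hk ham hb, if_pos hamm, if_neg hbm, sub_zero]
  set h := ht (am - b) with hh
  set ψ : Module.Dual ℂ V := ht - h • X.rm with hψ
  set τ := ht (X.c - X.a0) - h * X.rm (X.c - X.a0) with hτ
  have hψc : ψ (X.c - X.a0) = τ := rfl
  have hψe : ψ (X.a1 - X.a0) = 1 := by
    rw [hψ, LinearMap.sub_apply, LinearMap.smul_apply, 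
      X.rm_E (Submodule.mem_sup_right (Submodule.mem_span_singleton_self _)), hte]
    simp
  have hψE : ∀ x ∈ E, ψ x = 0 := fun x hx => by
    rw [hψ, LinearMap.sub_apply, LinearMap.smul_apply, X.rm_E (Submodule.mem_sup_left hx),
      htE x hx]; simp
  have hψW : ∀ i ∈ T, ∀ x ∈ X.W i, ψ x = 0 := fun i hi x hx => by
    rw [hψ, LinearMap.sub_apply, LinearMap.smul_apply, X.rm_W hi hx, htW i hi x hx]; simp
  have hψu : ψ (am - b) = 0 := by
    rw [hψ, LinearMap.sub_apply, LinearMap.smul_apply, hrmu, ← hh]; simp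
  set Y := E ⊔ Submodule.span ℂ (x '' (T.erase k : Set ι)) with hY
  have hEY : E ⊔ Submodule.span ℂ {X.a1 - X.a0} ⊔ Submodule.span ℂ (x '' (T.erase k : Set ι)) = 
      Y ⊔ Submodule.span ℂ {X.a1 - X.a0} := by rw [hY, sup_right_comm]
  rw [hEY] at hfrI
  have hYge := finrank_sup_span_singleton_le (E := Y) (x := X.a1 - X.a0)
  have hker : ∀ (w : Module.Dual ℂ V), (∀ x ∈ E, w x = 0) → 
      (∀ i ∈ T.erase k, w (x i) = 0) → ∀ z ∈ Y, w z = 0 := by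
    intro w w1 w2
    have : Y ≤ LinearMap.ker w := by
      refine sup_le w1 (Submodule.span_le.mpr ?_)
      rintro _ ⟨i, hi, rfl⟩
      exact w2 i hi
    exact this
  have hker2 : ∀ (w : Module.Dual ℂ V), (∀ x ∈ E, w x = 0) → 
      (∀ i ∈ T.erase k, w (x i) = 0) → w (am - b) = 0 → 
      ∀ z ∈ Y ⊔ Submodule.span ℂ {am - b}, w z = 0 := by
    intro w w1 w2 w3
    have : Y ⊔ Submodule.span ℂ {am - b} ≤ LinearMap.ker w := 
      sup_le (hker w w1 w2) ((Submodule.span_singleton_le_iff_mem _ _).mpr w3)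
    exact this
  have huY : am - b ∉ Y := by
    intro h
    have := hker X.rm (fun x hx => X.rm_E (Submodule.mem_sup_left hx)) 
      (fun i hi => X.rm_W (Finset.mem_of_mem_erase hi) (hx i)) _ h
    rw [hrmu] at this
    exact one_ne_zero this
  have hfF := finrank_sup_span_singleton_of_notMem huY
  have hψ0 : ψ ≠ 0 := by intro h; rw [h] at hψe; simp at hψe
  have hψx : ∀ i ∈ T.erase k, ψ (x i) = 0 := fun i hi => 
    hψW i (Finset.mem_of_mem_erase hi) _ (hx i)
  have hkerψ : LinearMap.ker ψ = Y ⊔ Submodule.span ℂ {am - b} := by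
    symm
    apply Submodule.eq_of_le_of_finrank_le
    · exact hker2 ψ hψE hψx hψu
    · have := Module.Dual.finrank_ker_add_one_of_ne_zero hψ0
      omega
  have hrep : ∀ i, ∃ c : V → ℂ, (∑ a ∈ A i, c a = 0 ∧ ∑ a ∈ A i, c a • a = x i ∧ 
      ∀ a, X.ℓ i a = X.m → c a = 0) := fun i => X.W_rep (hx i)
  choose cs hcs using hrep
  obtain ⟨cj, hcj1, hcj2⟩ := dU_rep3 X.ha1 X.hc X.ha0 (-τ) 1 (τ - 1)
  obtain ⟨cu, hcu1, hcu2⟩ := dU_rep3 ham hb hb 1 (-1) 0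
  have hrj : ∑ w ∈ A j, cj w • w = (-τ) • (X.a1 - X.a0) + (X.c - X.a0) := by
    rw [hcj2]; module
  have hcu2' : ∑ w ∈ A k, cu w • w = am - b := by rw [hcu2]; module
  have hψj : ψ ((-τ) • (X.a1 - X.a0) + (X.c - X.a0)) = 0 := by
    rw [map_add, map_smul, hψe, hψc, smul_eq_mul]; ring
  have hmem : (-τ) • (X.a1 - X.a0) + (X.c - X.a0) ∈ Y ⊔ Submodule.span ℂ {am - b} := by
    rw [← hkerψ]; exact hψj
  obtain ⟨y, hy, s, hs⟩ := mem_sup_span_singleton.mp hmem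
  obtain ⟨g, hg⟩ := mem_sup_span_image.mp hy
  have := X.hH.split2 X.hj hk cj cu cs 1 (-s) (fun i => - g i) ψ ?_ ?_ ?_ hψE ?_ ?_ ?_ ?_ ?_
  · have hz : ∑ i ∈ T.erase k, - g i * ∑ a ∈ A i, cs i a * (ψ a) ^ 2 = 0 := 
      Finset.sum_eq_zero fun i hi => by 
        rw [X.W_const (hcs i).1 (hcs i).2.2 ψ (hψW i (Finset.mem_of_mem_erase hi)), mul_zero]
    rw [hz] at this
    rw [hcj1 (fun a => (ψ a) ^ 2), hcu1 (fun a => (ψ a) ^ 2)] at this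
    rw [map_sub] at hψu hψe hψc
    have e1 : ψ X.a1 = ψ X.a0 + 1 := by linear_combination hψe
    have e2 : ψ X.c = ψ X.a0 + τ := by linear_combination hψc
    have e3 : ψ am = ψ b := by linear_combination hψu
    rw [e1, e2, e3] at this
    have h5 : τ * (τ - 1) = 0 := by linear_combination this
    rcases mul_eq_zero.mp h5 with h | h
    · exact Or.inl h
    · exact Or.inr (sub_eq_zero.mp h)
  · have := hcj1 (fun _ => 1)
    simp only [mul_one] at this; rw [this]; ring
  · have := hcu1 (fun _ => 1)
    simp only [mul_one] at this; rw [this]; ring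
  · exact fun i hi => (hcs i).1
  · rw [hrj]; exact hψj
  · rw [hcu2']; exact hψu
  · intro i hi; rw [(hcs i).2.1]; exact hψx i hi
  · rw [hrj, hcu2', Finset.sum_congr rfl fun i hi => by rw [(hcs i).2.1], hs]
    convert hg using 1
    simp only [neg_smul, Finset.sum_neg_distrib, one_smul]
    module
  · intro v' h1 h2 h3 h4
    refine ann_unique (F := Y ⊔ Submodule.span ℂ {am - b}) (by omega) hψ0 
      (hker2 ψ hψE hψx hψu) (hker2 v' h1 ?_ (hcu2' ▸ h3))
    intro i hi
    rw [← (hcs i).2.1]; exact h4 i hi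

theorem Ctx.newlabels (X : Ctx A T j E β) : ∃ (ρ : V →ₗ[ℂ] (Option β → ℂ)) 
    (ℓ : ι → V → Option β), LinearMap.ker ρ = E ∧ (∀ x, ∑ b, ρ x b = 0) ∧ 
    ∀ i ∈ T, ∀ a ∈ A i, ∀ a' ∈ A i, 
      ρ a - ρ a' = Pi.single (ℓ i a) 1 - Pi.single (ℓ i a') 1 := by
  classical
  obtain ⟨ht, htY, hte⟩ := exists_dual_one X.claimR
  have htE : ∀ x ∈ E, ht x = 0 := fun x hx => htY x (Submodule.mem_sup_left hx)
  have htW : ∀ i ∈ T, ∀ x ∈ X.W i, ht x = 0 := fun i hi x hx => 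
    htY x (Submodule.mem_sup_right ((le_biSup X.W hi) hx))
  set q : Module.Dual ℂ V := ht (X.c - X.a0) • X.rm - X.rm (X.c - X.a0) • ht with hq
  have hqE : ∀ x ∈ E, q x = 0 := fun x hx => by
    simp [hq, htE x hx, X.rm_E (Submodule.mem_sup_left hx)]
  have hqW : ∀ i ∈ T, ∀ x ∈ X.W i, q x = 0 := fun i hi x hx => by
    simp [hq, htW i hi x hx, X.rm_W hi hx]
  have hqe : q (X.a1 - X.a0) ≠ 0 := by
    have h1 := X.rm_E (Submodule.mem_sup_right (Submodule.mem_span_singleton_self (X.a1 - X.a0)))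
    rw [hq, LinearMap.sub_apply, LinearMap.smul_apply, LinearMap.smul_apply, h1, hte]
    have h2 : X.rm (X.c - X.a0) ≠ 0 := X.hm0
    rw [smul_zero, smul_eq_mul, mul_one, zero_sub]
    exact neg_ne_zero.mpr h2
  have hqu : ∀ i ∈ T, ∀ am ∈ A i, ∀ b ∈ A i, X.ℓ i am = X.m → X.ℓ i b ≠ X.m → 
      q (am - b) = 0 ∨ q (am - b) = 1 := by
    intro i hi am ham b hb h1 h2
    have hrmu : X.rm (am - b) = 1 := by
      rw [map_sub, X.rm_sub hi ham hb, if_pos h1, if_neg h2, sub_zero]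
    have h3 : q (am - b) = ht (X.c - X.a0) - ht (am - b) * X.rm (X.c - X.a0) := by
      rw [hq, LinearMap.sub_apply, LinearMap.smul_apply, LinearMap.smul_apply, hrmu]
      simp only [smul_eq_mul]; ring
    rw [h3]
    exact X.dichotomy htE htW hte hi ham hb h1 h2
  have hoff : ∀ i, ∃ b, i ∈ T → (b ∈ A i ∧ X.ℓ i b ≠ X.m) := by
    intro i
    by_cases hi : i ∈ T
    · obtain ⟨b, hb⟩ := X.exists_off hi
      exact ⟨b, fun _ => hb⟩
    · exact ⟨0, fun h => absurd h hi⟩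
  choose bb hbb using hoff
  let ρ : V →ₗ[ℂ] (Option β → ℂ) := LinearMap.pi fun o => 
    match o with
    | none => q
    | some b => if b = X.m then X.rm - q else (LinearMap.proj b).comp X.ρ
  let ℓ : ι → V → Option β := fun i a => if X.ℓ i a = X.m then 
    (if q (a - bb i) = 1 then none else some X.m) else some (X.ℓ i a)
  have hρn : ∀ x, ρ x none = q x := fun x => rfl
  have hρm : ∀ x, ρ x (some X.m) = X.rm x - q x := fun x => by simp [ρ]
  have hρb : ∀ x b, b ≠ X.m → ρ x (some b) = X.ρ x b := fun x b hb => by simp [ρ, hb]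
  have hsum : ∀ x, ∑ b, X.ρ x b = 0 := by
    let S : Module.Dual ℂ V := (∑ b, LinearMap.proj b : (β → ℂ) →ₗ[ℂ] ℂ).comp X.ρ
    have hS : ∀ x, S x = ∑ b, X.ρ x b := fun x => by simp [S]
    have h1 : E ⊔ Submodule.span ℂ {X.a1 - X.a0} ⊔ Ut A T ≤ LinearMap.ker S := by
      refine sup_le (fun x hx => ?_) (Ut_le.mpr fun i hi => ?_)
      · rw [← X.hker] at hx
        have : X.ρ x = 0 := hx
        simp [S, this]
      · rw [dU_le]
        intro a ha b hb
        rw [LinearMap.mem_ker, hS, map_sub, X.hℓ i hi a ha b hb]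
        simp
    rw [X.hIrrT.2.1] at h1
    intro x
    rw [← hS]
    exact h1 (Submodule.mem_top : x ∈ ⊤)
  refine ⟨ρ, ℓ, ?_, ?_, ?_⟩
  · apply le_antisymm
    · intro x hx
      have hx : ρ x = 0 := hx
      have h1 : q x = 0 := by rw [← hρn, hx]; rfl
      have h2 : X.rm x = 0 := by
        have := hρm x
        rw [hx, h1] at this
        simpa using this.symm
      have h3 : x ∈ LinearMap.ker X.ρ := by
        rw [LinearMap.mem_ker]
        ext b
        by_cases hb : b = X.m
        · subst hb; exact h2
        · rw [← hρb x b hb, hx]; rfl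
      rw [X.hker] at h3
      obtain ⟨y, hy, s, rfl⟩ := mem_sup_span_singleton.mp h3
      rw [map_add, hqE y hy, map_smul, zero_add, smul_eq_mul] at h1
      have hs : s = 0 := (mul_eq_zero.mp h1).resolve_right hqe
      simpa [hs] using hy
    · intro x hx
      rw [LinearMap.mem_ker]
      have h3 : x ∈ LinearMap.ker X.ρ := by rw [X.hker]; exact Submodule.mem_sup_left hx
      have h3 : X.ρ x = 0 := h3
      ext o
      rcases o with _ | b
      · exact hqE x hx
      · by_cases hb : b = X.m
        · subst hb; rw [hρm, hqE x hx, X.rm_E (Submodule.mem_sup_left hx)]; simp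
        · rw [hρb x b hb, h3]; rfl
  · intro x
    rw [Fintype.sum_option, ← hsum x, ← Finset.add_sum_erase _ _ (Finset.mem_univ X.m), 
      ← Finset.add_sum_erase _ _ (Finset.mem_univ X.m), hρm, hρn, 
      Finset.sum_congr rfl fun b hb => hρb x b (Finset.ne_of_mem_erase hb)]
    have : X.ρ x X.m = X.rm x := rfl
    rw [this]; ring
  · have key : ∀ i ∈ T, ∀ a ∈ A i, ρ a - ρ (bb i) = 
        Pi.single (ℓ i a) 1 - Pi.single (some (X.ℓ i (bb i))) 1 := by
      intro i hi a ha
      obtain ⟨hbA, hbm⟩ := hbb i hi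
      have hr := X.hℓ i hi a ha _ hbA
      have hrm := X.rm_sub hi ha hbA
      rw [if_neg hbm] at hrm
      by_cases hm : X.ℓ i a = X.m
      · rw [if_pos hm] at hrm
        have hq' := hqu i hi a ha _ hbA hm hbm
        by_cases hq1 : q (a - bb i) = 1
        · have hℓ' : ℓ i a = none := by simp only [ℓ, if_pos hm, hq1, if_true, if_false]
          rw [hℓ']
          rw [map_sub] at hq1
          ext o
          rcases o with _ | b
          · simp [hρn, hq1]
          · by_cases hb : b = X.m
            · subst hb
              simp only [Pi.sub_apply, hρm]
              rw [Pi.single_eq_of_ne (by simp), Pi.single_eq_of_ne (by simpa using Ne.symm hbm)]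
              linear_combination hrm - hq1
            · have := congrFun hr b
              simp only [Pi.sub_apply, hρb _ b hb] at this ⊢
              rw [this, hm]
              simp [Pi.single_apply, hb]
        · have hq0 : q (a - bb i) = 0 := hq'.resolve_right hq1
          have hℓ' : ℓ i a = some X.m := by simp only [ℓ, if_pos hm, hq1, if_true, if_false]
          rw [hℓ']
          rw [map_sub] at hq0
          ext o
          rcases o with _ | b
          · simp [hρn, hq0]
          · by_cases hb : b = X.m
            · subst hb
              simp only [Pi.sub_apply, hρm]
              rw [Pi.single_eq_same, Pi.single_eq_of_ne (by simpa using Ne.symm hbm)]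
              linear_combination hrm - hq0
            · have := congrFun hr b
              simp only [Pi.sub_apply, hρb _ b hb] at this ⊢
              rw [this, hm]
              simp [Pi.single_apply, hb]
      · rw [if_neg hm] at hrm
        have hℓ' : ℓ i a = some (X.ℓ i a) := by simp [ℓ, hm]
        have hq0 := hqW i hi (a - bb i) (sub_mem_dU (Finset.mem_filter.mpr ⟨ha, hm⟩) 
          (Finset.mem_filter.mpr ⟨hbA, hbm⟩))
        rw [hℓ']
        rw [map_sub] at hq0
        ext o
        rcases o with _ | b
        · simp [hρn, hq0]
        · by_cases hb : b = X.m
          · subst hb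
            simp only [Pi.sub_apply, hρm]
            rw [Pi.single_eq_of_ne (by simpa using Ne.symm hm), 
              Pi.single_eq_of_ne (by simpa using Ne.symm hbm)]
            linear_combination hrm - hq0
          · have := congrFun hr b
            simp only [Pi.sub_apply, hρb _ b hb] at this ⊢
            rw [this]
            simp [Pi.single_apply]
    intro i hi a ha a' ha'
    have h1 := key i hi a ha
    have h2 := key i hi a' ha'
    have : ρ a - ρ a' = (ρ a - ρ (bb i)) - (ρ a' - ρ (bb i)) := by abel
    rw [this, h1, h2]; abel

end ClaimR
end PartP7

section PartP8
open Module
section Combi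
variable {γ : Type*} [Fintype γ] [DecidableEq γ]

/-- The cubic form. -/
def FF (p q ν : γ → ℂ) : ℂ :=
  (∑ b, ν b * p b) * (∑ b, ν b * q b) * ((∑ b, ν b * p b) - (∑ b, ν b * q b))
    - (∑ b, ν b * q b) * (∑ b, ν b ^ 2 * p b) + (∑ b, ν b * p b) * (∑ b, ν b ^ 2 * q b)

theorem FF_combi {p q : γ → ℂ} (hF : ∀ ν, FF p q ν = 0) (hp : p ≠ 0) (hq : q ≠ 0) (hpq : p ≠ q)
    (sp : ∑ b, p b = 0) (sq : ∑ b, q b = 0) :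
    ∃ b1 b2 b3 : γ, p = Pi.single b1 1 - Pi.single b3 1 ∧ q = Pi.single b2 1 - Pi.single b3 1 ∧
      b1 ≠ b3 := by
  have hs1 : ∀ (f : γ → ℂ) (b : γ) (x : ℂ), ∑ b', (Pi.single b x : γ → ℂ) b' * f b' = x * f b := by
    intro f b x
    simp [Pi.single_apply, ite_mul]
  have e1 : ∀ b, p b * q b * (p b - q b) = 0 := by
    intro b
    have := hF (Pi.single b 1)
    have h2 : ∀ f : γ → ℂ, ∑ b', (Pi.single b (1:ℂ) : γ → ℂ) b' ^ 2 * f b' = f b := by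
      intro f; simp [Pi.single_apply, ite_mul, ite_pow]
    simp only [FF, hs1, h2] at this
    linear_combination this
  have ev2 : ∀ b c, b ≠ c → ∀ x y : ℂ, 
      (x * p b + y * p c) * (x * q b + y * q c) * ((x * p b + y * p c) - (x * q b + y * q c))
      - (x * q b + y * q c) * (x ^ 2 * p b + y ^ 2 * p c) + 
        (x * p b + y * p c) * (x ^ 2 * q b + y ^ 2 * q c) = 0 := by
    intro b c hbc x y
    have := hF (Pi.single b x + Pi.single c y)
    have h1 : ∀ f : γ → ℂ, ∑ b', (Pi.single b x + Pi.single c y : γ → ℂ) b' * f b' 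
        = x * f b + y * f c := by
      intro f; simp [add_mul, Finset.sum_add_distrib, Pi.single_apply, ite_mul]
    have h2 : ∀ f : γ → ℂ, ∑ b', (Pi.single b x + Pi.single c y : γ → ℂ) b' ^ 2 * f b' 
        = x ^ 2 * f b + y ^ 2 * f c := by
      intro f
      have : ∀ b', (Pi.single b x + Pi.single c y : γ → ℂ) b' ^ 2 * f b' = 
          (Pi.single b (x ^ 2) : γ → ℂ) b' * f b' + (Pi.single c (y ^ 2) : γ → ℂ) b' * f b' := by
        intro b'
        by_cases h : b' = b
        · subst h; simp [Pi.single_apply, hbc]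
        · by_cases h' : b' = c
          · subst h'; simp [Pi.single_apply, h]
          · simp [Pi.single_apply, h, h']
      rw [Finset.sum_congr rfl fun b' _ => this b', Finset.sum_add_distrib, hs1, hs1]
    simp only [FF, h1, h2] at this
    linear_combination this
  have e2 : ∀ b c, b ≠ c → p b ^ 2 * q c + 2 * p b * p c * q b - p c * q b ^ 2 
      - 2 * p b * q b * q c - q c * p b + p c * q b = 0 := by
    intro b c hbc
    have h1 := ev2 b c hbc 1 1
    have h2 := ev2 b c hbc 1 (-1)
    have h3 := e1 c
    linear_combination (h1 - h2) / 2 - h3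
  have e3 : ∀ b c d, b ≠ c → b ≠ d → c ≠ d → 
      p b * p c * q d + p b * p d * q c + p c * p d * q b - p b * q c * q d - p c * q b * q d 
        - p d * q b * q c = 0 := by
    intro b c d hbc hbd hcd
    have := hF (Pi.single b 1 + Pi.single c 1 + Pi.single d 1)
    have h1 : ∀ f : γ → ℂ, ∑ b', (Pi.single b 1 + Pi.single c 1 + Pi.single d 1: γ → ℂ) b' * f b' 
        = f b + f c + f d := by
      intro f; simp [add_mul, Finset.sum_add_distrib, Pi.single_apply, ite_mul]
    have h2 : ∀ f : γ → ℂ, ∑ b', (Pi.single b 1 + Pi.single c 1 + Pi.single d 1: γ → ℂ) b' ^ 2 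
        * f b' = f b + f c + f d := by
      intro f
      rw [← h1 f]
      refine Finset.sum_congr rfl fun b' _ => ?_
      by_cases h : b' = b
      · subst h; simp [Pi.single_apply, hbc, hbd]
      · by_cases h' : b' = c
        · subst h'; simp [Pi.single_apply, h, hcd]
        · by_cases h'' : b' = d
          · subst h''; simp [Pi.single_apply, h, h']
          · simp [Pi.single_apply, h, h', h'']
    simp only [FF, h1, h2] at this
    linear_combination (this - e1 b - e1 c - e1 d - e2 b c hbc - e2 b d hbd - e2 c d hcd 
      - e2 c b hbc.symm - e2 d b hbd.symm - e2 d c hcd.symm) / 2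
  obtain ⟨cp, hcp⟩ := Function.ne_iff.mp hp
  obtain ⟨cq, hcq⟩ := Function.ne_iff.mp hq
  obtain ⟨cr, hcr⟩ := Function.ne_iff.mp hpq
  simp only [Pi.zero_apply] at hcp hcq
  have t1 : ∀ b, q b = 0 → p b ≠ 0 → p b = 1 := by
    intro b h1 h2
    have := e2 b cq (by rintro rfl; exact hcq h1)
    rw [h1] at this
    have h3 : (q cq * p b) * (p b - 1) = 0 := by linear_combination this
    have := (mul_eq_zero.mp h3).resolve_left (mul_ne_zero hcq h2)
    linear_combination this
  have t2 : ∀ b, p b = 0 → q b ≠ 0 → q b = 1 := by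
    intro b h1 h2
    have := e2 b cp (by rintro rfl; exact hcp h1)
    rw [h1] at this
    have h3 : (p cp * q b) * (q b - 1) = 0 := by linear_combination -this
    have := (mul_eq_zero.mp h3).resolve_left (mul_ne_zero hcp h2)
    linear_combination this
  have t3 : ∀ b, p b = q b → p b ≠ 0 → p b = -1 := by
    intro b h1 h2
    have := e2 b cr (by rintro rfl; exact hcr h1)
    rw [← h1] at this
    have h3 : ((p cr - q cr) * p b) * (p b + 1) = 0 := by linear_combination this
    have := (mul_eq_zero.mp h3).resolve_left (mul_ne_zero (sub_ne_zero.mpr hcr) h2)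
    linear_combination this
  set S1 := Finset.univ.filter fun b => q b = 0 ∧ p b ≠ 0 with hS1
  set S2 := Finset.univ.filter fun b => p b = 0 ∧ q b ≠ 0 with hS2
  set S3 := Finset.univ.filter fun b => p b = q b ∧ p b ≠ 0 with hS3
  have pv : ∀ b, p b = (if b ∈ S1 then 1 else 0) - (if b ∈ S3 then 1 else 0) := by
    intro b
    simp only [hS1, hS3, Finset.mem_filter, Finset.mem_univ, true_and]
    rcases mul_eq_zero.mp (e1 b) with h | h
    · rcases mul_eq_zero.mp h with h | h
      · simp [h]
      · by_cases h0 : p b = 0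
        · simp [h0]
        · simp [h, h0, t1 b h h0]
    · have h := sub_eq_zero.mp h
      by_cases h0 : p b = 0
      · simp [h0]
      · rw [t3 b h h0]; rw [t3 b h h0] at h; simp [← h]
  have qv : ∀ b, q b = (if b ∈ S2 then 1 else 0) - (if b ∈ S3 then 1 else 0) := by
    intro b
    simp only [hS2, hS3, Finset.mem_filter, Finset.mem_univ, true_and]
    rcases mul_eq_zero.mp (e1 b) with h | h
    · rcases mul_eq_zero.mp h with h | h
      · by_cases h0 : q b = 0
        · simp [h0, h]
        · simp [h, h0, t2 b h h0]
      · simp [h]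
    · have h := sub_eq_zero.mp h
      by_cases h0 : p b = 0
      · rw [h0] at h; simp [h0, ← h]
      · rw [← h, t3 b h h0]; simp
  have c13 : S1.card = S3.card := by
    have := sp
    rw [Finset.sum_congr rfl fun b _ => pv b] at this
    simp [Finset.sum_sub_distrib] at this
    exact_mod_cast sub_eq_zero.mp this
  have c23 : S2.card = S3.card := by
    have := sq
    rw [Finset.sum_congr rfl fun b _ => qv b] at this
    simp [Finset.sum_sub_distrib] at this
    exact_mod_cast sub_eq_zero.mp this
  have hpos : 0 < S3.card := by
    rw [Nat.pos_iff_ne_zero]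
    intro h0
    rw [h0] at c13
    apply hcp
    rw [pv, Finset.card_eq_zero.mp c13, Finset.card_eq_zero.mp h0]
    simp
  have hle : S1.card ≤ 1 := by
    rw [Finset.card_le_one]
    intro b hb c hc
    by_contra hbc
    obtain ⟨d, hd⟩ := Finset.card_pos.mp (c23 ▸ hpos)
    simp only [hS1, hS2, Finset.mem_filter, Finset.mem_univ, true_and] at hb hc hd
    have := e3 b c d hbc (by rintro rfl; exact hd.2 hb.1) (by rintro rfl; exact hd.2 hc.1)
    rw [hb.1, hc.1, hd.1, t1 b hb.1 hb.2, t1 c hc.1 hc.2, t2 d hd.1 hd.2] at this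
    norm_num at this
  obtain ⟨b1, hb1⟩ := Finset.card_eq_one.mp (show S1.card = 1 by omega)
  obtain ⟨b2, hb2⟩ := Finset.card_eq_one.mp (show S2.card = 1 by omega)
  obtain ⟨b3, hb3⟩ := Finset.card_eq_one.mp (show S3.card = 1 by omega)
  refine ⟨b1, b2, b3, ?_, ?_, ?_⟩
  · ext b; rw [pv b, hb1, hb3]; simp [Pi.single_apply]
  · ext b; rw [qv b, hb2, hb3]; simp [Pi.single_apply]
  · rintro rfl
    have h1 : b1 ∈ S1 := by simp [hb1]
    have h3 : b1 ∈ S3 := by simp [hb3]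
    simp only [hS1, hS3, Finset.mem_filter, Finset.mem_univ, true_and] at h1 h3
    exact h1.2 (h3.1.trans h1.1)

/-- Third difference. -/
theorem FF_third {p q ν0 ν1 : γ → ℂ} {t : ℂ} (ht : t ≠ 0) (h0 : FF p q ν0 = 0)
    (h1 : FF p q (ν0 + t • ν1) = 0) (h2 : FF p q (ν0 + (2 * t) • ν1) = 0) 
    (h3 : FF p q (ν0 + (3 * t) • ν1) = 0) : FF p q ν1 = 0 := by
  have hl : ∀ (s : ℂ) (f : γ → ℂ), ∑ b, (ν0 + s • ν1) b * f b = 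
      ∑ b, ν0 b * f b + s * ∑ b, ν1 b * f b := by
    intro s f
    rw [Finset.mul_sum, ← Finset.sum_add_distrib]
    exact Finset.sum_congr rfl fun b _ => by simp; ring
  have hl2 : ∀ (s : ℂ) (f : γ → ℂ), ∑ b, (ν0 + s • ν1) b ^ 2 * f b = 
      ∑ b, ν0 b ^ 2 * f b + 2 * s * (∑ b, ν0 b * ν1 b * f b) + s ^ 2 * ∑ b, ν1 b ^ 2 * f b := by
    intro s f
    rw [Finset.mul_sum, Finset.mul_sum, ← Finset.sum_add_distrib, ← Finset.sum_add_distrib]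
    exact Finset.sum_congr rfl fun b _ => by simp; ring
  have : 6 * t ^ 3 * FF p q ν1 = 0 := by
    simp only [FF, hl, hl2] at h0 h1 h2 h3 ⊢
    linear_combination h3 - 3 * h2 + 3 * h1 - h0
  exact (mul_eq_zero.mp this).resolve_left (by simpa using ht)

end Combi
end PartP8

section PartP9
open Module
section S0
variable {V : Type*} [AddCommGroup V] [Module ℂ V] [FiniteDimensional ℂ V] 
  {ι : Type*} [DecidableEq ι]
  {A : ι → Finset V} {T : Finset ι} {j : ι} {E : Submodule ℂ V} {γ : Type}
    [Fintype γ] [DecidableEq γ]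

theorem exists_coeff_dual (ρ : V →ₗ[ℂ] (γ → ℂ)) (v : Module.Dual ℂ V) 
    (hv : ∀ x ∈ LinearMap.ker ρ, v x = 0) : ∃ ν : γ → ℂ, ∀ x, v x = ∑ b, ν b * ρ x b := by
  have h : v ∈ LinearMap.range ρ.dualMap := by
    rw [LinearMap.range_dualMap_eq_dualAnnihilator_ker, Submodule.mem_dualAnnihilator]
    exact hv
  obtain ⟨f, hf⟩ := h
  refine ⟨fun b => f (Pi.single b 1), fun x => ?_⟩
  rw [← hf, LinearMap.dualMap_apply]
  conv_lhs => rw [← Finset.univ_sum_single (ρ x)]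
  rw [map_sum]
  refine Finset.sum_congr rfl fun b _ => ?_
  have : (Pi.single b (ρ x b) : γ → ℂ) = ρ x b • Pi.single b 1 := by
    ext c; simp [Pi.single_apply]
  rw [this, map_smul, smul_eq_mul, mul_comm]

/-- Functional attached to a coefficient vector. -/
def vv (ρ : V →ₗ[ℂ] (γ → ℂ)) (ν : γ → ℂ) : Module.Dual ℂ V :=
  (∑ b, ν b • LinearMap.proj b : (γ → ℂ) →ₗ[ℂ] ℂ).comp ρ

theorem vv_apply (ρ : V →ₗ[ℂ] (γ → ℂ)) (ν : γ → ℂ) (x : V) : vv ρ ν x = ∑ b, ν b * ρ x b := by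
  simp [vv]

theorem label_hess (ρ : V →ₗ[ℂ] (γ → ℂ)) {s : Finset V} {ℓ : V → γ}
    (hℓ : ∀ a ∈ s, ∀ a' ∈ s, ρ a - ρ a' = Pi.single (ℓ a) 1 - Pi.single (ℓ a') 1) 
    {c : V → ℂ} (hc : ∑ a ∈ s, c a = 0) (ν : γ → ℂ) (hv : vv ρ ν (∑ a ∈ s, c a • a) = 0) :
    ∑ a ∈ s, c a * (vv ρ ν a) ^ 2 = vv ρ (fun b => ν b ^ 2) (∑ a ∈ s, c a • a) := by
  rcases s.eq_empty_or_nonempty with rfl | ⟨o, ho⟩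
  · simp
  have h1 : ∀ (μ : γ → ℂ), ∀ a ∈ s, vv ρ μ a = vv ρ μ o + μ (ℓ a) - μ (ℓ o) := by
    intro μ a ha
    have h2 : vv ρ μ (a - o) = μ (ℓ a) - μ (ℓ o) := by
      rw [vv_apply, map_sub, hℓ a ha o ho]
      simp [mul_sub, Finset.sum_sub_distrib, Pi.single_apply]
    rw [map_sub] at h2
    linear_combination h2
  have h3 : ∀ μ : γ → ℂ, vv ρ μ (∑ a ∈ s, c a • a) = ∑ a ∈ s, c a * μ (ℓ a) := by
    intro μ
    have h4 : ∑ a ∈ s, c a * μ (ℓ a) = ∑ a ∈ s, (c a * vv ρ μ a) - 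
        (vv ρ μ o - μ (ℓ o)) * ∑ a ∈ s, c a := by
      rw [Finset.mul_sum, ← Finset.sum_sub_distrib]
      exact Finset.sum_congr rfl fun a ha => by rw [h1 μ a ha]; ring
    rw [h4, hc, map_sum]
    simp
  rw [h3] at hv ⊢
  have h5 : ∑ a ∈ s, c a * (vv ρ ν a) ^ 2 = ∑ a ∈ s, c a * ν (ℓ a) ^ 2 + 
      2 * (vv ρ ν o - ν (ℓ o)) * ∑ a ∈ s, c a * ν (ℓ a) + (vv ρ ν o - ν (ℓ o)) ^ 2 * ∑ a ∈ s, c a := by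
    rw [Finset.mul_sum, Finset.mul_sum, ← Finset.sum_add_distrib, ← Finset.sum_add_distrib]
    exact Finset.sum_congr rfl fun a ha => by rw [h1 ν a ha]; ring
  rw [h5, hv, hc]; ring

/-- The cubic relation at a single good functional. -/
theorem S0_point (hj : j ∉ T) (hT : T.Nonempty) (hfr : finrank ℂ E + T.card + 1 = finrank ℂ V)
    (hH : HRel A (insert j T) E) (ρ : V →ₗ[ℂ] (γ → ℂ)) (ℓ : ι → V → γ) 
    (hker : LinearMap.ker ρ = E) 
    (hℓ : ∀ i ∈ T, ∀ a ∈ A i, ∀ a' ∈ A i, 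
      ρ a - ρ a' = Pi.single (ℓ i a) 1 - Pi.single (ℓ i a') 1) (ν : γ → ℂ) (y : ι → V) 
    (hy : ∀ i, y i ∈ dU (A i)) (hyv : ∀ i ∈ T, vv ρ ν (y i) = 0) (hI : IM E T y) 
    (hv0 : vv ρ ν ≠ 0) {a0 a1 a2 : V} (ha0 : a0 ∈ A j) (ha1 : a1 ∈ A j) (ha2 : a2 ∈ A j) :
    FF (ρ (a1 - a0)) (ρ (a2 - a0)) ν = 0 := by
  classical
  set v := vv ρ ν with hv
  set P := v (a1 - a0) with hP
  set Q := v (a2 - a0) with hQ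
  have hvE : ∀ μ, ∀ x ∈ E, vv ρ μ x = 0 := by
    intro μ x hx
    rw [← hker] at hx
    have : ρ x = 0 := hx
    simp [vv_apply, this]
  set F := E ⊔ Submodule.span ℂ (y '' (T : Set ι)) with hF
  have hfF : finrank ℂ F = finrank ℂ E + T.card := hI.finrank_eq
  have hFle : ∀ w : Module.Dual ℂ V, (∀ x ∈ E, w x = 0) → (∀ i ∈ T, w (y i) = 0) → 
      ∀ x ∈ F, w x = 0 := by
    intro w w1 w2
    have : F ≤ LinearMap.ker w := by
      refine sup_le w1 (Submodule.span_le.mpr ?_)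
      rintro _ ⟨i, hi, rfl⟩
      exact w2 i hi
    exact this
  have hkerv : LinearMap.ker v = F := by
    symm
    apply Submodule.eq_of_le_of_finrank_le
    · exact hFle v (hvE ν) hyv
    · have := Module.Dual.finrank_ker_add_one_of_ne_zero hv0
      omega
  choose cs hcs1 hcs2 using fun i => dU_rep (hy i)
  obtain ⟨cj, hcj1, hcj2⟩ := dU_rep3 ha1 ha2 ha0 Q (-P) (P - Q)
  have hrj : ∑ w ∈ A j, cj w • w = Q • (a1 - a0) - P • (a2 - a0) := by
    rw [hcj2]; module
  have hvr : v (Q • (a1 - a0) - P • (a2 - a0)) = 0 := by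
    rw [map_sub, map_smul, map_smul, ← hP, ← hQ, smul_eq_mul, smul_eq_mul]; ring
  have hmem : Q • (a1 - a0) - P • (a2 - a0) ∈ F := by rw [← hkerv]; exact hvr
  obtain ⟨g, hg⟩ := mem_sup_span_image.mp hmem
  have := hH.split1 hj cj cs 1 (fun i => - g i) v ?_ (fun i _ => hcs1 i) (hvE ν) ?_ ?_ ?_ ?_
  · have h1 : ∀ i ∈ T, ∑ a ∈ A i, cs i a * (v a) ^ 2 = vv ρ (fun b => ν b ^ 2) (y i) := by
      intro i hi
      rw [hv, label_hess ρ (hℓ i hi) (hcs1 i) ν (by rw [hcs2 i]; exact hyv i hi), hcs2 i]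
    have h2 : ∑ i ∈ T, -g i * ∑ a ∈ A i, cs i a * (v a) ^ 2 = 
        - vv ρ (fun b => ν b ^ 2) (∑ i ∈ T, g i • y i) := by
      rw [map_sum, ← Finset.sum_neg_distrib]
      exact Finset.sum_congr rfl fun i hi => by rw [h1 i hi, map_smul, smul_eq_mul]; ring
    have h3 := hvE (fun b => ν b ^ 2) _ hg
    rw [map_sub, sub_eq_zero, map_sub, map_smul, map_smul] at h3
    rw [h2, ← h3, hcj1 (fun a => (v a) ^ 2)] at this
    have e1 : v a1 = v a0 + P := by rw [hP, map_sub]; ring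
    have e2 : v a2 = v a0 + Q := by rw [hQ, map_sub]; ring
    rw [e1, e2] at this
    rw [FF, ← vv_apply, ← vv_apply, ← hv, ← hP, ← hQ, 
      ← vv_apply ρ (fun b => ν b ^ 2) (a1 - a0), ← vv_apply ρ (fun b => ν b ^ 2) (a2 - a0)]
    simp only [smul_eq_mul] at this
    linear_combination this
  · have := hcj1 (fun _ => 1)
    simp only [mul_one] at this; rw [this]; ring
  · rw [hrj]; exact hvr
  · intro i hi; rw [hcs2]; exact hyv i hi
  · rw [hrj, Finset.sum_congr rfl fun i hi => by rw [hcs2 i]]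
    convert hg using 1
    simp only [neg_smul, Finset.sum_neg_distrib, one_smul]
    abel
  · intro v' h1 h2 h3
    exact ann_unique (F := F) (by omega) hv0 (hFle v (hvE ν) hyv) 
      (hFle v' h1 fun i hi => by rw [← hcs2 i]; exact h3 i hi)

theorem S0_general (hj : j ∉ T) (hT : T.Nonempty) (hIrr : Irr A (insert j T) E) :
    ∃ x x' : ι → V, (∀ i, x i ∈ dU (A i)) ∧ (∀ i, x' i ∈ dU (A i)) ∧ IM E T x ∧ 
      ∀ k ∈ T, x' k ∉ E ⊔ Submodule.span ℂ (x '' (T : Set ι)) := by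
  classical
  have := MR (V := V) (κ := ι ⊕ ι) (fun i => dU (A (Sum.elim id id i))) T 
    (T.map Function.Embedding.inl ∪ T.map Function.Embedding.inr)
    (fun k => insert (Sum.inr k) (T.map Function.Embedding.inl)) (fun _ => E) ?_ ?_
  · obtain ⟨x, hx, hI⟩ := this
    refine ⟨fun i => x (Sum.inl i), fun i => x (Sum.inr i), fun i => hx (Sum.inl i), 
      fun i => hx (Sum.inr i), ?_, ?_⟩
    · obtain ⟨k, hk⟩ := hT
      have h1 : IM E (T.map (Function.Embedding.inl : ι ↪ ι ⊕ ι)) x := 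
        (hI k hk).mono_set (Finset.subset_insert _ _)
      intro g hg i hi
      have h2 : ∑ o ∈ T.map (Function.Embedding.inl : ι ↪ ι ⊕ ι), 
          (Sum.elim g g : ι ⊕ ι → ℂ) o • x o ∈ E := by 
        rw [Finset.sum_map]; exact hg
      have h3 : (Sum.inl i : ι ⊕ ι) ∈ T.map (Function.Embedding.inl : ι ↪ ι ⊕ ι) := 
        Finset.mem_map.mpr ⟨i, hi, rfl⟩
      exact h1 _ h2 _ h3
    · intro k hk
      have h1 := ((IM_insert' (K := T.map (Function.Embedding.inl : ι ↪ ι ⊕ ι)) 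
        (by simp)).mp (hI k hk)).2
      have h2 : x '' (T.map (Function.Embedding.inl : ι ↪ ι ⊕ ι) : Set (ι ⊕ ι)) = 
          (fun i => x (Sum.inl i)) '' (T : Set ι) := by
        rw [Finset.coe_map, Set.image_image]; rfl
      rwa [h2] at h1
  · intro k hk
    rw [Finset.insert_subset_iff]
    exact ⟨by simp [hk], Finset.subset_union_left⟩
  · intro k hk I hI
    set J := I.image (Sum.elim id id : ι ⊕ ι → ι) with hJ
    have hJT : J ⊆ T := by
      intro i hi
      rw [hJ, Finset.mem_image] at hi
      obtain ⟨o, ho, rfl⟩ := hi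
      have := hI ho
      rcases o with o | o
      · simpa using this
      · have h : o = k := by simpa using this
        subst h; exact hk
    have hsup : (⨆ i ∈ I, dU (A (Sum.elim id id i))) = Ut A J := by
      rw [Ut, hJ, Finset.iSup_finset_image]
    rw [hsup]
    have hJi : J ⊆ insert j T := hJT.trans (Finset.subset_insert _ _)
    rcases I.eq_empty_or_nonempty with rfl | hne
    · simpa using Submodule.finrank_mono (le_sup_left : E ≤ E ⊔ Ut A J)
    have h1 := hIrr.1 J hJi (hne.image _) (by
      intro h
      exact hj (hJT (h ▸ Finset.mem_insert_self j T)))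
    have h2 : I.card ≤ J.card + 1 := by
      have h3 : (I.erase (Sum.inr k)).card ≤ J.card := by
        apply Finset.card_le_card_of_injOn (Sum.elim id id)
        · intro o ho
          exact Finset.mem_image_of_mem _ (Finset.mem_of_mem_erase ho)
        · intro o ho o' ho' h
          have h4 := hI (Finset.mem_of_mem_erase ho)
          have h5 := hI (Finset.mem_of_mem_erase ho')
          rcases o with o | o <;> rcases o' with o' | o'
          · simpa using h
          · exact absurd (by simpa using h5) (Finset.ne_of_mem_erase ho')
          · exact absurd (by simpa using h4) (Finset.ne_of_mem_erase ho)
          · exact absurd (by simpa using h4) (Finset.ne_of_mem_erase ho)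
      have := Finset.pred_card_le_card_erase (s := I) (a := Sum.inr k)
      omega
    omega

theorem IM_of_det {x : ι → V} (φ : ι → Module.Dual ℂ V) (hφ : ∀ i ∈ T, ∀ z ∈ E, φ i z = 0)
    (hdet : (Matrix.of fun (k i : T) => φ k (x i)).det ≠ 0) : IM E T x := by
  intro g hg
  have h1 : (Matrix.of fun (k i : T) => φ k (x i)).mulVec (fun i : T => g i) = 0 := by
    ext k
    have h2 := hφ k k.2 _ hg
    rw [map_sum, ← Finset.sum_coe_sort] at h2
    rw [Matrix.mulVec, dotProduct]
    simp only [map_smul, smul_eq_mul] at h2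
    rw [Pi.zero_apply, ← h2]
    exact Finset.sum_congr rfl fun i _ => by simp [mul_comm]
  have h3 := Matrix.eq_zero_of_mulVec_eq_zero hdet h1
  intro i hi
  exact congrFun h3 ⟨i, hi⟩

theorem S0_all (hj : j ∉ T) (hT : T.Nonempty) (hIrr : Irr A (insert j T) E)
    (hH : HRel A (insert j T) E) (ρ : V →ₗ[ℂ] (γ → ℂ)) (ℓ : ι → V → γ) 
    (hker : LinearMap.ker ρ = E) 
    (hℓ : ∀ i ∈ T, ∀ a ∈ A i, ∀ a' ∈ A i, 
      ρ a - ρ a' = Pi.single (ℓ i a) 1 - Pi.single (ℓ i a') 1) 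
    {a0 a1 a2 : V} (ha0 : a0 ∈ A j) (ha1 : a1 ∈ A j) (ha2 : a2 ∈ A j) (ν1 : γ → ℂ) :
    FF (ρ (a1 - a0)) (ρ (a2 - a0)) ν1 = 0 := by
  classical
  have hfr : finrank ℂ E + T.card + 1 = finrank ℂ V := by
    have := hIrr.2.2
    rw [Finset.card_insert_of_notMem hj] at this
    omega
  obtain ⟨x, x', hx, hx', hI, hI'⟩ := S0_general hj hT hIrr
  set F := E ⊔ Submodule.span ℂ (x '' (T : Set ι)) with hF
  have hfF : finrank ℂ F = finrank ℂ E + T.card := hI.finrank_eq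
  obtain ⟨k0, hk0⟩ := hT
  obtain ⟨v0, hv0F, hv01⟩ := exists_dual_one (hI' k0 hk0)
  have hv00 : v0 ≠ 0 := by rintro rfl; simp at hv01
  have hkerv : LinearMap.ker v0 = F := by
    symm
    apply Submodule.eq_of_le_of_finrank_le hv0F
    have := Module.Dual.finrank_ker_add_one_of_ne_zero hv00
    omega
  have hv0x' : ∀ k ∈ T, v0 (x' k) ≠ 0 := by
    intro k hk h
    apply hI' k hk
    rw [← hkerv]; exact h
  have hv0x : ∀ k ∈ T, v0 (x k) = 0 := fun k hk => 
    hv0F _ (Submodule.mem_sup_right (Submodule.subset_span ⟨k, hk, rfl⟩))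
  obtain ⟨ν0, hν0⟩ := exists_coeff_dual ρ v0 (fun z hz => hv0F z (Submodule.mem_sup_left (hker ▸ hz)))
  have hvv0 : vv ρ ν0 = v0 := by ext z; rw [vv_apply, hν0]
  -- dual functionals
  have hφ : ∀ k, ∃ φ : Module.Dual ℂ V, k ∈ T → ((∀ z ∈ E, φ z = 0) ∧ 
      (∀ i ∈ T, i ≠ k → φ (x i) = 0) ∧ φ (x k) = 1) := by
    intro k
    by_cases hk : k ∈ T
    · have hI2 := hI
      rw [← Finset.insert_erase hk, IM_insert' (by simp)] at hI2
      obtain ⟨φ, h1, h2⟩ := exists_dual_one hI2.2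
      refine ⟨φ, fun _ => ⟨fun z hz => h1 z (Submodule.mem_sup_left hz), fun i hi hik => ?_, h2⟩⟩
      exact h1 _ (Submodule.mem_sup_right (Submodule.subset_span 
        ⟨i, by simp [hi, hik], rfl⟩))
    · exact ⟨0, fun h => absurd h hk⟩
  choose φ hφ using hφ
  let xs : ℂ → ι → V := fun s i => vv ρ (ν0 + s • ν1) (x' i) • x i - vv ρ (ν0 + s • ν1) (x i) • x' i
  have hvs : ∀ s z, vv ρ (ν0 + s • ν1) z = v0 z + s * vv ρ ν1 z := by
    intro s z
    rw [hν0 z, vv_apply, vv_apply, Finset.mul_sum, ← Finset.sum_add_distrib]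
    exact Finset.sum_congr rfl fun b _ => by simp; ring
  let D : ℂ → ℂ := fun s => (Matrix.of fun (k i : T) => φ k (xs s i)).det
  have hDc : Continuous D := by
    apply Continuous.matrix_det
    apply continuous_matrix
    intro k i
    simp only [Matrix.of_apply, xs, map_sub, map_smul, hvs, smul_eq_mul]
    fun_prop
  have hD0 : D 0 ≠ 0 := by
    have : (Matrix.of fun (k i : T) => φ k (xs 0 i)) = 
        Matrix.diagonal fun i : T => v0 (x' i) := by
      ext k i
      simp only [Matrix.of_apply, xs, map_sub, map_smul, hvs, smul_eq_mul, zero_mul, add_zero, 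
        hv0x i i.2, sub_zero]
      by_cases h : k = i
      · subst h; rw [Matrix.diagonal_apply_eq, (hφ k k.2).2.2, mul_one]
      · rw [Matrix.diagonal_apply_ne _ h, (hφ k k.2).2.1 i i.2 (fun h' => h (Subtype.ext h'.symm)), 
          mul_zero]
    simp only [D]
    rw [this, Matrix.det_diagonal]
    exact Finset.prod_ne_zero_iff.mpr fun i _ => hv0x' i i.2
  have hev : ∀ᶠ s in nhds (0 : ℂ), D s ≠ 0 := hDc.continuousAt.eventually_ne hD0
  obtain ⟨δ, hδ, hball⟩ := Metric.eventually_nhds_iff.mp hev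
  have hgood : ∀ s, D s ≠ 0 → FF (ρ (a1 - a0)) (ρ (a2 - a0)) (ν0 + s • ν1) = 0 := by
    intro s hs
    have hIs : IM E T (xs s) := IM_of_det φ (fun i hi => (hφ i hi).1) hs
    apply S0_point hj ⟨k0, hk0⟩ hfr hH ρ ℓ hker hℓ (ν0 + s • ν1) (xs s) _ _ hIs _ ha0 ha1 ha2
    · intro i
      exact (dU (A i)).sub_mem ((dU (A i)).smul_mem _ (hx i)) ((dU (A i)).smul_mem _ (hx' i))
    · intro i hi
      simp only [xs, map_sub, map_smul, smul_eq_mul]; ring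
    · intro h
      have h1 := hIs (fun i => if i = k0 then 1 else 0) (by
        have : ∑ i ∈ T, (if i = k0 then (1:ℂ) else 0) • xs s i = 0 := 
          Finset.sum_eq_zero fun i _ => by simp [xs, h]
        rw [this]; exact E.zero_mem) k0 hk0
      simp at h1
  set t : ℂ := ((δ / 4 : ℝ) : ℂ) with ht
  have htn : ‖t‖ = δ / 4 := by
    rw [ht, Complex.norm_real, Real.norm_of_nonneg (by positivity)]
  have ht0 : t ≠ 0 := by
    rw [← norm_pos_iff, htn]; positivity
  refine FF_third (ν0 := ν0) (t := t) ht0 ?_ (hgood _ (hball ?_)) (hgood _ (hball ?_)) 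
    (hgood _ (hball ?_))
  · have := hgood 0 hD0
    simpa using this
  · rw [dist_zero_right, htn]; linarith
  · rw [dist_zero_right, norm_mul, htn]; norm_num; linarith
  · rw [dist_zero_right, norm_mul, htn]; norm_num; linarith

theorem extension {β : Type} [Fintype β] [DecidableEq β] (X : Ctx A T j E β) : 
    Lin A (insert j T) E := by
  classical
  obtain ⟨ρ, ℓ, hker, hsum, hℓ⟩ := X.newlabels
  have hFF : ∀ a1 ∈ A j, ∀ a2 ∈ A j, ρ (a1 - X.a0) ≠ 0 → ρ (a2 - X.a0) ≠ 0 → 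
      ρ (a1 - X.a0) ≠ ρ (a2 - X.a0) → ∃ b1 b2 b3, 
      ρ (a1 - X.a0) = Pi.single b1 1 - Pi.single b3 1 ∧ 
      ρ (a2 - X.a0) = Pi.single b2 1 - Pi.single b3 1 ∧ b1 ≠ b3 := by
    intro a1 ha1 a2 ha2 h1 h2 h3
    exact FF_combi (fun ν => S0_all X.hj X.hT X.hIrr X.hH ρ ℓ hker hℓ X.ha0 ha1 ha2 ν) h1 h2 h3 
      (hsum _) (hsum _)
  have hp0 : ρ (X.a1 - X.a0) ≠ 0 := fun h => X.he (hker.le (LinearMap.mem_ker.mpr h))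
  have hcE : X.c - X.a0 ∉ E ⊔ Submodule.span ℂ {X.a1 - X.a0} := by
    rw [← X.hker, LinearMap.mem_ker]
    intro h
    exact X.hm0 (by rw [h]; rfl)
  have hq0 : ρ (X.c - X.a0) ≠ 0 := fun h => 
    hcE (Submodule.mem_sup_left (hker.le (LinearMap.mem_ker.mpr h)))
  have hpq : ρ (X.a1 - X.a0) ≠ ρ (X.c - X.a0) := by
    intro h
    apply hcE
    have h1 : (X.c - X.a0) - (X.a1 - X.a0) ∈ E := by
      refine hker.le (LinearMap.mem_ker.mpr ?_)
      rw [map_sub, h, sub_self]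
    have := Submodule.add_mem_sup h1 (Submodule.mem_span_singleton_self (R := ℂ) (X.a1 - X.a0))
    simpa using this
  obtain ⟨b1, b2, b3, hb1, hb2, hb13⟩ := hFF _ X.ha1 _ X.hc hp0 hq0 hpq
  have hall : ∀ a, ∃ o, a ∈ A j → ρ (a - X.a0) = Pi.single o 1 - Pi.single b3 1 := by
    intro a
    by_cases ha : a ∈ A j
    swap
    · exact ⟨b3, fun h => absurd h ha⟩
    by_cases h0 : ρ (a - X.a0) = 0
    · exact ⟨b3, fun _ => by rw [h0, sub_self]⟩
    by_cases h1 : ρ (X.a1 - X.a0) = ρ (a - X.a0)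
    · exact ⟨b1, fun _ => by rw [← h1, hb1]⟩
    obtain ⟨c1, c2, c3, hc1, hc2, hc13⟩ := hFF _ X.ha1 _ ha hp0 h0 h1
    refine ⟨c2, fun _ => ?_⟩
    have h3 : c3 = b3 := by
      by_contra hne
      have := congrFun (hb1.symm.trans hc1) c3
      simp [Pi.single_apply, hne, Ne.symm hc13] at this
      by_cases h : c3 = b1
      · subst h; simp at this; norm_num at this
      · simp [h] at this
    rw [hc2, h3]
  choose o ho using hall
  refine ⟨Option β, inferInstance, inferInstance, ρ, fun i a => if i = j then o a else ℓ i a, 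
    ?_, hker, ?_⟩
  · rw [Fintype.card_option, X.hcard, Finset.card_insert_of_notMem X.hj]
  · intro i hi a ha a' ha'
    rcases Finset.mem_insert.mp hi with rfl | hi2
    · have h1 := ho a ha
      have h2 := ho a' ha'
      simp only [if_true]
      have : ρ a - ρ a' = ρ (a - X.a0) - ρ (a' - X.a0) := by simp only [map_sub]; abel
      rw [this, h1, h2]; abel
    · have hij : i ≠ j := by rintro rfl; exact X.hj hi2
      simp only [if_neg hij]
      exact hℓ i hi2 a ha a' ha'

end S0
end PartP9

section PartP10
open Module
section Loop
variable {V : Type*} [AddCommGroup V] [Module ℂ V] [FiniteDimensional ℂ V] {ι : Type*}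
  [DecidableEq ι]

theorem lin_sum {A : ι → Finset V} {T : Finset ι} {E : Submodule ℂ V} {β : Type} [Fintype β]
    [DecidableEq β] (hI : Irr A T E) {ρ : V →ₗ[ℂ] (β → ℂ)} {ℓ : ι → V → β}
    (hker : LinearMap.ker ρ = E)
    (hℓ : ∀ i ∈ T, ∀ a ∈ A i, ∀ a' ∈ A i, 
      ρ a - ρ a' = Pi.single (ℓ i a) 1 - Pi.single (ℓ i a') 1) (x : V) : ∑ b, ρ x b = 0 := by
  let S : Module.Dual ℂ V := (∑ b, LinearMap.proj b : (β → ℂ) →ₗ[ℂ] ℂ).comp ρ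
  have hS : ∀ x, S x = ∑ b, ρ x b := fun x => by simp [S]
  have h1 : E ⊔ Ut A T ≤ LinearMap.ker S := by
    refine sup_le (fun x hx => ?_) (Ut_le.mpr fun i hi => ?_)
    · rw [← hker] at hx
      have : ρ x = 0 := hx
      simp [S, this]
    · rw [dU_le]
      intro a ha b hb
      rw [LinearMap.mem_ker, hS, map_sub, hℓ i hi a ha b hb]
      simp
  rw [hI.2.1] at h1
  rw [← hS]
  exact h1 (Submodule.mem_top : x ∈ ⊤)

theorem step_lin {A : ι → Finset V} {T : Finset ι} {j : ι} {E : Submodule ℂ V} (hj : j ∉ T)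
    (hT : T.Nonempty) {a0 a1 : V} (ha0 : a0 ∈ A j) (ha1 : a1 ∈ A j) (he : a1 - a0 ∉ E)
    (hIrrT : Irr A T (E ⊔ Submodule.span ℂ {a1 - a0})) (hIrr : Irr A (insert j T) E)
    (hH : HRel A (insert j T) E) (hL : Lin A T (E ⊔ Submodule.span ℂ {a1 - a0})) :
    Lin A (insert j T) E := by
  classical
  obtain ⟨β, _, _, ρ, ℓ, hcard, hker, hℓ⟩ := hL
  have h1 := hIrr.1 {j} (by simp) (by simp) (by
    intro h
    obtain ⟨t, ht⟩ := hT
    have : t ∈ ({j} : Finset ι) := h ▸ Finset.mem_insert_of_mem ht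
    rw [Finset.mem_singleton] at this
    exact hj (this ▸ ht))
  rw [Ut_singleton, Finset.card_singleton] at h1
  have h2 : ∃ c ∈ A j, c - a0 ∉ E ⊔ Submodule.span ℂ {a1 - a0} := by
    by_contra! h
    have h3 : E ⊔ dU (A j) ≤ E ⊔ Submodule.span ℂ {a1 - a0} := by
      refine sup_le le_sup_left (dU_le.mpr fun a ha b hb => ?_)
      have := Submodule.sub_mem _ (h a ha) (h b hb)
      simpa using this
    have h4 := Submodule.finrank_mono h3
    have h5 := finrank_sup_span_singleton_le (E := E) (x := a1 - a0)
    omega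
  obtain ⟨c, hc, hcE⟩ := h2
  have hρc : ρ (c - a0) ≠ 0 := fun h => hcE (hker.le (LinearMap.mem_ker.mpr h))
  have hm : ∃ m, ρ (c - a0) m ≠ 0 ∧ ρ (c - a0) m ≠ 1 := by
    by_contra! h
    apply hρc
    have h01 : ∀ b, ρ (c - a0) b = ((if ρ (c - a0) b = 0 then 0 else 1 : ℕ) : ℂ) := by
      intro b
      by_cases hb : ρ (c - a0) b = 0
      · simp [hb]
      · simp [hb, h b hb]
    have hs := lin_sum hIrrT hker hℓ (c - a0)
    rw [Finset.sum_congr rfl fun b _ => h01 b, ← Nat.cast_sum, Nat.cast_eq_zero, 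
      Finset.sum_eq_zero_iff] at hs
    ext b
    have := hs b (Finset.mem_univ _)
    by_contra hb
    have hb' : ¬ (ρ (c - a0) b = 0) := hb
    rw [if_neg hb'] at this
    omega
  obtain ⟨m, hm0, hm1⟩ := hm
  exact extension (β := β) ⟨ρ, ℓ, a0, a1, c, m, hj, ha0, ha1, hc, hker, he, hcard, hℓ, hIrrT, 
    hIrr, hH, hT, hm0, hm1⟩

theorem lin_univ [Fintype ι] [Nonempty ι] {A : ι → Finset V} (hirr : Irr A Finset.univ ⊥)
    (hH : HRel A Finset.univ ⊥) : Lin A Finset.univ ⊥ := by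
  classical
  have key : ∀ k : ℕ, k + 1 ≤ Fintype.card ι → ∃ J : Finset ι, J.card = k + 1 ∧ 
      ∃ e : ι → V, (∀ i, i ∉ J → ∃ a ∈ A i, ∃ b ∈ A i, e i = a - b) ∧
      IM (⊥ : Submodule ℂ V) Jᶜ e ∧
      Irr A J (Submodule.span ℂ (e '' ((Jᶜ : Finset ι) : Set ι))) ∧
      Lin A J (Submodule.span ℂ (e '' ((Jᶜ : Finset ι) : Set ι))) := by
    intro k
    induction k with
    | zero =>
      intro _
      obtain ⟨e, h⟩ := base_step hirr hH (Classical.arbitrary ι)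
      exact ⟨{Classical.arbitrary ι}, by simp, e, h⟩
    | succ k ih =>
      intro hk
      obtain ⟨J, hJc, e, he, hI, hIrr, hL⟩ := ih (by omega)
      have hJne : J.Nonempty := by rw [← Finset.card_pos]; omega
      have hJu : J ≠ Finset.univ := by
        rintro rfl
        rw [Finset.card_univ] at hJc; omega
      obtain ⟨l, hl, e', he', hI', hsp, hel, hIrr'⟩ := growth hirr J hJne hJu e he hI hIrr
      refine ⟨insert l J, by rw [Finset.card_insert_of_notMem hl, hJc], e', ?_, ?_, hIrr', ?_⟩
      · intro i hi
        exact he' i fun h => hi (Finset.mem_insert_of_mem h)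
      · exact hI'.mono_set (by
          intro i hi
          rw [Finset.mem_compl] at hi ⊢
          exact fun h => hi (Finset.mem_insert_of_mem h))
      · obtain ⟨a, ha, b, hb, hab⟩ := he' l hl
        rw [hsp] at hIrr hL
        rw [hab] at hIrr hL hel
        exact step_lin hl hJne hb ha hel hIrr hIrr' (HRel_of hH _ e' fun i hi => 
          he' i fun h => hi (Finset.mem_insert_of_mem h)) hL
  have hpos : 0 < Fintype.card ι := Fintype.card_pos
  obtain ⟨J, hJ, e, -, -, -, hL⟩ := key (Fintype.card ι - 1) (by omega)
  have : J = Finset.univ := by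
    apply Finset.eq_univ_of_card; omega
  subst this
  simpa using hL

end Loop
end PartP10

section PartP11
open Module
section Lattice
variable {n : ℕ}

/-- The embedding of the lattice into `ℂⁿ`. -/
noncomputable def cx : (Fin n → ℤ) →ₗ[ℤ] (Fin n → ℂ) where
  toFun a := fun j => (a j : ℂ)
  map_add' a b := by ext j; simp
  map_smul' a b := by ext j; simp

theorem cx_apply (a : Fin n → ℤ) (j : Fin n) : cx a j = (a j : ℂ) := rfl

theorem cx_inj : Function.Injective (cx : (Fin n → ℤ) → (Fin n → ℂ)) := by
  intro a b h
  ext j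
  have := congrFun h j
  simpa [cx_apply] using this

/-- The complexified supports. -/
noncomputable def Ac (A : Fin n → Finset (Fin n → ℤ)) : Fin n → Finset (Fin n → ℂ) := 
  fun i => (A i).map ⟨cx, cx_inj⟩

theorem mem_Ac {A : Fin n → Finset (Fin n → ℤ)} {i : Fin n} {z : Fin n → ℂ} : 
    z ∈ Ac A i ↔ ∃ a ∈ A i, cx a = z := by simp [Ac]

theorem cx_mem_Ac {A : Fin n → Finset (Fin n → ℤ)} {i : Fin n} {a : Fin n → ℤ} (h : a ∈ A i) : 
    cx a ∈ Ac A i := mem_Ac.mpr ⟨a, h, rfl⟩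

/-- Integer span of differences. -/
def dZ (A : Fin n → Finset (Fin n → ℤ)) (I : Finset (Fin n)) : Submodule ℤ (Fin n → ℤ) :=
  Submodule.span ℤ {x | ∃ i ∈ I, ∃ a ∈ A i, ∃ b ∈ A i, x = a - b}

theorem trans_dZ (A : Fin n → Finset (Fin n → ℤ)) {I : Finset (Fin n)} {i : Fin n} (hi : i ∈ I) :
    TranslatesInto (A i) (dZ A I) := by
  rcases (A i).eq_empty_or_nonempty with h | ⟨b, hb⟩
  · exact ⟨0, by simp [h]⟩
  · exact ⟨b, fun a ha => Submodule.subset_span ⟨i, hi, a, ha, b, hb, rfl⟩⟩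

theorem dZ_top {A : Fin n → Finset (Fin n → ℤ)} (h : IsReducedTuple A) : 
    dZ A Finset.univ = ⊤ := by
  by_contra hne
  exact h ⟨_, hne, fun i => trans_dZ A (Finset.mem_univ i)⟩

theorem dZ_irr {A : Fin n → Finset (Fin n → ℤ)} (h : IsIrreducibleTuple A) {I : Finset (Fin n)}
    (hI : I.Nonempty) (hI' : I ≠ Finset.univ) : I.card + 1 ≤ finrank ℤ (dZ A I) := by
  by_contra hlt
  refine h ⟨I, dZ A I, hI.card_pos, ?_, by omega, fun i hi => trans_dZ A hi⟩
  have := Finset.card_lt_card (Finset.ssubset_univ_iff.mpr hI')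
  simpa using this

theorem cx_dZ {A : Fin n → Finset (Fin n → ℤ)} {I : Finset (Fin n)} {x : Fin n → ℤ} 
    (hx : x ∈ dZ A I) : cx x ∈ Ut (Ac A) I := by
  have : dZ A I ≤ (((Ut (Ac A) I).restrictScalars ℤ).comap cx) := by
    rw [dZ, Submodule.span_le]
    rintro _ ⟨i, hi, a, ha, b, hb, rfl⟩
    rw [SetLike.mem_coe, Submodule.mem_comap, map_sub]
    exact dU_le_Ut hi (sub_mem_dU (cx_mem_Ac ha) (cx_mem_Ac hb))
  exact this hx

theorem cx_li {κ : Type*} {v : κ → Fin n → ℤ} (h : LinearIndependent ℤ v) : 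
    LinearIndependent ℂ (fun k => cx (v k)) :=
  (linearIndependent_algebraMap_comp_iff (R := ℤ) (S := ℂ)).mpr h

theorem finrank_dZ_le (A : Fin n → Finset (Fin n → ℤ)) (I : Finset (Fin n)) : 
    finrank ℤ (dZ A I) ≤ finrank ℂ (Ut (Ac A) I) := by
  let b := Module.finBasis ℤ (dZ A I)
  have h1 : LinearIndependent ℤ (fun k => (b k : Fin n → ℤ)) := 
    b.linearIndependent.map' (dZ A I).subtype (by simp)
  have h2 := cx_li h1
  have h3 : LinearIndependent ℂ (fun k => (⟨cx (b k), cx_dZ (b k).2⟩ : Ut (Ac A) I)) := 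
    LinearIndependent.of_comp (Ut (Ac A) I).subtype h2
  simpa using h3.fintype_card_le_finrank

theorem Irr_Ac {A : Fin n → Finset (Fin n → ℤ)} (hr : IsReducedTuple A) 
    (h : IsIrreducibleTuple A) : Irr (Ac A) Finset.univ ⊥ := by
  refine ⟨fun I _ hI hI' => ?_, ?_, ?_⟩
  · have := dZ_irr h hI hI'
    have h2 := finrank_dZ_le A I
    rw [finrank_bot, bot_sup_eq]; omega
  · rw [bot_sup_eq]
    apply Submodule.eq_top_of_finrank_eq
    apply le_antisymm (Submodule.finrank_le _)
    have h2 := finrank_dZ_le A Finset.univ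
    rw [dZ_top hr, finrank_top] at h2
    simpa using h2
  · simp

theorem ess_of_lin {A : Fin n → Finset (Fin n → ℤ)} (hr : IsReducedTuple A) 
    (h : IsIrreducibleTuple A) (hL : Lin (Ac A) Finset.univ ⊥) : EssentiallyLinear A := by
  classical
  obtain ⟨β, _, _, ρ, ℓ, hcard, hker, hℓ⟩ := hL
  rw [Finset.card_univ, Fintype.card_fin] at hcard
  have hsum := lin_sum (Irr_Ac hr h) hker hℓ
  have hℓ' : ∀ i, ∀ a ∈ A i, ∀ b ∈ A i, ρ (cx a) - ρ (cx b) = 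
      Pi.single (ℓ i (cx a)) 1 - Pi.single (ℓ i (cx b)) 1 := fun i a ha b hb => 
    hℓ i (Finset.mem_univ _) _ (cx_mem_Ac ha) _ (cx_mem_Ac hb)
  -- integrality
  have h_integral : ∀ a : Fin n → ℤ, ∃ z : β → ℤ, ∀ b, ρ (cx a) b = (z b : ℂ) := by
    intro a
    have ha : a ∈ dZ A Finset.univ := by rw [dZ_top hr]; exact Submodule.mem_top
    induction ha using Submodule.span_induction with
    | mem x hx =>
      obtain ⟨i, -, a, ha, b, hb, rfl⟩ := hx
      refine ⟨Pi.single (ℓ i (cx a)) 1 - Pi.single (ℓ i (cx b)) 1, fun k => ?_⟩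
      rw [map_sub, map_sub, hℓ' i a ha b hb]
      simp [Pi.single_apply]
    | zero => exact ⟨0, by simp⟩
    | add x y _ _ hx hy =>
      obtain ⟨z, hz⟩ := hx
      obtain ⟨w, hw⟩ := hy
      exact ⟨z + w, fun b => by simp [hz, hw]⟩
    | smul c x _ hx =>
      obtain ⟨z, hz⟩ := hx
      refine ⟨c • z, fun b => ?_⟩
      rw [map_smul, ← Int.cast_smul_eq_zsmul ℂ, map_smul]
      simp [hz]
  choose ψ hψ using h_integral
  have hψadd : ∀ a b, ψ (a + b) = ψ a + ψ b := by
    intro a b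
    ext k
    have := hψ (a + b) k
    rw [map_add, map_add, Pi.add_apply, hψ, hψ] at this
    rw [Pi.add_apply]
    exact_mod_cast this.symm
  let Ψ : (Fin n → ℤ) →+ (β → ℤ) := AddMonoidHom.mk' ψ hψadd
  have hΨ : ∀ a b, ρ (cx a) b = (Ψ a b : ℂ) := hψ
  have hΨsum : ∀ a, ∑ b, Ψ a b = 0 := by
    intro a
    have := hsum (cx a)
    rw [Finset.sum_congr rfl fun b _ => hΨ a b] at this
    exact_mod_cast this
  have hΨinj : ∀ a, Ψ a = 0 → a = 0 := by
    intro a ha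
    have h1 : ρ (cx a) = 0 := by ext b; rw [hΨ, ha]; simp
    have h2 : cx a ∈ LinearMap.ker ρ := h1
    rw [hker, Submodule.mem_bot] at h2
    exact cx_inj (by rw [h2, map_zero])
  have hΨℓ : ∀ i, ∀ a ∈ A i, ∀ b ∈ A i, Ψ a - Ψ b = 
      Pi.single (ℓ i (cx a)) 1 - Pi.single (ℓ i (cx b)) 1 := by
    intro i a ha b hb
    ext k
    have := congrFun (hℓ' i a ha b hb) k
    rw [Pi.sub_apply, hΨ, hΨ] at this
    have h2 : ((Ψ a k - Ψ b k : ℤ) : ℂ) = 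
      (((Pi.single (ℓ i (cx a)) 1 - Pi.single (ℓ i (cx b)) 1 : β → ℤ) k : ℤ) : ℂ) := by
      push_cast
      rw [this]
      simp [Pi.single_apply]
    exact_mod_cast h2
  -- range of ρ is the sum zero space
  have hrange : ∀ z : β → ℂ, ∑ b, z b = 0 → ∃ x, ρ x = z := by
    let S : Module.Dual ℂ (β → ℂ) := ∑ b, LinearMap.proj b
    have hS : ∀ z, S z = ∑ b, z b := fun x => by simp [S]
    have hβ : Nonempty β := Fintype.card_pos_iff.mp (by omega)
    have hS0 : S ≠ 0 := by
      intro h0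
      have := hS (Pi.single (Classical.arbitrary β) 1)
      rw [h0] at this
      simp at this
    have h1 := Module.Dual.finrank_ker_add_one_of_ne_zero hS0
    have h2 := LinearMap.finrank_range_add_finrank_ker ρ
    rw [hker, finrank_bot] at h2
    have h3 : LinearMap.range ρ ≤ LinearMap.ker S := by
      rintro _ ⟨x, rfl⟩
      rw [LinearMap.mem_ker, hS, hsum]
    rw [Module.finrank_fintype_fun_eq_card] at h1 h2
    rw [Fintype.card_fin] at h2
    have h4 := Submodule.eq_of_le_of_finrank_eq h3 (by omega)
    intro z hz
    have : z ∈ LinearMap.range ρ := by rw [h4, LinearMap.mem_ker, hS, hz]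
    exact this
  have hβ : Nonempty β := Fintype.card_pos_iff.mp (by omega)
  obtain ⟨b0⟩ := hβ
  have hsurj : ∀ k, ∃ a, Ψ a = Pi.single k 1 - Pi.single b0 1 := by
    by_contra! hk
    obtain ⟨k, hk⟩ := hk
    let C : Finset β := Finset.univ.filter fun l => ∃ a, Ψ a = Pi.single l 1 - Pi.single b0 1
    let χ : Module.Dual ℂ (β → ℂ) := ∑ b ∈ C, LinearMap.proj b
    have hχs : ∀ l, χ (Pi.single l 1) = if l ∈ C then 1 else 0 := by
      intro l
      simp [χ, Pi.single_apply]
    have hb0 : b0 ∈ C := by simp only [C, Finset.mem_filter_univ]; exact ⟨0, by simp⟩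
    have hkC : k ∉ C := by simp only [C, Finset.mem_filter_univ]; push Not; exact hk
    have hC : ∀ i, ∀ a ∈ A i, ∀ b ∈ A i, ℓ i (cx a) ∈ C → ℓ i (cx b) ∈ C := by
      intro i a ha b hb hl
      simp only [C, Finset.mem_filter_univ] at hl ⊢
      obtain ⟨w, hw⟩ := hl
      refine ⟨w + b - a, ?_⟩
      have := hΨℓ i a ha b hb
      rw [map_sub, map_add, hw, add_sub_assoc, ← neg_sub (Ψ a), this]
      abel
    have h1 : (⊥ : Submodule ℂ (Fin n → ℂ)) ⊔ Ut (Ac A) Finset.univ ≤ LinearMap.ker (χ.comp ρ) := by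
      refine sup_le bot_le (Ut_le.mpr fun i hi => dU_le.mpr ?_)
      intro x hx y hy
      obtain ⟨a, ha, rfl⟩ := mem_Ac.mp hx
      obtain ⟨b, hb, rfl⟩ := mem_Ac.mp hy
      rw [LinearMap.mem_ker, LinearMap.comp_apply, map_sub, hℓ' i a ha b hb, map_sub, hχs, hχs]
      by_cases hl : ℓ i (cx a) ∈ C
      · rw [if_pos hl, if_pos (hC i a ha b hb hl), sub_self]
      · rw [if_neg hl, if_neg (fun h => hl (hC i b hb a ha h)), sub_self]
    rw [(Irr_Ac hr h).2.1] at h1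
    obtain ⟨x, hx⟩ := hrange (Pi.single k 1 - Pi.single b0 1) (by simp)
    have h2 : χ (ρ x) = 0 := h1 (Submodule.mem_top : x ∈ ⊤)
    rw [hx, map_sub, hχs, hχs, if_pos hb0, if_neg hkC] at h2
    norm_num at h2
  have hcard' : Fintype.card {b // b ≠ b0} = Fintype.card (Fin n) := by
    rw [Fintype.card_subtype_compl, hcard]; simp
  let σ : {b // b ≠ b0} ≃ Fin n := Fintype.equivOfCardEq hcard'
  let R : (β → ℤ) →+ (Fin n → ℤ) := 
    { toFun := fun z j => z (σ.symm j)
      map_zero' := rfl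
      map_add' := fun _ _ => rfl }
  have hR : ∀ z j, R z j = z (σ.symm j) := fun _ _ => rfl
  have hRb0 : R (Pi.single b0 1) = 0 := by
    ext j
    rw [hR, Pi.single_eq_of_ne (σ.symm j).2]; rfl
  have hRk : ∀ j, R (Pi.single (σ.symm j : β) 1) = Pi.single j 1 := by
    intro j
    ext k
    rw [hR, Pi.single_apply, Pi.single_apply]
    by_cases hkj : k = j
    · simp [hkj]
    · rw [if_neg hkj, if_neg]
      intro h
      exact hkj (σ.symm.injective (Subtype.ext h))
  have hRsimp : ∀ b, R (Pi.single b 1) ∈ stdSimplexVertices n := by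
    intro b
    by_cases hb : b = b0
    · rw [hb, hRb0]; exact Set.mem_insert _ _
    · refine Set.mem_insert_of_mem _ ⟨σ ⟨b, hb⟩, ?_⟩
      show Pi.single _ _ = _
      rw [← hRk]; simp
  have hbij : Function.Bijective (R.comp Ψ) := by
    constructor
    · rw [injective_iff_map_eq_zero]
      intro a ha
      apply hΨinj
      have h1 : ∀ b, b ≠ b0 → Ψ a b = 0 := by
        intro b hb
        have := congrFun ha (σ ⟨b, hb⟩)
        simpa [hR] using this
      ext b
      by_cases hb : b = b0
      · have := hΨsum a
        rw [Finset.sum_eq_single b0 (fun b _ hb => h1 b hb) (by simp)] at this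
        rw [hb, this]; rfl
      · exact h1 b hb
    · rw [← AddMonoidHom.range_eq_top, eq_top_iff]
      intro y _
      rw [← Finset.univ_sum_single y]
      refine AddSubgroup.sum_mem _ fun j _ => ?_
      have : (Pi.single j (y j) : Fin n → ℤ) = y j • Pi.single j 1 := by
        rw [← Pi.single_smul]; simp
      rw [this]
      apply AddSubgroup.zsmul_mem
      obtain ⟨a, ha⟩ := hsurj (σ.symm j)
      refine ⟨a, ?_⟩
      rw [AddMonoidHom.comp_apply, ha, map_sub, hRb0, hRk, sub_zero]
  let φ := AddEquiv.ofBijective (R.comp Ψ) hbij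
  have hv : ∀ i, ∃ v : Fin n → ℤ, ∀ a ∈ A i, φ a + v ∈ stdSimplexVertices n := by
    intro i
    rcases (A i).eq_empty_or_nonempty with h0 | ⟨b, hb⟩
    · exact ⟨0, by simp [h0]⟩
    refine ⟨R (Pi.single (ℓ i (cx b)) 1) - R (Ψ b), fun a ha => ?_⟩
    have h1 : φ a = R (Ψ a) := rfl
    have h2 := hΨℓ i a ha b hb
    have h3 : R (Ψ a) = R (Ψ b) + (R (Pi.single (ℓ i (cx a)) 1) - R (Pi.single (ℓ i (cx b)) 1)) := by
      rw [← map_sub, ← h2, map_sub]; abel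
    rw [h1, h3]
    convert hRsimp (ℓ i (cx a)) using 1
    abel
  choose v hv using hv
  exact ⟨φ, v, hv⟩

theorem not_HRel {A : Fin n → Finset (Fin n → ℤ)} (hr : IsReducedTuple A) 
    (h : IsIrreducibleTuple A) (hlin : ¬ EssentiallyLinear A) : 
    ¬ HRel (Ac A) Finset.univ ⊥ := by
  intro hH
  apply hlin
  rcases Nat.eq_zero_or_pos n with rfl | hn
  · exact ⟨AddEquiv.refl _, 0, fun i => i.elim0⟩
  · haveI : Nonempty (Fin n) := ⟨⟨0, hn⟩⟩
    exact ess_of_lin hr h (lin_univ (Irr_Ac hr h) hH)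

end Lattice
end PartP11

section PartQ1
open Module
section Dim

theorem quot_dim_le {R : Type*} [CommRing R] {I J : Ideal R} (h : I ≤ J) : 
    ringKrullDim (R ⧸ J) ≤ ringKrullDim (R ⧸ I) :=
  ringKrullDim_le_of_surjective (Ideal.Quotient.factor h) (Ideal.Quotient.factor_surjective h)

theorem height_C {B : Type*} [CommRing B] [IsNoetherianRing B] [IsJacobsonRing B]
    (P : Ideal (Polynomial B)) [P.IsMaximal] : 
    (P.comap Polynomial.C).IsMaximal ∧ P.height = (P.comap Polynomial.C).height + 1 := by
  haveI : P.LiesOver (P.comap Polynomial.C) := ⟨rfl⟩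
  exact ⟨Polynomial.isMaximal_comap_C_of_isJacobsonRing P, 
    Polynomial.height_eq_height_add_one (P.comap Polynomial.C) P⟩

theorem height_max_mvpoly (σ : Type) [Finite σ] : ∀ (M : Ideal (MvPolynomial σ ℂ)), M.IsMaximal → 
    M.height = (Nat.card σ : ℕ∞) := by
  induction σ using Finite.induction_empty_option with
  | of_equiv e H =>
    intro M hM
    rw [← Nat.card_congr e]
    let f := (MvPolynomial.renameEquiv ℂ e).toRingEquiv
    rw [← f.height_comap M]
    exact H _ (Ideal.comap_isMaximal_of_equiv f)
  | h_empty =>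
    intro M hM
    have hF : IsField (MvPolynomial PEmpty ℂ) := 
      (MvPolynomial.isEmptyRingEquiv ℂ PEmpty).toMulEquiv.isField (Field.toIsField ℂ)
    letI := hF.toField
    have : M = ⊥ := (Ideal.eq_bot_or_top M).resolve_right hM.ne_top
    rw [this]; simp
  | h_option IH =>
    intro M hM
    rename_i α _
    let f := (MvPolynomial.optionEquivLeft ℂ α).toRingEquiv
    rw [← f.symm.height_comap M]
    haveI : (M.comap f.symm).IsMaximal := Ideal.comap_isMaximal_of_equiv f.symm
    set P := M.comap f.symm with hP
    obtain ⟨h1, h2⟩ := height_C P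
    rw [h2, IH _ h1]
    simp

theorem principal_of_disjoint {B : Type*} [CommRing B] [IsDomain B] [UniqueFactorizationMonoid B]
    (P : Ideal (Polynomial B)) [hP : P.IsPrime] (hd : ∀ b : B, Polynomial.C b ∈ P → b = 0)
    (hne : P ≠ ⊥) : ∃ f, f ≠ 0 ∧ P = Ideal.span {f} := by
  classical
  have h1 : ∃ d, ∃ f ∈ P, f ≠ 0 ∧ f.natDegree = d := by
    obtain ⟨f, hf, h0⟩ := Submodule.exists_mem_ne_zero_of_ne_bot hne
    exact ⟨_, f, hf, h0, rfl⟩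
  obtain ⟨f, hf, hf0, hfd⟩ := Nat.find_spec h1
  have hmin : ∀ g ∈ P, g ≠ 0 → f.natDegree ≤ g.natDegree := fun g hg h0 => 
    hfd ▸ Nat.find_min' h1 ⟨g, hg, h0, rfl⟩
  obtain ⟨s, hs, hsa⟩ := UniqueFactorizationMonoid.exists_prime_factors f hf0
  have hsP : s.prod ∈ P := by
    obtain ⟨u, hu⟩ := hsa.symm
    rw [← hu]; exact P.mul_mem_right _ hf
  obtain ⟨p, hps, hpP⟩ := (hP.multiset_prod_mem_iff_exists_mem s).mp hsP
  have hpp := hs p hps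
  have hpf : p ∣ f := (Multiset.dvd_prod hps).trans hsa.dvd
  have hpmin : ∀ g ∈ P, g ≠ 0 → p.natDegree ≤ g.natDegree := fun g hg h0 => 
    (Polynomial.natDegree_le_of_dvd hpf hf0).trans (hmin g hg h0)
  refine ⟨p, hpp.ne_zero, le_antisymm ?_ (by rwa [Ideal.span_singleton_le_iff_mem])⟩
  have hpos : 0 < p.natDegree := by
    by_contra h
    have h2 := Polynomial.eq_C_of_natDegree_eq_zero (by omega : p.natDegree = 0)
    have h3 := hd (p.coeff 0) (h2 ▸ hpP)
    rw [h3, map_zero] at h2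
    exact hpp.ne_zero h2
  have key : ∀ d, ∀ g ∈ P, g.natDegree = d → p ∣ g := by
    intro d
    induction d using Nat.strong_induction_on with
    | _ d ih =>
      intro g hg hgd
      by_cases hg0 : g = 0
      · rw [hg0]; exact dvd_zero _
      have hle := hpmin g hg hg0
      have hlt := Polynomial.natDegree_cancelLeads_lt_of_natDegree_le_natDegree hle (by omega)
      have hcP : p.cancelLeads g ∈ P := by
        rw [Polynomial.cancelLeads]
        exact P.sub_mem (P.mul_mem_left _ hg) (P.mul_mem_left _ hpP)
      have hdv := ih _ (hgd ▸ hlt) _ hcP rfl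
      rw [Polynomial.cancelLeads, dvd_sub_left (Dvd.intro_left _ rfl)] at hdv
      rw [Nat.sub_eq_zero_of_le hle, pow_zero, mul_one] at hdv
      refine (hpp.dvd_or_dvd hdv).resolve_left fun h => ?_
      have := hd _ (P.mem_of_dvd h hpP)
      exact hpp.ne_zero (Polynomial.leadingCoeff_eq_zero.mp this)
  intro g hg
  exact Ideal.mem_span_singleton.mpr (key _ g hg rfl)

theorem dim_lower_poly (σ : Type) [Finite σ] (J : Ideal (Polynomial (MvPolynomial σ ℂ)))
    (hJ : ∀ b, Polynomial.C b ∈ J → b = 0) : 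
    ((Nat.card σ : ℕ) : WithBot ℕ∞) ≤ ringKrullDim (Polynomial (MvPolynomial σ ℂ) ⧸ J) := by
  obtain ⟨P, hP, hJP, hdis⟩ := Ideal.exists_le_prime_disjoint (I := J)
    ((nonZeroDivisors (MvPolynomial σ ℂ)).map (Polynomial.C)) (by
      rw [Set.disjoint_left]
      rintro _ hx ⟨b, hb, rfl⟩
      exact nonZeroDivisors.ne_zero hb (hJ b hx))
  have hd : ∀ b, Polynomial.C b ∈ P → b = 0 := by
    intro b hb
    by_contra h0
    exact Set.disjoint_left.mp hdis hb ⟨b, mem_nonZeroDivisors_of_ne_zero h0, rfl⟩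
  refine le_trans ?_ (quot_dim_le hJP)
  by_cases h0 : P = ⊥
  · subst h0
    rw [ringKrullDim_eq_of_ringEquiv (RingEquiv.quotientBot _)]
    simp
    exact_mod_cast Nat.le_succ _
  · obtain ⟨f, hf0, hPf⟩ := principal_of_disjoint P hd h0
    obtain ⟨M, hM, hPM⟩ := P.exists_le_maximal hP.ne_top
    have hfM : f ∈ M := hPM (hPf ▸ Ideal.mem_span_singleton_self f)
    have h1 := Ideal.height_le_ringKrullDim_quotient_add_one hfM
    have h2 : M.height = (Nat.card σ : ℕ∞) + 1 := by
      obtain ⟨h1, h2⟩ := height_C M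
      rw [h2, height_max_mvpoly σ _ h1]
    rw [h2, ← hPf] at h1
    generalize ringKrullDim (Polynomial (MvPolynomial σ ℂ) ⧸ P) = r at h1
    induction r using WithBot.recBotCoe with
    | bot => simp at h1
    | coe r =>
      norm_cast at h1 ⊢
      induction r using ENat.recTopCoe with
      | top => simp
      | coe r => norm_cast at h1 ⊢; omega

theorem dim_lower {ι : Type} [Fintype ι] [DecidableEq ι] (k0 : ι) (I : Ideal (MvPolynomial ι ℂ))
    (hI : ∀ p : MvPolynomial {k // k ≠ k0} ℂ, MvPolynomial.rename Subtype.val p ∈ I → p = 0) :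
    ((Fintype.card ι - 1 : ℕ) : WithBot ℕ∞) ≤ ringKrullDim (MvPolynomial ι ℂ ⧸ I) := by
  let e := (MvPolynomial.renameEquiv ℂ (Equiv.optionSubtypeNe k0).symm).trans 
    (MvPolynomial.optionEquivLeft ℂ {k // k ≠ k0})
  have he : ∀ p : MvPolynomial {k // k ≠ k0} ℂ, e (MvPolynomial.rename Subtype.val p) = 
      Polynomial.C p := by
    intro p
    have h : (e.toAlgHom).comp (MvPolynomial.rename Subtype.val) = 
        Polynomial.CAlgHom := by
      apply MvPolynomial.algHom_ext
      intro i
      have h2 : (Equiv.optionSubtypeNe k0).symm i.1 = some i := Equiv.optionSubtypeNe_symm_of_ne i.2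
      show MvPolynomial.optionEquivLeft ℂ {k // k ≠ k0} (MvPolynomial.rename 
        (Equiv.optionSubtypeNe k0).symm (MvPolynomial.rename Subtype.val (MvPolynomial.X i))) = _
      rw [MvPolynomial.rename_X, MvPolynomial.rename_X, h2, MvPolynomial.optionEquivLeft_X_some]
      rfl
    exact DFunLike.congr_fun h p
  let J := I.map (e.toRingEquiv : MvPolynomial ι ℂ →+* Polynomial (MvPolynomial {k // k ≠ k0} ℂ))
  have h1 := dim_lower_poly {k // k ≠ k0} J (by
    intro b hb
    apply hI
    rw [← he] at hb
    have h2 := (Ideal.mem_map_of_equiv e.toRingEquiv _).mp hb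
    obtain ⟨x, hx, hxe⟩ := h2
    rwa [← e.injective hxe])
  rw [← ringKrullDim_eq_of_ringEquiv (Ideal.quotientEquiv I J e.toRingEquiv rfl)] at h1
  convert h1 using 2
  rw [Nat.card_eq_fintype_card, Fintype.card_subtype_compl, Fintype.card_subtype_eq]

theorem dim_upper {ι : Type} [Fintype ι] (I : Ideal (MvPolynomial ι ℂ)) (hι : 0 < Fintype.card ι)
    (g : MvPolynomial ι ℂ) (hg : g ≠ 0) (hgI : g ∈ I) : 
    ringKrullDim (MvPolynomial ι ℂ ⧸ I) ≤ ((Fintype.card ι - 1 : ℕ) : WithBot ℕ∞) := by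
  have h0 : Ideal.span {g} ≤ I := by rwa [Ideal.span_singleton_le_iff_mem]
  refine (quot_dim_le h0).trans ?_
  have h1 := ringKrullDim_quotient_succ_le_of_nonZeroDivisor (mem_nonZeroDivisors_of_ne_zero hg)
  rw [MvPolynomial.ringKrullDim_of_isNoetherianRing, ringKrullDim_eq_zero_of_field, zero_add, 
    Nat.card_eq_fintype_card] at h1
  generalize ringKrullDim (MvPolynomial ι ℂ ⧸ Ideal.span {g}) = r at h1
  induction r using WithBot.recBotCoe with
  | bot => simp
  | coe r =>
    norm_cast at h1 ⊢
    induction r using ENat.recTopCoe with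
    | top => simp at h1
    | coe r =>
      norm_cast at h1
      have h2 : r ≤ Fintype.card ι - 1 := by omega
      exact Nat.cast_le.mpr h2

end Dim
end PartQ1

section PartQ2
open Module
section Upper

theorem alg_dvd {ι τ : Type} [Fintype ι] [Fintype τ] (hc : Fintype.card ι = Fintype.card τ)
    (Φ : ι → MvPolynomial τ ℂ) (D : MvPolynomial τ ℂ) (hD : D ≠ 0) :
    ∃ g : MvPolynomial ι ℂ, g ≠ 0 ∧ D ∣ MvPolynomial.aeval Φ g := by
  by_cases hΦ : AlgebraicIndependent ℂ Φ
  · have hb : IsTranscendenceBasis ℂ Φ := by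
      apply AlgebraicIndependent.isTranscendenceBasis_of_trdeg_le_of_finite hΦ
      rw [MvPolynomial.trdeg_of_isDomain]
      simp [hc]
    have := hb.isAlgebraic
    obtain ⟨r, hr, hdvd⟩ := (Algebra.IsAlgebraic.isAlgebraic
      (R := Algebra.adjoin ℂ (Set.range Φ)) D).exists_nonzero_dvd (mem_nonZeroDivisors_of_ne_zero hD)
    obtain ⟨r, hr'⟩ := r
    have h2 := hr'
    rw [Algebra.adjoin_range_eq_range_aeval] at h2
    obtain ⟨g, hg⟩ := h2
    refine ⟨g, ?_, ?_⟩
    · rintro rfl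
      apply hr
      ext1
      simpa using hg.symm
    · have : MvPolynomial.aeval Φ g = r := hg
      rw [this]; exact hdvd
  · rw [algebraicIndependent_iff] at hΦ
    push Not at hΦ
    obtain ⟨g, hg, h0⟩ := hΦ
    exact ⟨g, h0, hg ▸ dvd_zero _⟩

end Upper
end PartQ2

section PartQ3
open Module
section Upper2
variable {n : ℕ} {A : Fin n → Finset (Fin n → ℤ)}

theorem mono_ne (a : Fin n → ℤ) (x : Torus n) : mono a x ≠ 0 := by
  unfold mono
  exact Finset.prod_ne_zero_iff.mpr fun j _ => zpow_ne_zero _ (x j).ne_zero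

theorem mono_sub (a b : Fin n → ℤ) (x : Torus n) : mono (a - b) x = mono a x * (mono b x)⁻¹ := by
  unfold mono
  rw [← Finset.prod_inv_distrib, ← Finset.prod_mul_distrib]
  refine Finset.prod_congr rfl fun j _ => ?_
  rw [Pi.sub_apply, zpow_sub₀ (x j).ne_zero, div_eq_mul_inv]

/-- Non-base indices. -/
abbrev NB (A : Fin n → Finset (Fin n → ℤ)) (bs : ∀ i, {a // a ∈ A i}) := 
  {k : CIdx A // k.2 ≠ bs k.1}

/-- Generic point of the hyperplane of coefficients with zero sum. -/
noncomputable def hP (bs : ∀ i, {a // a ∈ A i}) (k : CIdx A) :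
    MvPolynomial (NB A bs ⊕ Fin n) ℂ :=
  if h : k.2 ≠ bs k.1 then MvPolynomial.X (Sum.inl ⟨k, h⟩) else
    -∑ a : {a // a ∈ A k.1}, if h' : a ≠ bs k.1 then MvPolynomial.X (Sum.inl ⟨⟨k.1, a⟩, h'⟩) else 0

theorem eval_hP (bs : ∀ i, {a // a ∈ A i}) (Y : CIdx A → ℂ) (x : Fin n → ℂ)
    (hY : ∀ i, ∑ a : {a // a ∈ A i}, Y ⟨i, a⟩ = 0) (k : CIdx A) :
    MvPolynomial.eval (Sum.elim (fun k : NB A bs => Y k.1) x) (hP bs k) = Y k := by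
  unfold hP
  split_ifs with h
  · simp
  · push Not at h
    have h1 : ∀ a : {a // a ∈ A k.1}, MvPolynomial.eval (Sum.elim (fun k : NB A bs => Y k.1) x) 
        (if h' : a ≠ bs k.1 then MvPolynomial.X (Sum.inl ⟨⟨k.1, a⟩, h'⟩) else 0) = 
        if a = bs k.1 then 0 else Y ⟨k.1, a⟩ := by
      intro a
      split_ifs <;> simp_all
    rw [map_neg, map_sum, Finset.sum_congr rfl fun a _ => h1 a]
    have h2 := hY k.1
    rw [← Finset.add_sum_erase _ _ (Finset.mem_univ (bs k.1))] at h2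
    rw [← Finset.add_sum_erase _ _ (Finset.mem_univ (bs k.1)), if_pos rfl, zero_add,
      Finset.sum_congr rfl fun a ha => if_neg (Finset.ne_of_mem_erase ha)]
    have h3 : Y k = Y ⟨k.1, bs k.1⟩ := by rw [← h]
    rw [h3]
    linear_combination -h2

theorem card_NB (bs : ∀ i, {a // a ∈ A i}) : 
    Fintype.card (CIdx A) = Fintype.card (NB A bs ⊕ Fin n) := by
  have e : {k : CIdx A // ¬ (k.2 ≠ bs k.1)} ≃ Fin n := 
    { toFun := fun k => k.1.1
      invFun := fun i => ⟨⟨i, bs i⟩, by simp⟩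
      left_inv := by
        rintro ⟨⟨i, a⟩, h⟩
        simp only [ne_eq, not_not] at h
        subst h
        rfl
      right_inv := fun i => rfl }
  rw [← Fintype.card_congr (Equiv.sumCompl (fun k : CIdx A => k.2 ≠ bs k.1)), Fintype.card_sum,
    Fintype.card_sum, Fintype.card_congr e]

theorem exists_poly (hr : IsReducedTuple A) (hi : IsIrreducibleTuple A) : 
    ∃ g : MvPolynomial (CIdx A) ℂ, g ≠ 0 ∧ 
      ∀ c : Coeff A, (∃ x, IsSingularRoot A c x) → MvPolynomial.eval c g = 0 := by
  classical
  obtain ⟨e, he, hIM⟩ := edge_rado (Irr_Ac hr hi)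
  have he' : ∀ i, ∃ a : {a // a ∈ A i}, ∃ b : {a // a ∈ A i}, e i = cx a.1 - cx b.1 := by
    intro i
    obtain ⟨a, ha, b, hb, h⟩ := he i (Finset.mem_univ i)
    obtain ⟨a', ha', rfl⟩ := mem_Ac.mp ha
    obtain ⟨b', hb', rfl⟩ := mem_Ac.mp hb
    exact ⟨⟨a', ha'⟩, ⟨b', hb'⟩, h⟩
  choose bs b2 hb using he'
  let m : Fin n → ℤ := fun j => ∑ i, ∑ a ∈ A i, |a j|
  have hm : ∀ (k : CIdx A) j, 0 ≤ m j - k.2.1 j := by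
    rintro ⟨i, a, ha⟩ j
    have h1 : |a j| ≤ ∑ a ∈ A i, |a j| := 
      Finset.single_le_sum (f := fun a : Fin n → ℤ => |a j|) (fun _ _ => abs_nonneg _) ha
    have h2 : ∑ a ∈ A i, |a j| ≤ m j := 
      Finset.single_le_sum (f := fun i => ∑ a ∈ A i, |a j|) 
        (fun _ _ => Finset.sum_nonneg fun _ _ => abs_nonneg _) (Finset.mem_univ i)
    have := le_abs_self (a j)
    simp only
    linarith
  let Φ : CIdx A → MvPolynomial (NB A bs ⊕ Fin n) ℂ := fun k => 
    hP bs k * ∏ j, MvPolynomial.X (Sum.inr j) ^ (m j - k.2.1 j).toNat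
  let M : Matrix (Fin n) (Fin n) (MvPolynomial (NB A bs ⊕ Fin n) ℂ) := Matrix.of fun i j =>
    ∑ a : {a // a ∈ A i}, hP bs ⟨i, a⟩ * MvPolynomial.C (a.1 j : ℂ)
  have evM : ∀ (Y : CIdx A → ℂ) (x : Fin n → ℂ)
    (hY : ∀ i, ∑ a : {a // a ∈ A i}, Y ⟨i, a⟩ = 0), 
      MvPolynomial.eval (Sum.elim (fun k : NB A bs => Y k.1) x) M.det = 
      (Matrix.of fun i j => ∑ a : {a // a ∈ A i}, Y ⟨i, a⟩ * (a.1 j : ℂ)).det := by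
    intro Y x hY
    rw [RingHom.map_det]
    congr 1
    ext i j
    simp only [M, RingHom.mapMatrix_apply, Matrix.map_apply, Matrix.of_apply, map_sum, map_mul,
      eval_hP bs Y x hY, MvPolynomial.eval_C]
  have hD : M.det ≠ 0 := by
    intro h0
    let Y : CIdx A → ℂ := fun k => (if k.2 = bs k.1 then 1 else 0) - (if k.2 = b2 k.1 then 1 else 0)
    have hY : ∀ i, ∑ a : {a // a ∈ A i}, Y ⟨i, a⟩ = 0 := by
      intro i
      simp [Y, Finset.sum_sub_distrib]
    have h1 := evM Y 0 hY
    rw [h0, map_zero] at h1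
    have h2 : (Matrix.of fun i j => ∑ a : {a // a ∈ A i}, Y ⟨i, a⟩ * (a.1 j : ℂ)) = Matrix.of e := by
      ext i j
      simp [Y, sub_mul, Finset.sum_sub_distrib, hb, cx_apply]
    rw [h2] at h1
    obtain ⟨g, hg, hg0⟩ := Matrix.exists_vecMul_eq_zero_iff.mpr h1.symm
    apply hg
    ext i
    refine hIM g ?_ i (Finset.mem_univ i)
    rw [Submodule.mem_bot]
    ext j
    have := congrFun hg0 j
    simpa [Matrix.vecMul, dotProduct] using this
  obtain ⟨g, hg, hdvd⟩ := alg_dvd (card_NB bs) Φ M.det hD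
  refine ⟨g, hg, ?_⟩
  rintro c ⟨x, hx, hdet⟩
  let Y : CIdx A → ℂ := fun k => c k * mono k.2.1 x * (mono m x)⁻¹
  have hY : ∀ i, ∑ a : {a // a ∈ A i}, Y ⟨i, a⟩ = 0 := by
    intro i
    have := hx i
    rw [evalAt, ← Finset.univ_eq_attach] at this
    simp only [Y]
    rw [← Finset.sum_mul, this, zero_mul]
  let pt : NB A bs ⊕ Fin n → ℂ := Sum.elim (fun k : NB A bs => Y k.1) (fun j => (x j : ℂ))
  have h1 : ∀ k, MvPolynomial.eval pt (Φ k) = c k := by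
    intro k
    simp only [Φ, map_mul, pt, eval_hP bs Y _ hY, map_prod, map_pow, MvPolynomial.eval_X, Sum.elim_inr]
    have : ∏ j, (x j : ℂ) ^ (m j - k.2.1 j).toNat = mono (m - k.2.1) x := by
      unfold mono
      refine Finset.prod_congr rfl fun j _ => ?_
      rw [← zpow_natCast, Int.toNat_of_nonneg (hm k j), Pi.sub_apply]
    rw [this, mono_sub]
    have h3 := mono_ne m x
    have h4 := mono_ne k.2.1 x
    simp only [Y]
    field_simp
  have h2 : MvPolynomial.eval pt M.det = 0 := by
    rw [evM Y _ hY]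
    have : (Matrix.of fun i j => ∑ a : {a // a ∈ A i}, Y ⟨i, a⟩ * (a.1 j : ℂ)) = 
        (mono m x)⁻¹ • (jacobian A c x * Matrix.diagonal fun j => (x j : ℂ)) := by
      ext i j
      rw [Matrix.smul_apply, Matrix.mul_diagonal]
      simp only [Matrix.of_apply, jacobian, Y]
      rw [inv_mul_cancel_right₀ (x j).ne_zero, smul_eq_mul, ← Finset.univ_eq_attach, Finset.mul_sum]
      refine Finset.sum_congr rfl fun a _ => ?_
      ring
    rw [this, Matrix.det_smul, Matrix.det_mul, hdet]
    simp
  obtain ⟨q, hq⟩ := hdvd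
  have h3 := congrArg (MvPolynomial.eval pt) hq
  rw [map_mul, h2, zero_mul] at h3
  have h4 : MvPolynomial.eval pt (MvPolynomial.aeval Φ g) = MvPolynomial.eval c g := by
    rw [MvPolynomial.aeval_def, MvPolynomial.eval₂_eq', MvPolynomial.eval_eq' c g, map_sum]
    simp [h1]
  rw [← h4, h3]

end Upper2
end PartQ3

section PartQ4
open Module
section Lower
variable {n : ℕ} {A : Fin n → Finset (Fin n → ℤ)}

/-- The pairing of a lattice point with a complex vector. -/
noncomputable def dt (a : Fin n → ℤ) (u : Fin n → ℂ) : ℂ := ∑ j, (a j : ℂ) * u j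

theorem dt_add (a : Fin n → ℤ) (u w : Fin n → ℂ) : dt a (u + w) = dt a u + dt a w := by
  simp [dt, mul_add, Finset.sum_add_distrib]

theorem dt_smul (a : Fin n → ℤ) (t : ℂ) (u : Fin n → ℂ) : dt a (t • u) = t * dt a u := by
  simp only [dt, Finset.mul_sum, Pi.smul_apply, smul_eq_mul]
  exact Finset.sum_congr rfl fun j _ => by ring

theorem dt_zero (a : Fin n → ℤ) : dt a 0 = 0 := by simp [dt]

theorem sum_Ac {M : Type*} [AddCommMonoid M] (i : Fin n) (F : (Fin n → ℂ) → M) : 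
    ∑ z ∈ Ac A i, F z = ∑ a : {a // a ∈ A i}, F (cx a.1) := by
  rw [Ac, Finset.sum_map, ← Finset.sum_coe_sort]
  rfl

theorem hess_data (hr : IsReducedTuple A) (hi : IsIrreducibleTuple A) (hl : ¬ EssentiallyLinear A) :
    ∃ (c : Coeff A) (l v : Fin n → ℂ), (∀ i, ∑ a : {a // a ∈ A i}, c ⟨i, a⟩ = 0) ∧
      (∀ i, ∑ a : {a // a ∈ A i}, c ⟨i, a⟩ * dt a.1 v = 0) ∧
      (∀ u, ∑ i, l i * ∑ a : {a // a ∈ A i}, c ⟨i, a⟩ * dt a.1 u = 0) ∧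
      (∀ v', (∀ i, ∑ a : {a // a ∈ A i}, c ⟨i, a⟩ * dt a.1 v' = 0) → ∃ s : ℂ, v' = s • v) ∧
      ∑ i, l i * ∑ a : {a // a ∈ A i}, c ⟨i, a⟩ * dt a.1 v ^ 2 ≠ 0 := by
  have h := not_HRel hr hi hl
  unfold HRel at h
  push Not at h
  obtain ⟨c, l, v, h1, -, h2, h3, h4, h5⟩ := h
  have dual : ∀ (v : Module.Dual ℂ (Fin n → ℂ)) (a : Fin n → ℤ), 
      v (cx a) = dt a (fun j => v (Pi.single j 1)) := by
    intro v a
    conv_lhs => rw [← Finset.univ_sum_single (cx a), map_sum]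
    refine Finset.sum_congr rfl fun j _ => ?_
    have : (Pi.single j (cx a j) : Fin n → ℂ) = (a j : ℂ) • Pi.single j 1 := by
      rw [← Pi.single_smul]; simp [cx_apply]
    rw [this, map_smul, smul_eq_mul]
  have app : ∀ (v : Module.Dual ℂ (Fin n → ℂ)) (i : Fin n), 
      v (∑ a ∈ Ac A i, c i a • a) = 
        ∑ a : {a // a ∈ A i}, c i (cx a.1) * dt a.1 (fun j => v (Pi.single j 1)) := by
    intro v i
    rw [map_sum, sum_Ac]
    refine Finset.sum_congr rfl fun a _ => ?_
    rw [map_smul, smul_eq_mul, dual]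
  let mk : (Fin n → ℂ) → Module.Dual ℂ (Fin n → ℂ) := fun u => 
    ∑ j, u j • LinearMap.proj j
  have hmk : ∀ u, (fun j => mk u (Pi.single j 1)) = u := by
    intro u
    ext j
    simp [mk, Pi.single_apply]
  refine ⟨fun k => c k.1 (cx k.2.1), l, fun j => v (Pi.single j 1), ?_, ?_, ?_, ?_, ?_⟩
  · intro i
    rw [← h1 i (Finset.mem_univ i), sum_Ac]
  · intro i
    rw [← h2 i (Finset.mem_univ i), app]
  · intro u
    rw [Submodule.mem_bot] at h3
    have := congrArg (mk u) h3
    rw [map_zero, map_sum] at this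
    rw [← this]
    refine Finset.sum_congr rfl fun i _ => ?_
    rw [map_smul, smul_eq_mul, app, hmk]
  · intro v' hv'
    obtain ⟨s, hs⟩ := h4 (mk v') (by intro x hx; rw [(Submodule.mem_bot ℂ).mp hx, map_zero])
      (by intro i _; rw [app, hmk]; exact hv' i)
    refine ⟨s, ?_⟩
    rw [← hmk v', hs]
    ext j
    simp
  · convert h5 using 3 with i hi
    rw [sum_Ac]
    refine Finset.sum_congr rfl fun a _ => ?_
    rw [dual]

theorem d1 (i : Fin n) (c c' : Coeff A) (u' : Fin n → ℂ) : 
    HasDerivAt (fun t : ℂ => ∑ a : {a // a ∈ A i}, 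
      (c ⟨i, a⟩ + t * c' ⟨i, a⟩) * Complex.exp (t * dt a.1 u'))
      (∑ a : {a // a ∈ A i}, (c' ⟨i, a⟩ + c ⟨i, a⟩ * dt a.1 u')) 0 := by
  apply HasDerivAt.fun_sum
  intro a _
  have e1 : HasDerivAt (fun t : ℂ => c ⟨i, a⟩ + t * c' ⟨i, a⟩) (c' ⟨i, a⟩) 0 := by
    simpa using ((hasDerivAt_id (0:ℂ)).mul_const (c' ⟨i, a⟩)).const_add (c ⟨i, a⟩)
  have e2 : HasDerivAt (fun t : ℂ => Complex.exp (t * dt a.1 u')) (dt a.1 u') 0 := by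
    simpa using ((hasDerivAt_id (0:ℂ)).mul_const (dt a.1 u')).cexp
  simpa using HasDerivAt.fun_mul e1 e2

theorem d2 (i : Fin n) (c c' : Coeff A) (u' v w' : Fin n → ℂ) : 
    HasDerivAt (fun t : ℂ => ∑ a : {a // a ∈ A i}, 
      (c ⟨i, a⟩ + t * c' ⟨i, a⟩) * Complex.exp (t * dt a.1 u') * (dt a.1 v + t * dt a.1 w'))
      (∑ a : {a // a ∈ A i}, ((c' ⟨i, a⟩ + c ⟨i, a⟩ * dt a.1 u') * dt a.1 v + c ⟨i, a⟩ * dt a.1 w')) 0 := by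
  apply HasDerivAt.fun_sum
  intro a _
  have e1 : HasDerivAt (fun t : ℂ => c ⟨i, a⟩ + t * c' ⟨i, a⟩) (c' ⟨i, a⟩) 0 := by
    simpa using ((hasDerivAt_id (0:ℂ)).mul_const (c' ⟨i, a⟩)).const_add (c ⟨i, a⟩)
  have e2 : HasDerivAt (fun t : ℂ => Complex.exp (t * dt a.1 u')) (dt a.1 u') 0 := by
    simpa using ((hasDerivAt_id (0:ℂ)).mul_const (dt a.1 u')).cexp
  have e3 : HasDerivAt (fun t : ℂ => dt a.1 v + t * dt a.1 w') (dt a.1 w') 0 := by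
    simpa using ((hasDerivAt_id (0:ℂ)).mul_const (dt a.1 w')).const_add (dt a.1 v)
  simpa using HasDerivAt.fun_mul (HasDerivAt.fun_mul e1 e2) e3

/-- The map whose fibres parametrise systems with a singular root. -/
noncomputable def FSing (A : Fin n → Finset (Fin n → ℤ)) (k0 : CIdx A) (j0 : Fin n) 
    (p : (Fin n → ℂ) × Coeff A × (Fin n → ℂ)) : 
    (Fin n → ℂ) × (Fin n → ℂ) × ℂ × ({k : CIdx A // k ≠ k0} → ℂ) :=
  (fun i => ∑ a : {a // a ∈ A i}, p.2.1 ⟨i, a⟩ * Complex.exp (dt a.1 p.1),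
   fun i => ∑ a : {a // a ∈ A i}, p.2.1 ⟨i, a⟩ * Complex.exp (dt a.1 p.1) * dt a.1 p.2.2,
   p.2.2 j0, fun k => p.2.1 k.1)

theorem FSing_contDiff (k0 : CIdx A) (j0 : Fin n) : ContDiff ℂ 1 (FSing A k0 j0) := by
  unfold FSing dt
  fun_prop

theorem FSing_line (k0 : CIdx A) (j0 : Fin n) (c c' : Coeff A) (u' v w' : Fin n → ℂ) (t : ℂ) : 
    FSing A k0 j0 ((0, c, v) + t • (u', c', w')) = 
    (fun i => ∑ a : {a // a ∈ A i}, (c ⟨i, a⟩ + t * c' ⟨i, a⟩) * Complex.exp (t * dt a.1 u'),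
     fun i => ∑ a : {a // a ∈ A i}, (c ⟨i, a⟩ + t * c' ⟨i, a⟩) * Complex.exp (t * dt a.1 u') 
       * (dt a.1 v + t * dt a.1 w'),
     v j0 + t * w' j0, fun k => c k.1 + t * c' k.1) := by
  simp [FSing, dt_add, dt_smul, dt_zero]

theorem FSing_surj {c : Coeff A} {l v : Fin n → ℂ} (h1 : ∀ i, ∑ a : {a // a ∈ A i}, c ⟨i, a⟩ = 0)
    (h2 : ∀ i, ∑ a : {a // a ∈ A i}, c ⟨i, a⟩ * dt a.1 v = 0)
    (h3 : ∀ u, ∑ i, l i * ∑ a : {a // a ∈ A i}, c ⟨i, a⟩ * dt a.1 u = 0)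
    (h4 : ∀ v', (∀ i, ∑ a : {a // a ∈ A i}, c ⟨i, a⟩ * dt a.1 v' = 0) → ∃ s : ℂ, v' = s • v)
    (h5 : ∑ i, l i * ∑ a : {a // a ∈ A i}, c ⟨i, a⟩ * dt a.1 v ^ 2 ≠ 0)
    (k0 : CIdx A) (hk : l k0.1 ≠ 0) (j0 : Fin n) (hj : v j0 ≠ 0) :
    (fderiv ℂ (FSing A k0 j0) ((0 : Fin n → ℂ), c, v)).toLinearMap.range = ⊤ := by
  have hF : HasFDerivAt (FSing A k0 j0) (fderiv ℂ (FSing A k0 j0) (0, c, v)) (0, c, v) := 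
    ((FSing_contDiff k0 j0).differentiable (by norm_num) _).hasFDerivAt
  rw [LinearMap.range_eq_top]
  have hfr : finrank ℂ ((Fin n → ℂ) × Coeff A × (Fin n → ℂ)) = 
      finrank ℂ ((Fin n → ℂ) × (Fin n → ℂ) × ℂ × ({k : CIdx A // k ≠ k0} → ℂ)) := by
    have hpos : 0 < Fintype.card (CIdx A) := Fintype.card_pos_iff.mpr ⟨k0⟩
    have hc : Fintype.card {k : CIdx A // k ≠ k0} = Fintype.card (CIdx A) - 1 := 
      Set.card_ne_eq k0
    simp only [finrank_prod, finrank_fintype_fun_eq_card, hc, finrank_self, Fintype.card_fin]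
    omega
  refine (LinearMap.injective_iff_surjective_of_finrank_eq_finrank hfr).mp ?_
  rw [← LinearMap.ker_eq_bot, LinearMap.ker_eq_bot']
  rintro ⟨u', c', w'⟩ h0
  have hd := hF.hasLineDerivAt (u', c', w')
  rw [show (fderiv ℂ (FSing A k0 j0) (0, c, v)) (u', c', w') = 0 from h0] at hd
  unfold HasLineDerivAt at hd
  simp only [FSing_line] at hd
  have g1 := hasDerivAt_pi.mp hd.fst
  have g2 := hasDerivAt_pi.mp hd.snd.fst
  have g3 := hd.snd.snd.fst
  have g4 := hasDerivAt_pi.mp hd.snd.snd.snd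
  have f1 := fun i => (d1 i c c' u').unique (g1 i)
  have f2 := fun i => (d2 i c c' u' v w').unique (g2 i)
  have lin : ∀ α β : ℂ, HasDerivAt (fun t : ℂ => α + t * β) β 0 := by
    intro α β
    simpa using ((hasDerivAt_id (0:ℂ)).mul_const β).const_add α
  have f3 := (lin (v j0) (w' j0)).unique g3
  have f4 := fun k => (lin (c k.1) (c' k.1)).unique (g4 k)
  simp only [Prod.fst_zero, Prod.snd_zero, Pi.zero_apply] at f1 f2 f3 f4
  have hc1 : ∀ k, k ≠ k0 → c' k = 0 := fun k hk => f4 ⟨k, hk⟩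
  have hck : c' k0 = 0 := by
    have e1 : ∑ i, l i * ∑ a : {a // a ∈ A i}, c' ⟨i, a⟩ = 0 := by
      have := h3 u'
      have e2 : ∑ i, l i * ∑ a : {a // a ∈ A i}, (c' ⟨i, a⟩ + c ⟨i, a⟩ * dt a.1 u') = 0 := by
        simp only [f1, mul_zero, Finset.sum_const_zero]
      simp only [Finset.sum_add_distrib, mul_add] at e2
      rw [this, add_zero] at e2
      exact e2
    simp only [Finset.mul_sum] at e1
    rw [← Fintype.sum_sigma (fun k : CIdx A => l k.1 * c' k), 
      Finset.sum_eq_single k0 (fun k _ hk => by rw [hc1 k hk, mul_zero]) (by simp)] at e1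
    exact (mul_eq_zero.mp e1).resolve_left hk
  have hc' : ∀ k, c' k = 0 := by
    intro k
    by_cases h : k = k0
    · rw [h, hck]
    · exact hc1 k h
  simp only [hc', zero_add] at f1 f2
  obtain ⟨t, rfl⟩ := h4 u' f1
  have ht : t = 0 := by
    have e2 : ∑ i, l i * ∑ a : {a // a ∈ A i}, 
        (c ⟨i, a⟩ * dt a.1 (t • v) * dt a.1 v + c ⟨i, a⟩ * dt a.1 w') = 0 := by simp only [f2, mul_zero, Finset.sum_const_zero]
    simp only [Finset.sum_add_distrib, mul_add] at e2
    rw [h3 w', add_zero] at e2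
    have e3 : t * ∑ i, l i * ∑ a : {a // a ∈ A i}, c ⟨i, a⟩ * dt a.1 v ^ 2 = 0 := by
      rw [← e2]
      simp only [Finset.mul_sum, dt_smul]
      refine Finset.sum_congr rfl fun i _ => Finset.sum_congr rfl fun a _ => ?_
      ring
    exact (mul_eq_zero.mp e3).resolve_right h5
  subst ht
  simp only [zero_smul, dt_zero, mul_zero, zero_mul, zero_add] at f2
  obtain ⟨r, rfl⟩ := h4 w' f2
  have hr : r = 0 := by
    simp only [Pi.smul_apply, smul_eq_mul] at f3
    exact (mul_eq_zero.mp f3).resolve_right hj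
  subst hr
  simp only [zero_smul]
  ext <;> simp [hc']

end Lower
end PartQ4

section PartQ5
open Module
section Final
variable {n : ℕ} {A : Fin n → Finset (Fin n → ℤ)}

theorem mono_exp (a : Fin n → ℤ) (u : Fin n → ℂ) : 
    mono a (fun j => Units.mk0 (Complex.exp (u j)) (Complex.exp_ne_zero _)) = Complex.exp (dt a u) := by
  unfold mono dt
  rw [Complex.exp_sum]
  refine Finset.prod_congr rfl fun j _ => ?_
  rw [Units.val_mk0, ← Complex.exp_int_mul]

theorem sing_of_FSing {k0 : CIdx A} {j0 : Fin n} {u w : Fin n → ℂ} {c : Coeff A} {y : ℂ} (hy : y ≠ 0)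
    {d : {k : CIdx A // k ≠ k0} → ℂ} (h : FSing A k0 j0 (u, c, w) = (0, 0, y, d)) : 
    (∃ x, IsSingularRoot A c x) ∧ ∀ k : {k : CIdx A // k ≠ k0}, c k.1 = d k := by
  unfold FSing at h
  simp only [Prod.mk.injEq] at h
  obtain ⟨h1, h2, h3, h4⟩ := h
  refine ⟨⟨fun j => Units.mk0 (Complex.exp (u j)) (Complex.exp_ne_zero _), ?_, ?_⟩, 
    fun k => congrFun h4 k⟩
  · intro i
    rw [evalAt, ← Finset.univ_eq_attach]
    simp only [mono_exp]
    exact congrFun h1 i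
  · apply Matrix.exists_mulVec_eq_zero_iff.mp
    refine ⟨fun j => Complex.exp (u j) * w j, ?_, ?_⟩
    · intro h0
      have := congrFun h0 j0
      simp only [Pi.zero_apply, mul_eq_zero, Complex.exp_ne_zero, false_or] at this
      exact hy (by rw [← h3, this])
    · ext i
      have := congrFun h2 i
      simp only [Pi.zero_apply] at this ⊢
      rw [← this]
      simp only [Matrix.mulVec, dotProduct, jacobian, Matrix.of_apply, mono_exp, Units.val_mk0, dt,
        ← Finset.univ_eq_attach, Finset.mul_sum, Finset.sum_mul]
      rw [Finset.sum_comm]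
      refine Finset.sum_congr rfl fun a _ => Finset.sum_congr rfl fun j _ => ?_
      have := Complex.exp_ne_zero (u j)
      field_simp

theorem lower_inj (hr : IsReducedTuple A) (hi : IsIrreducibleTuple A) (hl : ¬ EssentiallyLinear A) :
    ∃ k0 : CIdx A, ∀ p : MvPolynomial {k // k ≠ k0} ℂ, 
      (∀ c : Coeff A, (∃ x, IsSingularRoot A c x) → 
        MvPolynomial.eval c (MvPolynomial.rename Subtype.val p) = 0) → p = 0 := by
  obtain ⟨c, l, v, h1, h2, h3, h4, h5⟩ := hess_data hr hi hl
  obtain ⟨i0, -, hi0⟩ := Finset.exists_ne_zero_of_sum_ne_zero h5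
  obtain ⟨a0, -, ha0⟩ := Finset.exists_ne_zero_of_sum_ne_zero (right_ne_zero_of_mul hi0)
  have hv : v ≠ 0 := by
    rintro rfl
    apply ha0
    simp [dt_zero]
  obtain ⟨j0, hj⟩ := Function.ne_iff.mp hv
  let k0 : CIdx A := ⟨i0, a0⟩
  refine ⟨k0, fun p hp => ?_⟩
  have hs := FSing_surj h1 h2 h3 h4 h5 k0 (left_ne_zero_of_mul hi0) j0 hj
  have hst : HasStrictFDerivAt (FSing A k0 j0) (fderiv ℂ (FSing A k0 j0) (0, c, v)) (0, c, v) := 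
    (FSing_contDiff k0 j0).contDiffAt.hasStrictFDerivAt (by norm_num)
  have hmap := hst.map_nhds_eq_of_surj hs
  have hF0 : FSing A k0 j0 (0, c, v) = (0, 0, v j0, fun k => c k.1) := by
    unfold FSing
    simp only [dt_zero, Complex.exp_zero, mul_one, h1, h2]
    rfl
  rw [hF0] at hmap
  have hrange : Set.range (FSing A k0 j0) ∈ nhds ((0 : Fin n → ℂ), (0 : Fin n → ℂ), v j0, 
      fun k : {k : CIdx A // k ≠ k0} => c k.1) := by
    rw [← hmap]
    exact Filter.range_mem_map
  let emb : ({k : CIdx A // k ≠ k0} → ℂ) → 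
    (Fin n → ℂ) × (Fin n → ℂ) × ℂ × ({k : CIdx A // k ≠ k0} → ℂ) := fun d => (0, 0, v j0, d)
  have hemb : Continuous emb := by fun_prop
  have hnb : emb ⁻¹' Set.range (FSing A k0 j0) ∈ nhds (fun k : {k : CIdx A // k ≠ k0} => c k.1) := 
    hemb.continuousAt.preimage_mem_nhds hrange
  obtain ⟨ε, hε, hball⟩ := Metric.mem_nhds_iff.mp hnb
  refine MvPolynomial.funext_set (fun k => Metric.ball (c k.1) ε) (fun k => ?_) (fun d hd => ?_)
  · exact infinite_of_mem_nhds (c k.1) (Metric.ball_mem_nhds _ hε)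
  · have hd' : d ∈ Metric.ball (fun k : {k : CIdx A // k ≠ k0} => c k.1) ε := by
      rw [ball_pi _ hε]
      exact hd
    obtain ⟨⟨u, c', w⟩, hq⟩ := hball hd'
    obtain ⟨hsing, hcd⟩ := sing_of_FSing hj hq
    have h := hp c' hsing
    rw [MvPolynomial.eval_rename] at h
    rw [map_zero, ← h]
    congr 2
    ext k
    exact (hcd k).symm

theorem mem_vanishingIdeal {ι : Type*} {Z : Set (ι → ℂ)} {p : MvPolynomial ι ℂ} : 
    p ∈ vanishingIdeal (zclosure Z) ↔ ∀ c ∈ Z, MvPolynomial.eval c p = 0 := by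
  constructor
  · intro h c hc
    exact h c (Set.mem_sInter.mpr fun W hW => hW.2 hc)
  · intro h c hc
    have := Set.mem_sInter.mp hc {c | MvPolynomial.eval c p = 0} ⟨⟨{p}, by simp⟩, h⟩
    exact this

theorem main_thm (hred : IsReducedTuple A) (hirr : IsIrreducibleTuple A)
    (hlin : ¬ EssentiallyLinear A) : DualEffective A := by
  obtain ⟨k0, hk⟩ := lower_inj hred hirr hlin
  obtain ⟨g, hg, hg0⟩ := exists_poly hred hirr
  refine le_antisymm ?_ ?_
  · exact dim_upper _ (Fintype.card_pos_iff.mpr ⟨k0⟩) g hg (mem_vanishingIdeal.mpr hg0)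
  · exact dim_lower k0 _ fun p hp => hk p (mem_vanishingIdeal.mp hp)

end Final
end PartQ5

/-- Theorem 1.20: a reduced irreducible tuple which is not linear up to a
monomial change of variables is dual effective, i.e. its discriminant `D_A` has complex
dimension `dim ℂ^A − 1`. -/
theorem dual_effective_of_not_essentially_linear {n : ℕ} (A : Fin n → Finset (Fin n → ℤ))
    (hred : IsReducedTuple A) (hirr : IsIrreducibleTuple A)
    (hlin : ¬ EssentiallyLinear A) :
    DualEffective A := by
  exact main_thm hred hirr hlin

end Esterov
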